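/- arXiv:math/0610769 — 7 statements merged into one kernel-verified Lean document; each statement's English description precedes it below -/
import Mathlib

section
/- Let α = (α_1,…,α_d) be a multi-index with α_i ∈ (0,2]∖{1} and δ = (δ_1,…,δ_d) with |δ_i| ≤ min(α_i, 2−α_i), and fix t > 0. Then the function ξ ↦ ψ_{α,ξ}(t) is Lebesgue integrable on ℝ^d, the Green function 𝐆_{α,δ}(t,x) := (2π)^{−d} ∫_{ℝ^d} exp(−i⟨ξ,x⟩) ψ_{α,ξ}(t) dξ is Lebesgue integrable in x on ℝ^d, and its Fourier transform recovers ψ: ∫_{ℝ^d} exp(i⟨ξ,x⟩) 𝐆_{α,δ}(t,x) dx = ψ_{α,ξ}(t) for every ξ ∈ ℝ^d. -/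
open MeasureTheory

/-- `ψ_{α,ξ}(t) = exp(−t ∑ i |ξ_i|^{α_i} exp(−i δ_i (π/2) sgn(ξ_i)))`. -/
noncomputable def psi {d : ℕ} (α δ : Fin d → ℝ) (ξ : Fin d → ℝ) (t : ℝ) : ℂ :=
  Complex.exp (-(t : ℂ) * ∑ i, ((|ξ i| ^ (α i) : ℝ) : ℂ) *
    Complex.exp (-(Complex.I * (δ i : ℝ) * ((Real.pi / 2 : ℝ) : ℂ) *
      ((Real.sign (ξ i) : ℝ) : ℂ))))

/-- The Green function `𝐆_{α,δ}(t,x) = (2π)^{-d} ∫ exp(−i⟨ξ,x⟩) ψ_{α,ξ}(t) dξ`. -/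
noncomputable def Gd {d : ℕ} (α δ : Fin d → ℝ) (t : ℝ) (x : Fin d → ℝ) : ℂ :=
  (((2 * Real.pi) ^ d : ℝ)⁻¹ : ℝ) • ∫ ξ : Fin d → ℝ,
    Complex.exp (-(Complex.I * ((∑ i, ξ i * x i : ℝ) : ℂ))) * psi α δ ξ t

open Set Filter Topology

lemma aux_int_half (f : ℝ → ℂ) (q C : ℝ) (hq : -1 < q) (hc : ContinuousOn f (Ioi 0))
    (h1 : ∀ x, 0 < x → ‖f x‖ ≤ C * x ^ q) (h2 : ∀ x, 0 < x → ‖f x‖ ≤ C * x ^ (-2 : ℝ)) :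
    IntegrableOn f (Ioi 0) := by
  rw [← Ioc_union_Ioi_eq_Ioi (zero_le_one (α := ℝ))]
  refine IntegrableOn.union ?_ ?_
  · have := ((intervalIntegrable_iff_integrableOn_Ioc_of_le zero_le_one).1
      (intervalIntegral.intervalIntegrable_rpow' (a := 0) (b := 1) hq)).const_mul C
    refine Integrable.mono' this
      ((hc.mono Ioc_subset_Ioi_self).aestronglyMeasurable measurableSet_Ioc) ?_
    filter_upwards [ae_restrict_mem measurableSet_Ioc] with x hx using h1 x hx.1
  · have := (integrableOn_Ioi_rpow_of_lt (a := -2) (by norm_num) (zero_lt_one (α := ℝ))).const_mul C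
    refine Integrable.mono' this
      ((hc.mono (Ioi_subset_Ioi zero_le_one)).aestronglyMeasurable measurableSet_Ioi) ?_
    filter_upwards [ae_restrict_mem measurableSet_Ioi] with x hx
    exact h2 x (lt_trans zero_lt_one hx)

lemma aux_norm_e (x ξ : ℝ) : ‖Complex.exp (-(Complex.I * x * ξ))‖ = 1 := by
  have : -(Complex.I * x * ξ) = ((-(x * ξ) : ℝ) : ℂ) * Complex.I := by push_cast; ring
  rw [this, Complex.norm_exp_ofReal_mul_I]

lemma aux_deriv_e (x ξ : ℝ) : HasDerivAt (fun ξ : ℝ => Complex.exp (-(Complex.I * x * ξ)))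
    (-(Complex.I * x) * Complex.exp (-(Complex.I * x * ξ))) ξ := by
  have h : HasDerivAt (fun ξ : ℝ => -(Complex.I * x * (ξ : ℂ))) (-(Complex.I * x * 1)) ξ :=
    ((Complex.ofRealCLM.hasDerivAt (x := ξ)).const_mul (Complex.I * x)).neg
  have := h.cexp
  convert this using 1
  ring

lemma aux_cont_e (x : ℝ) : Continuous (fun ξ : ℝ => Complex.exp (-(Complex.I * x * ξ))) := by
  fun_prop

lemma aux_tendsto (f : ℝ → ℂ) (C q : ℝ) (hq : q < 0) (h : ∀ x, 0 < x → ‖f x‖ ≤ C * x ^ q) :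
    Tendsto f atTop (𝓝 0) := by
  have h1 : Tendsto (fun x : ℝ => C * x ^ q) atTop (𝓝 (C * 0)) := by
    have := tendsto_rpow_neg_atTop (y := -q) (by linarith)
    rw [neg_neg] at this
    exact this.const_mul C
  rw [mul_zero] at h1
  refine squeeze_zero_norm' ?_ h1
  filter_upwards [eventually_gt_atTop 0] with x hx using h x hx

lemma aux_key (φ φ' φ'' : ℝ → ℂ) (β C : ℝ) (hβ : 0 < β) (hβ1 : β < 1)
    (h0 : φ 0 = 1) (hc : ContinuousWithinAt φ (Ici 0) 0)
    (hd1 : ∀ x, 0 < x → HasDerivAt φ (φ' x) x) (hd2 : ∀ x, 0 < x → HasDerivAt φ' (φ'' x) x)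
    (hc2 : ContinuousOn φ'' (Ioi 0))
    (b0 : ∀ x, 0 < x → ‖φ x‖ ≤ C * x ^ (0 : ℝ)) (b0' : ∀ x, 0 < x → ‖φ x‖ ≤ C * x ^ (-2 : ℝ))
    (b1 : ∀ x, 0 < x → ‖φ' x‖ ≤ C * x ^ (β - 1)) (b1' : ∀ x, 0 < x → ‖φ' x‖ ≤ C * x ^ (-2 : ℝ))
    (b2 : ∀ x, 0 < x → ‖φ'' x‖ ≤ C * x ^ (β - 2)) :
    ∃ C' : ℝ, ∀ x : ℝ, x ≠ 0 →
      ‖Complex.I * x * (∫ ξ in Ioi (0 : ℝ), Complex.exp (-(Complex.I * x * ξ)) * φ ξ) - 1‖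
        ≤ C' * |x| ^ (-β) := by
  have c1 : ContinuousOn φ (Ioi 0) := fun x hx => (hd1 x hx).continuousAt.continuousWithinAt
  have c2 : ContinuousOn φ' (Ioi 0) := fun x hx => (hd2 x hx).continuousAt.continuousWithinAt
  refine ⟨C / β + C + C / (1 - β), fun x hx => ?_⟩
  set e : ℝ → ℂ := fun ξ => Complex.exp (-(Complex.I * x * ξ)) with he
  have ne : ∀ ξ, ‖e ξ‖ = 1 := aux_norm_e x
  have ce : Continuous e := aux_cont_e x
  have de : ∀ ξ, HasDerivAt e (-(Complex.I * x) * e ξ) ξ := aux_deriv_e x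
  have i0 : IntegrableOn (fun ξ => e ξ * φ ξ) (Ioi 0) := by
    refine aux_int_half _ 0 C (by norm_num) (ce.continuousOn.mul c1) ?_ ?_
    · intro y hy; rw [norm_mul, ne, one_mul]; exact b0 y hy
    · intro y hy; rw [norm_mul, ne, one_mul]; exact b0' y hy
  have i1 : IntegrableOn (fun ξ => e ξ * φ' ξ) (Ioi 0) := by
    refine aux_int_half _ (β - 1) C (by linarith) (ce.continuousOn.mul c2) ?_ ?_
    · intro y hy; rw [norm_mul, ne, one_mul]; exact b1 y hy
    · intro y hy; rw [norm_mul, ne, one_mul]; exact b1' y hy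
  have hax : 0 < |x| := abs_pos.2 hx
  set r : ℝ := |x|⁻¹ with hr
  have hr0 : 0 < r := inv_pos.2 hax
  have ir := (integrableOn_Ioi_rpow_of_lt (a := β - 2) (by linarith) hr0).const_mul C
  have i2 : IntegrableOn (fun ξ => e ξ * φ'' ξ) (Ioi r) := by
    refine Integrable.mono' ir ((ce.continuousOn.mul (hc2.mono
      (Ioi_subset_Ioi hr0.le))).aestronglyMeasurable measurableSet_Ioi) ?_
    filter_upwards [ae_restrict_mem measurableSet_Ioi] with y hy
    rw [norm_mul, ne, one_mul]; exact b2 y (hr0.trans hy)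
  -- first integration by parts
  have s1 := integral_Ioi_of_hasDerivAt_of_tendsto (a := 0) (m := 0) (f := fun ξ => e ξ * φ ξ)
    (f' := fun ξ => -(Complex.I * x) * (e ξ * φ ξ) + e ξ * φ' ξ)
    (ce.continuousWithinAt.mul hc)
    (fun y hy => by
      have := (de y).mul (hd1 y hy)
      convert! this using 1
      ring)
    ((i0.const_mul _).add i1)
    (aux_tendsto _ C (-2) (by norm_num) (fun y hy => by
      rw [norm_mul, ne, one_mul]; exact b0' y hy))
  rw [integral_add (i0.const_mul _) i1, integral_const_mul] at s1
  have e0 : e 0 = 1 := by simp [he]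
  rw [e0, h0] at s1
  have s1' : Complex.I * x * (∫ ξ in Ioi (0 : ℝ), e ξ * φ ξ) - 1 =
      ∫ ξ in Ioi (0 : ℝ), e ξ * φ' ξ := by
    linear_combination -s1
  have s1r : IntegrableOn (fun ξ => e ξ * φ' ξ) (Ioi r) := i1.mono_set (Ioi_subset_Ioi hr0.le)
  have s2 := integral_Ioi_of_hasDerivAt_of_tendsto (a := r) (m := 0) (f := fun ξ => e ξ * φ' ξ)
    (f' := fun ξ => -(Complex.I * x) * (e ξ * φ' ξ) + e ξ * φ'' ξ)
    (ce.continuousWithinAt.mul (hd2 r hr0).continuousAt.continuousWithinAt)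
    (fun y hy => by
      have := (de y).mul (hd2 y (hr0.trans hy))
      convert! this using 1
      ring)
    ((s1r.const_mul _).add i2)
    (aux_tendsto _ C (-2) (by norm_num) (fun y hy => by
      rw [norm_mul, ne, one_mul]; exact b1' y hy))
  rw [integral_add (s1r.const_mul _) i2, integral_const_mul] at s2
  have s2' : Complex.I * x * (∫ ξ in Ioi r, e ξ * φ' ξ) =
      e r * φ' r + ∫ ξ in Ioi r, e ξ * φ'' ξ := by
    linear_combination -s2
  have n2 : ‖∫ ξ in Ioi r, e ξ * φ'' ξ‖ ≤ C * (r ^ (β - 1) / (1 - β)) := by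
    have := norm_integral_le_of_norm_le ir (f := fun ξ => e ξ * φ'' ξ) (by
      filter_upwards [ae_restrict_mem measurableSet_Ioi] with y hy
      rw [norm_mul, ne, one_mul]; exact b2 y (hr0.trans hy))
    rw [integral_const_mul, integral_Ioi_rpow_of_lt (by linarith) hr0] at this
    convert this using 2
    rw [show β - 2 + 1 = -(1 - β) by ring, neg_div_neg_eq]; ring_nf
  have n2' : ‖∫ ξ in Ioi r, e ξ * φ' ξ‖ ≤ (C + C / (1 - β)) * r ^ β := by
    have h := congrArg norm s2'
    rw [norm_mul, norm_mul, Complex.norm_I, one_mul, Complex.norm_real, Real.norm_eq_abs] at h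
    have h3 : |x| * ‖∫ ξ in Ioi r, e ξ * φ' ξ‖ ≤ C * r ^ (β - 1) + C * (r ^ (β - 1) / (1 - β)) := by
      rw [h]
      refine (norm_add_le _ _).trans (add_le_add ?_ n2)
      rw [norm_mul, ne, one_mul]; exact b1 r hr0
    have h4 : r ^ (β - 1) = r ^ β * |x| := by
      rw [Real.rpow_sub_one hr0.ne', hr]; simp
    rw [h4] at h3
    refine le_of_mul_le_mul_left (h3.trans (le_of_eq ?_)) hax
    ring
  have n1 : ‖∫ ξ in Ioc 0 r, e ξ * φ' ξ‖ ≤ C / β * r ^ β := by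
    have ii := ((intervalIntegrable_iff_integrableOn_Ioc_of_le hr0.le).1
      (intervalIntegral.intervalIntegrable_rpow' (a := 0) (b := r) (r := β - 1)
        (by linarith))).const_mul C
    have := norm_integral_le_of_norm_le ii (f := fun ξ => e ξ * φ' ξ) (by
      filter_upwards [ae_restrict_mem measurableSet_Ioc] with y hy
      rw [norm_mul, ne, one_mul]; exact b1 y hy.1)
    rw [integral_const_mul, ← intervalIntegral.integral_of_le (f := fun a : ℝ => a ^ (β - 1)) hr0.le,
      integral_rpow (Or.inl (by linarith)), sub_add_cancel, Real.zero_rpow hβ.ne', sub_zero] at this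
    refine this.trans (le_of_eq (by ring))
  have hxr : |x| ^ (-β) = r ^ β := by
    rw [Real.rpow_neg hax.le, hr, Real.inv_rpow hax.le]
  rw [s1', hxr, ← Ioc_union_Ioi_eq_Ioi hr0.le, setIntegral_union Ioc_disjoint_Ioi_same
    measurableSet_Ioi (i1.mono_set Ioc_subset_Ioi_self) s1r]
  refine (norm_add_le _ _).trans ((add_le_add n1 n2').trans (le_of_eq (by ring)))

lemma aux_sup (c p s : ℝ) (hc : 0 < c) (hp : 0 < p) (hs : 0 ≤ s) :
    ∃ C : ℝ, 0 ≤ C ∧ ∀ x : ℝ, 0 < x → x ^ s * Real.exp (-(c * x ^ p)) ≤ C := by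
  obtain ⟨n, hn⟩ := exists_nat_ge (s / p)
  refine ⟨1 + n.factorial / c ^ n, by positivity, fun x hx => ?_⟩
  have hy : 0 < x ^ p := Real.rpow_pos_of_pos hx p
  have e1 : x ^ s = (x ^ p) ^ (s / p) := by
    rw [← Real.rpow_mul hx.le]; congr 1; field_simp
  rw [e1]
  set y := x ^ p
  have h1 : y ^ (s / p) ≤ 1 + y ^ n := by
    rcases le_total y 1 with h | h
    · have := Real.rpow_le_one hy.le h (z := s / p) (by positivity)
      have : 0 ≤ y ^ n := by positivity
      linarith
    · have := Real.rpow_le_rpow_of_exponent_le h hn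
      rw [Real.rpow_natCast] at this
      linarith
  have h2 := Real.pow_div_factorial_le_exp (c * y) (by positivity) n
  rw [mul_pow, div_le_iff₀ (by positivity)] at h2
  rw [Real.exp_neg, ← div_eq_mul_inv, div_le_iff₀ (Real.exp_pos _)]
  have h3 : y ^ n ≤ n.factorial / c ^ n * Real.exp (c * y) := by
    rw [div_mul_eq_mul_div, le_div_iff₀ (by positivity)]
    linarith
  have h4 : 1 ≤ Real.exp (c * y) := Real.one_le_exp (by positivity)
  nlinarith

lemma aux_sup' (c p r q : ℝ) (hc : 0 < c) (hp : 0 < p) (hs : q ≤ r) :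
    ∃ C : ℝ, 0 ≤ C ∧ ∀ x : ℝ, 0 < x → x ^ r * Real.exp (-(c * x ^ p)) ≤ C * x ^ q := by
  obtain ⟨C, hC, h⟩ := aux_sup c p (r - q) hc hp (by linarith)
  refine ⟨C, hC, fun x hx => ?_⟩
  have h1 := h x hx
  have h2 : 0 < x ^ q := Real.rpow_pos_of_pos hx q
  calc x ^ r * Real.exp (-(c * x ^ p)) = (x ^ (r - q) * Real.exp (-(c * x ^ p))) * x ^ q := by
        rw [Real.rpow_sub hx]; field_simp
    _ ≤ C * x ^ q := by gcongr

noncomputable def auxPhi (a : ℂ) (p x : ℝ) : ℂ := Complex.exp (-(a * ((x ^ p : ℝ) : ℂ)))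

lemma aux_norm_phi (a : ℂ) (p x : ℝ) : ‖auxPhi a p x‖ = Real.exp (-(a.re * x ^ p)) := by
  rw [auxPhi, Complex.norm_exp, Complex.neg_re, Complex.re_mul_ofReal]

lemma aux_phi_deriv (a : ℂ) (p x : ℝ) (hx : 0 < x) :
    HasDerivAt (auxPhi a p) (-(a * p) * ((x ^ (p - 1) : ℝ) : ℂ) * auxPhi a p x) x := by
  have h : HasDerivAt (fun x : ℝ => -(a * ((x ^ p : ℝ) : ℂ))) (-(a * ((p * x ^ (p - 1) : ℝ) : ℂ))) x :=
    (((Real.hasDerivAt_rpow_const (p := p) (Or.inl hx.ne')).ofReal_comp).const_mul a).neg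
  have := h.cexp
  convert! this using 1
  rw [auxPhi]; push_cast; ring

lemma aux_phi_cont (a : ℂ) (p : ℝ) (hp : 0 < p) : Continuous (auxPhi a p) := by
  have : Continuous (fun x : ℝ => x ^ p) := Real.continuous_rpow_const hp.le
  unfold auxPhi
  fun_prop

lemma aux_phi_int (a : ℂ) (p : ℝ) (hp : 0 < p) (ha : 0 < a.re) :
    IntegrableOn (auxPhi a p) (Ioi 0) := by
  obtain ⟨C1, p1, h1⟩ := aux_sup' a.re p 0 0 ha hp le_rfl
  obtain ⟨C2, p2, h2⟩ := aux_sup' a.re p 0 (-2) ha hp (by norm_num)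
  refine aux_int_half _ 0 (C1 + C2) (by norm_num) (aux_phi_cont a p hp).continuousOn ?_ ?_
  · intro x hx
    have := h1 x hx
    rw [aux_norm_phi]
    simp only [Real.rpow_zero, one_mul, mul_one] at this ⊢
    linarith
  · intro x hx
    have := h2 x hx
    rw [aux_norm_phi]
    have : 0 < x ^ (-2 : ℝ) := Real.rpow_pos_of_pos hx _
    simp only [Real.rpow_zero, one_mul] at *
    nlinarith

lemma aux_phi_key (a : ℂ) (p : ℝ) (hp : 0 < p) (ha : 0 < a.re) (β : ℝ) (hβ : 0 < β)
    (hβ1 : β < 1) (hβp : β ≤ p) :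
    ∃ C' : ℝ, ∀ x : ℝ, x ≠ 0 →
      ‖Complex.I * x * (∫ ξ in Ioi (0 : ℝ), Complex.exp (-(Complex.I * x * ξ)) * auxPhi a p ξ) - 1‖
        ≤ C' * |x| ^ (-β) := by
  obtain ⟨C1, p1, h1⟩ := aux_sup' a.re p 0 0 ha hp le_rfl
  obtain ⟨C2, p2, h2⟩ := aux_sup' a.re p 0 (-2) ha hp (by norm_num)
  obtain ⟨C3, p3, h3⟩ := aux_sup' a.re p (p - 1) (β - 1) ha hp (by linarith)
  obtain ⟨C4, p4, h4⟩ := aux_sup' a.re p (p - 1) (-2) ha hp (by linarith)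
  obtain ⟨C5, p5, h5⟩ := aux_sup' a.re p (p - 2) (β - 2) ha hp (by linarith)
  obtain ⟨C6, p6, h6⟩ := aux_sup' a.re p (2 * p - 2) (β - 2) ha hp (by linarith)
  set A := ‖a * p‖ with hA
  have A0 : 0 ≤ A := norm_nonneg _
  have P0 : 0 ≤ |p - 1| := abs_nonneg _
  set D3 := A * C3
  set D4 := A * C4
  set D5 := A * |p - 1| * C5 + A * A * C6
  have q3 : 0 ≤ D3 := by positivity
  have q4 : 0 ≤ D4 := by positivity
  have q5 : 0 ≤ D5 := by positivity
  have comb : ∀ (D u v q x : ℝ), 0 < x → u ≤ v * x ^ q → v ≤ D → u ≤ D * x ^ q := by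
    intro D u v q x hx h1 h2
    have : 0 < x ^ q := Real.rpow_pos_of_pos hx _
    nlinarith
  refine aux_key (auxPhi a p) (fun x => -(a * p) * ((x ^ (p - 1) : ℝ) : ℂ) * auxPhi a p x)
    (fun x => -(a * p) * (((p - 1) * x ^ (p - 2) : ℝ) : ℂ) * auxPhi a p x +
      (a * p) ^ 2 * ((x ^ (2 * p - 2) : ℝ) : ℂ) * auxPhi a p x)
    β (C1 + C2 + D3 + D4 + D5) hβ hβ1 ?_ (aux_phi_cont a p hp).continuousWithinAt
    (fun x hx => aux_phi_deriv a p x hx) ?_ ?_ ?_ ?_ ?_ ?_ ?_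
  · simp [auxPhi, Real.zero_rpow hp.ne']
  · intro x hx
    have h : HasDerivAt (fun x : ℝ => ((x ^ (p - 1) : ℝ) : ℂ))
        ((((p - 1) * x ^ (p - 1 - 1) : ℝ) : ℂ)) x :=
      (Real.hasDerivAt_rpow_const (p := p - 1) (Or.inl hx.ne')).ofReal_comp
    have := (h.const_mul (-(a * p))).mul (aux_phi_deriv a p x hx)
    convert! this using 1
    have e1 : x ^ (2 * p - 2) = x ^ (p - 1) * x ^ (p - 1) := by
      rw [← Real.rpow_add hx]; ring_nf
    rw [e1, show p - 1 - 1 = p - 2 by ring]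
    push_cast
    ring
  · have k1 : ContinuousOn (fun x : ℝ => x ^ (p - 2)) (Ioi 0) := fun x hx =>
      (Real.continuousAt_rpow_const _ _ (Or.inl (ne_of_gt hx))).continuousWithinAt
    have k2 : ContinuousOn (fun x : ℝ => x ^ (2 * p - 2)) (Ioi 0) := fun x hx =>
      (Real.continuousAt_rpow_const _ _ (Or.inl (ne_of_gt hx))).continuousWithinAt
    have k3 := (aux_phi_cont a p hp).continuousOn (s := Ioi 0)
    fun_prop
  · intro x hx
    refine comb _ _ C1 _ x hx ?_ (by linarith)
    have := h1 x hx
    rw [aux_norm_phi]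
    simpa using this
  · intro x hx
    refine comb _ _ C2 _ x hx ?_ (by linarith)
    have := h2 x hx
    rw [aux_norm_phi]
    rwa [Real.rpow_zero, one_mul] at this
  · intro x hx
    refine comb _ _ D3 _ x hx ?_ (by linarith)
    rw [norm_mul, norm_mul, norm_neg, aux_norm_phi, Complex.norm_real, Real.norm_eq_abs,
      abs_of_pos (Real.rpow_pos_of_pos hx _), ← hA, mul_assoc, mul_assoc]
    exact mul_le_mul_of_nonneg_left (h3 x hx) A0
  · intro x hx
    refine comb _ _ D4 _ x hx ?_ (by linarith)
    rw [norm_mul, norm_mul, norm_neg, aux_norm_phi, Complex.norm_real, Real.norm_eq_abs,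
      abs_of_pos (Real.rpow_pos_of_pos hx _), ← hA, mul_assoc, mul_assoc]
    exact mul_le_mul_of_nonneg_left (h4 x hx) A0
  · intro x hx
    refine comb _ _ D5 _ x hx ?_ (by linarith)
    refine (norm_add_le _ _).trans ?_
    have g1 : ‖-(a * p) * (((p - 1) * x ^ (p - 2) : ℝ) : ℂ) * auxPhi a p x‖ =
        A * (|p - 1| * x ^ (p - 2)) * Real.exp (-(a.re * x ^ p)) := by
      rw [norm_mul, norm_mul, norm_neg, aux_norm_phi, Complex.norm_real, Real.norm_eq_abs, abs_mul,
        abs_of_pos (Real.rpow_pos_of_pos hx _)]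
    have g2 : ‖(a * p) ^ 2 * ((x ^ (2 * p - 2) : ℝ) : ℂ) * auxPhi a p x‖ =
        A ^ 2 * x ^ (2 * p - 2) * Real.exp (-(a.re * x ^ p)) := by
      rw [norm_mul, norm_mul, norm_pow, aux_norm_phi, Complex.norm_real, Real.norm_eq_abs,
        abs_of_pos (Real.rpow_pos_of_pos hx _)]
    rw [g1, g2]
    have t5 := mul_le_mul_of_nonneg_left (h5 x hx) (mul_nonneg A0 P0)
    have t6 := mul_le_mul_of_nonneg_left (h6 x hx) (mul_nonneg A0 A0)
    simp only [D5]
    nlinarith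

noncomputable def auxPsi (p δ t ξ : ℝ) : ℂ :=
  Complex.exp (-(t : ℂ) * (((|ξ| ^ p : ℝ) : ℂ) *
    Complex.exp (-(Complex.I * (δ : ℝ) * ((Real.pi / 2 : ℝ) : ℂ) *
      ((Real.sign ξ : ℝ) : ℂ)))))

noncomputable def auxA (δ t : ℝ) : ℂ :=
  (t : ℂ) * Complex.exp (-(Complex.I * (δ : ℝ) * ((Real.pi / 2 : ℝ) : ℂ)))

lemma aux_A_re (δ t : ℝ) (hδ : |δ| < 1) (ht : 0 < t) : 0 < (auxA δ t).re := by
  have : -(Complex.I * (δ : ℝ) * ((Real.pi / 2 : ℝ) : ℂ))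
      = ((-(δ * (Real.pi / 2)) : ℝ) : ℂ) * Complex.I := by push_cast; ring
  rw [auxA, this, Complex.re_ofReal_mul, Complex.exp_ofReal_mul_I_re]
  have hpi := Real.pi_pos
  rw [abs_lt] at hδ
  refine mul_pos ht (Real.cos_pos_of_mem_Ioo ⟨?_, ?_⟩) <;> nlinarith

lemma aux_psi_pos (p δ t ξ : ℝ) (hξ : 0 < ξ) : auxPsi p δ t ξ = auxPhi (auxA δ t) p ξ := by
  rw [auxPsi, auxPhi, auxA, Real.sign_of_pos hξ, abs_of_pos hξ, Complex.ofReal_one, mul_one]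
  congr 1; ring

lemma aux_psi_neg (p δ t ξ : ℝ) : auxPsi p δ t (-ξ) = auxPsi p (-δ) t ξ := by
  rw [auxPsi, auxPsi, Real.sign_neg, abs_neg]
  push_cast
  ring_nf

lemma aux_psi_cont (p δ t : ℝ) (hp : 0 < p) : Continuous (auxPsi p δ t) := by
  have hp' : Continuous (fun x : ℝ => x ^ p) := Real.continuous_rpow_const hp.le
  have key : Continuous (fun ξ : ℝ => ((|ξ| ^ p : ℝ) : ℂ) *
      Complex.exp (-(Complex.I * (δ : ℝ) * ((Real.pi / 2 : ℝ) : ℂ) *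
      ((Real.sign ξ : ℝ) : ℂ)))) := by
    rw [continuous_iff_continuousAt]
    intro x
    have hc : ∀ s : ℝ, Continuous (fun ξ : ℝ => ((|ξ| ^ p : ℝ) : ℂ) *
      Complex.exp (-(Complex.I * (δ : ℝ) * ((Real.pi / 2 : ℝ) : ℂ) * (s : ℂ)))) := by
      intro s
      have : Continuous (fun x : ℝ => |x| ^ p) := hp'.comp continuous_abs
      fun_prop
    rcases lt_trichotomy x 0 with h | h | h
    · refine ((hc (-1)).continuousAt (x := x)).congr ?_
      filter_upwards [Iio_mem_nhds h] with y hy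
      rw [Real.sign_of_neg hy]
    · subst h
      rw [ContinuousAt, abs_zero, Real.zero_rpow hp.ne', Complex.ofReal_zero, zero_mul]
      have h0 : Tendsto (fun ξ : ℝ => |ξ| ^ p) (𝓝 0) (𝓝 0) := by
        have := (hp'.comp continuous_abs).tendsto (0 : ℝ)
        simpa [Function.comp_def, Real.zero_rpow hp.ne'] using this
      refine squeeze_zero_norm (fun y => ?_) h0
      have : -(Complex.I * (δ : ℝ) * ((Real.pi / 2 : ℝ) : ℂ) * ((Real.sign y : ℝ) : ℂ))
        = ((-(δ * (Real.pi / 2) * Real.sign y) : ℝ) : ℂ) * Complex.I := by push_cast; ring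
      rw [norm_mul, this, Complex.norm_exp_ofReal_mul_I, mul_one, Complex.norm_real,
        Real.norm_eq_abs, abs_of_nonneg (by positivity)]
    · refine ((hc 1).continuousAt (x := x)).congr ?_
      filter_upwards [Ioi_mem_nhds h] with y hy
      rw [Real.sign_of_pos hy]
  unfold auxPsi
  fun_prop

lemma aux_psi_int_half (p δ t : ℝ) (hp : 0 < p) (hδ : |δ| < 1) (ht : 0 < t) :
    IntegrableOn (auxPsi p δ t) (Ioi 0) :=
  (aux_phi_int (auxA δ t) p hp (aux_A_re δ t hδ ht)).congr_fun
    (fun x hx => (aux_psi_pos p δ t x hx).symm) measurableSet_Ioi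

lemma aux_psi_int (p δ t : ℝ) (hp : 0 < p) (hδ : |δ| < 1) (ht : 0 < t) :
    Integrable (auxPsi p δ t) := by
  rw [← integrableOn_univ, ← Iic_union_Ioi (a := (0 : ℝ))]
  refine IntegrableOn.union ?_ (aux_psi_int_half p δ t hp hδ ht)
  rw [integrableOn_Iic_iff_integrableOn_Iio]
  have h := aux_psi_int_half p (-δ) t hp (by rwa [abs_neg]) ht
  have := IntegrableOn.comp_neg_Iio (c := (0 : ℝ)) (f := auxPsi p (-δ) t) (by rwa [neg_zero])
  refine this.congr_fun (fun x _ => ?_) measurableSet_Iio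
  simp only [aux_psi_neg, neg_neg]

/-- one-dimensional transform -/
noncomputable def auxG (p δ t x : ℝ) : ℂ :=
  ∫ ξ : ℝ, Complex.exp (-(Complex.I * x * ξ)) * auxPsi p δ t ξ

lemma aux_e_int (p δ t : ℝ) (hp : 0 < p) (hδ : |δ| < 1) (ht : 0 < t) (x : ℝ) :
    Integrable (fun ξ : ℝ => Complex.exp (-(Complex.I * x * ξ)) * auxPsi p δ t ξ) := by
  refine (aux_psi_int p δ t hp hδ ht).bdd_mul (c := 1)
    (aux_cont_e x).aestronglyMeasurable (ae_of_all _ fun ξ => (aux_norm_e x ξ).le)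

lemma aux_G_split (p δ t : ℝ) (hp : 0 < p) (hδ : |δ| < 1) (ht : 0 < t) (x : ℝ) :
    auxG p δ t x =
      (∫ ξ in Ioi (0 : ℝ), Complex.exp (-(Complex.I * x * ξ)) * auxPhi (auxA δ t) p ξ) +
      ∫ ξ in Ioi (0 : ℝ), Complex.exp (-(Complex.I * (-x : ℝ) * ξ)) * auxPhi (auxA (-δ) t) p ξ := by
  have hi := aux_e_int p δ t hp hδ ht x
  rw [auxG, ← integral_add_compl (measurableSet_Ioi (a := (0 : ℝ))) hi, compl_Ioi]
  congr 1
  · exact setIntegral_congr_fun measurableSet_Ioi fun ξ hξ => by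
      simp only [aux_psi_pos p δ t ξ hξ]
  · have := integral_comp_neg_Ioi 0
      (fun ξ : ℝ => Complex.exp (-(Complex.I * x * ξ)) * auxPsi p δ t ξ)
    rw [neg_zero] at this
    rw [← this]
    exact setIntegral_congr_fun measurableSet_Ioi fun ξ hξ => by
      simp only [aux_psi_neg, aux_psi_pos p (-δ) t ξ hξ]
      push_cast
      ring_nf

lemma aux_G_cont (p δ t : ℝ) (hp : 0 < p) (hδ : |δ| < 1) (ht : 0 < t) :
    Continuous (auxG p δ t) := by
  unfold auxG
  refine continuous_of_dominated (bound := fun ξ => ‖auxPsi p δ t ξ‖) ?_ ?_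
    (aux_psi_int p δ t hp hδ ht).norm ?_
  · intro x; exact (aux_e_int p δ t hp hδ ht x).aestronglyMeasurable
  · intro x
    refine ae_of_all _ fun ξ => ?_
    rw [norm_mul, aux_norm_e, one_mul]
  · refine ae_of_all _ fun ξ => ?_
    fun_prop

lemma aux_G_int (p δ t : ℝ) (hp : 0 < p) (hδ : |δ| < 1) (ht : 0 < t) :
    Integrable (auxG p δ t) := by
  set β := min p (1 / 2)
  have hβ : 0 < β := lt_min hp (by norm_num)
  have hβ1 : β < 1 := lt_of_le_of_lt (min_le_right _ _) (by norm_num)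
  have hβp : β ≤ p := min_le_left _ _
  have hδ' : |-δ| < 1 := by rwa [abs_neg]
  obtain ⟨C1, h1⟩ := aux_phi_key (auxA δ t) p hp (aux_A_re δ t hδ ht) β hβ hβ1 hβp
  obtain ⟨C2, h2⟩ := aux_phi_key (auxA (-δ) t) p hp (aux_A_re (-δ) t hδ' ht) β hβ hβ1 hβp
  have hdec : ∀ x : ℝ, x ≠ 0 → |x| * ‖auxG p δ t x‖ ≤ (C1 + C2) * |x| ^ (-β) := by
    intro x hx
    have e1 := h1 x hx
    have e2 := h2 (-x) (neg_ne_zero.2 hx)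
    rw [abs_neg] at e2
    have : |x| * ‖auxG p δ t x‖ = ‖Complex.I * x * auxG p δ t x‖ := by
      rw [norm_mul, norm_mul, Complex.norm_I, one_mul, Complex.norm_real, Real.norm_eq_abs]
    rw [this, aux_G_split p δ t hp hδ ht, add_mul]
    refine le_trans (le_of_eq (congrArg norm ?_)) ((norm_sub_le _ _).trans (add_le_add e1 e2))
    push_cast
    ring
  have hb : ∀ x : ℝ, ‖auxG p δ t x‖ ≤ ∫ ξ, ‖auxPsi p δ t ξ‖ := by
    intro x
    refine norm_integral_le_of_norm_le (aux_psi_int p δ t hp hδ ht).norm (ae_of_all _ fun ξ => ?_)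
    rw [norm_mul, aux_norm_e, one_mul]
  set M := ∫ ξ, ‖auxPsi p δ t ξ‖
  set r := 1 + β
  have hint := (integrable_one_add_norm (E := ℝ) (μ := volume) (r := r) (by simp [r, hβ])).const_mul
    ((M + |C1 + C2|) * 2 ^ r)
  refine Integrable.mono' hint (aux_G_cont p δ t hp hδ ht).aestronglyMeasurable
    (ae_of_all _ fun x => ?_)
  have M0 : 0 ≤ M := (norm_nonneg _).trans (hb 0)
  have hpos : 0 < 1 + |x| := by positivity
  rw [Real.norm_eq_abs, Real.rpow_neg hpos.le, ← div_eq_mul_inv, le_div_iff₀ (by positivity)]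
  rcases le_total |x| 1 with h | h
  · have : (1 + |x|) ^ r ≤ 2 ^ r := Real.rpow_le_rpow hpos.le (by linarith) (by positivity)
    have h3 : ‖auxG p δ t x‖ ≤ M + |C1 + C2| := (hb x).trans (by linarith [abs_nonneg (C1 + C2)])
    gcongr
  · have hx0 : 0 < |x| := by linarith
    have hle : (1 + |x|) ^ r ≤ (2 * |x|) ^ r :=
      Real.rpow_le_rpow hpos.le (by linarith) (by positivity)
    rw [Real.mul_rpow (by norm_num) hx0.le] at hle
    have h3 := hdec x (abs_pos.1 hx0)
    have h4 : ‖auxG p δ t x‖ * |x| ^ r ≤ M + |C1 + C2| := by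
      have : |x| ^ r = |x| * |x| ^ β := by rw [Real.rpow_add hx0, Real.rpow_one]
      rw [this]
      have h5 : 0 < |x| ^ β := by positivity
      have h6 := mul_le_mul_of_nonneg_right h3 h5.le
      rw [mul_assoc (C1 + C2), ← Real.rpow_add hx0, neg_add_cancel, Real.rpow_zero, mul_one] at h6
      have := le_abs_self (C1 + C2)
      nlinarith
    calc ‖auxG p δ t x‖ * (1 + |x|) ^ r ≤ ‖auxG p δ t x‖ * (2 ^ r * |x| ^ r) := by gcongr
      _ = (‖auxG p δ t x‖ * |x| ^ r) * 2 ^ r := by ring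
      _ ≤ _ := by gcongr

open FourierTransform in
lemma aux_fourier (p δ t : ℝ) (w : ℝ) :
    𝓕 (auxPsi p δ t) w = auxG p δ t (w * (2 * Real.pi)) := by
  rw [Real.fourier_real_eq_integral_exp_smul, auxG]
  congr 1 with ξ
  rw [smul_eq_mul]
  congr 2
  push_cast
  ring

open FourierTransform in
lemma aux_inv (p δ t : ℝ) (hp : 0 < p) (hδ : |δ| < 1) (ht : 0 < t) (ξ : ℝ) :
    ∫ x : ℝ, Complex.exp (Complex.I * ξ * x) * (((2 * Real.pi)⁻¹ : ℝ) * auxG p δ t x)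
      = auxPsi p δ t ξ := by
  have hpi : 0 < 2 * Real.pi := by positivity
  have hF : 𝓕 (auxPsi p δ t) = fun w => auxG p δ t (w * (2 * Real.pi)) :=
    funext (aux_fourier p δ t)
  have hFi : Integrable (𝓕 (auxPsi p δ t)) := by
    rw [hF]
    exact (aux_G_int p δ t hp hδ ht).comp_mul_right' hpi.ne'
  have h := congrFun ((aux_psi_cont p δ t hp).fourierInv_fourier_eq
    (aux_psi_int p δ t hp hδ ht) hFi) ξ
  rw [Real.fourierInv_eq', hF] at h
  rw [← h]
  have := Measure.integral_comp_div (fun v : ℝ => Complex.exp (((2 * Real.pi * inner ℝ v ξ : ℝ) : ℂ)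
    * Complex.I) • auxG p δ t (v * (2 * Real.pi))) (2 * Real.pi)
  rw [abs_of_pos hpi] at this
  have h2 : (∫ v : ℝ, Complex.exp (((2 * Real.pi * inner ℝ v ξ : ℝ) : ℂ)
    * Complex.I) • auxG p δ t (v * (2 * Real.pi))) = ((2 * Real.pi)⁻¹ : ℝ) • 
     ∫ x : ℝ, Complex.exp (((2 * Real.pi * inner ℝ (x / (2 * Real.pi)) ξ : ℝ) : ℂ)
    * Complex.I) • auxG p δ t (x / (2 * Real.pi) * (2 * Real.pi)) := by
    rw [this, smul_smul, inv_mul_cancel₀ hpi.ne', one_smul]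
  rw [h2, ← integral_smul]
  congr 1 with x
  have e1 : 2 * Real.pi * inner ℝ (x / (2 * Real.pi)) ξ = ξ * x := by
    have : inner ℝ (x / (2 * Real.pi)) ξ = ξ * (x / (2 * Real.pi)) := by simp
    rw [this]
    field_simp
  rw [e1, div_mul_cancel₀ _ hpi.ne', smul_eq_mul, Complex.real_smul]
  rw [show Complex.I * ξ * x = ((ξ * x : ℝ) : ℂ) * Complex.I by push_cast; ring]
  ring

lemma aux_psi_prod {d : ℕ} (α δ ξ : Fin d → ℝ) (t : ℝ) :
    psi α δ ξ t = ∏ i, auxPsi (α i) (δ i) t (ξ i) := by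
  simp only [psi, auxPsi, ← Complex.exp_sum, Finset.mul_sum]

lemma aux_Gd_prod {d : ℕ} (α δ : Fin d → ℝ) (t : ℝ) (x : Fin d → ℝ) :
    Gd α δ t x = ∏ i, ((((2 * Real.pi)⁻¹ : ℝ) : ℂ) * auxG (α i) (δ i) t (x i)) := by
  rw [Finset.prod_mul_distrib, Finset.prod_const, Finset.card_univ, Fintype.card_fin, Gd,
    Complex.real_smul]
  simp only [auxG]
  rw [← integral_fintype_prod_volume_eq_prod
    (fun i (ξ : ℝ) => Complex.exp (-(Complex.I * (x i) * ξ)) * auxPsi (α i) (δ i) t ξ)]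
  congr 1
  · push_cast
    rw [inv_pow]
  · congr 1 with ξ
    rw [aux_psi_prod, Finset.prod_mul_distrib, ← Complex.exp_sum]
    congr 2
    push_cast
    rw [Finset.mul_sum, ← Finset.sum_neg_distrib]
    refine Finset.sum_congr rfl fun i _ => by ring

theorem stmt4 {d : ℕ} (hd : 0 < d) (α δ : Fin d → ℝ)
    (hα : ∀ i, 0 < α i ∧ α i ≤ 2 ∧ α i ≠ 1)
    (hδ : ∀ i, |δ i| ≤ min (α i) (2 - α i))
    (t : ℝ) (ht : 0 < t) :
    Integrable (fun ξ : Fin d → ℝ => psi α δ ξ t) ∧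
    Integrable (fun x : Fin d → ℝ => Gd α δ t x) ∧
    ∀ ξ : Fin d → ℝ,
      (∫ x : Fin d → ℝ,
        Complex.exp (Complex.I * ((∑ i, ξ i * x i : ℝ) : ℂ)) * Gd α δ t x) =
      psi α δ ξ t := by
  have hδ1 : ∀ i, |δ i| < 1 := by
    intro i
    have h1 := (hδ i).trans (min_le_left _ _)
    have h2 := (hδ i).trans (min_le_right _ _)
    rcases lt_or_gt_of_ne (hα i).2.2 with h | h <;> linarith
  refine ⟨?_, ?_, ?_⟩
  · simp only [aux_psi_prod]
    exact Integrable.fintype_prod (f := fun i ξ => auxPsi (α i) (δ i) t ξ)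
      fun i => aux_psi_int _ _ t (hα i).1 (hδ1 i) ht
  · simp only [aux_Gd_prod]
    exact Integrable.fintype_prod
      (f := fun i x => (((2 * Real.pi)⁻¹ : ℝ) : ℂ) * auxG (α i) (δ i) t x)
      fun i => (aux_G_int _ _ t (hα i).1 (hδ1 i) ht).const_mul _
  · intro ξ
    rw [aux_psi_prod]
    rw [Finset.prod_congr rfl fun i _ => (aux_inv _ _ t (hα i).1 (hδ1 i) ht (ξ i)).symm]
    rw [← integral_fintype_prod_volume_eq_prod
      (fun i (x : ℝ) => Complex.exp (Complex.I * (ξ i) * x) *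
        ((((2 * Real.pi)⁻¹ : ℝ) : ℂ) * auxG (α i) (δ i) t x))]
    congr 1 with x
    rw [aux_Gd_prod, Finset.prod_mul_distrib (f := fun i => Complex.exp (Complex.I * (ξ i) * (x i))),
      ← Complex.exp_sum]
    congr 2
    push_cast
    rw [Finset.mul_sum]
    refine Finset.sum_congr rfl fun i _ => by ring
end

section
/- Let α ∈ (0,2]∖{1} and δ ∈ ℝ with |δ| ≤ min(α, 2−α), and let t > 0. Then G_{α,δ}(t,x) is real and nonnegative for every x ∈ ℝ, and ∫_ℝ G_{α,δ}(t,x) dx = 1; that is, G_{α,δ}(t,·) is the probability density of a Lévy α-stable law. -/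
open MeasureTheory
open scoped ComplexOrder

/-- The one-dimensional Green function
`G_{α,δ}(t,x) = (1/2π) ∫ exp(−izx − t|z|^α exp(−iδ(π/2) sgn z)) dz`. -/
noncomputable def G1 (a δ : ℝ) (t x : ℝ) : ℂ :=
  ((1 / (2 * Real.pi) : ℝ)) • ∫ z : ℝ,
    Complex.exp (-(Complex.I * (z : ℂ) * (x : ℂ)) -
      ((t * |z| ^ a : ℝ) : ℂ) *
        Complex.exp (-(Complex.I * (δ : ℂ) * ((Real.pi / 2 : ℝ) : ℂ) *
          ((Real.sign z : ℝ) : ℂ))))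


open Filter Topology

/-- the Gaussian weight with a character -/
noncomputable def gw (x ε z : ℝ) : ℂ :=
  Complex.exp (-(Complex.I * z * x)) * Complex.exp (-(ε : ℂ) * (z : ℂ) ^ 2)

def PP (g : ℝ → ℂ) : Prop := ∀ x ε : ℝ, 0 < ε → 0 ≤ ∫ z : ℝ, g z * gw x ε z

/-- multiplier class of functions -/
structure MM (φ : ℝ → ℂ) : Prop where
  meas : Measurable φ
  bdd : ∀ z, ‖φ z‖ ≤ (φ 0).re
  mul : ∀ g : ℝ → ℂ, Measurable g → (∃ C : ℝ, ∀ z, ‖g z‖ ≤ C) → PP g → PP (fun z => φ z * g z)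

lemma gw_norm (x ε z : ℝ) : ‖gw x ε z‖ = Real.exp (-ε * z ^ 2) := by
  rw [gw, norm_mul, Complex.norm_exp, Complex.norm_exp]
  have h1 : (-(Complex.I * z * x)).re = 0 := by simp
  have h2 : (-(ε : ℂ) * (z : ℂ) ^ 2).re = -ε * z ^ 2 := by
    rw [show (-(ε : ℂ) * (z : ℂ) ^ 2) = ((-ε * z ^ 2 : ℝ) : ℂ) by push_cast; ring]
    exact Complex.ofReal_re _
  rw [h1, h2]; simp

lemma gw_cont (x ε : ℝ) : Continuous (gw x ε) := by
  unfold gw; fun_prop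

lemma gw_int (x ε : ℝ) (hε : 0 < ε) : Integrable (gw x ε) := by
  refine (integrable_exp_neg_mul_sq hε).mono' (gw_cont x ε).aestronglyMeasurable ?_
  exact ae_of_all _ fun z => (gw_norm x ε z).le

lemma mul_gw_int {g : ℝ → ℂ} (hg : Measurable g) (hb : ∃ C : ℝ, ∀ z, ‖g z‖ ≤ C) (x ε : ℝ)
    (hε : 0 < ε) : Integrable (fun z => g z * gw x ε z) := by
  obtain ⟨C, hC⟩ := hb
  exact (gw_int x ε hε).bdd_mul hg.aestronglyMeasurable (ae_of_all _ hC)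

lemma gauss_nonneg (x ε : ℝ) (hε : 0 < ε) : 0 ≤ ∫ z : ℝ, gw x ε z := by
  have h := fourierIntegral_gaussian (b := (ε : ℂ)) (by simpa using hε) (-(x : ℂ))
  have : ∀ z : ℝ, gw x ε z
      = Complex.exp (Complex.I * (-(x : ℂ)) * z) * Complex.exp (-(ε : ℂ) * (z : ℂ) ^ 2) := by
    intro z; unfold gw; congr 2; ring
  simp_rw [this]
  rw [h]
  have e1 : ((Real.pi : ℂ) / (ε : ℂ)) ^ (1 / 2 : ℂ) = (((Real.pi / ε) ^ (1 / 2 : ℝ) : ℝ) : ℂ) := by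
    rw [Complex.ofReal_cpow (by positivity)]; push_cast; rfl
  have e2 : Complex.exp (-(-(x : ℂ)) ^ 2 / (4 * (ε : ℂ)))
      = ((Real.exp (-(-x) ^ 2 / (4 * ε)) : ℝ) : ℂ) := by push_cast; rfl
  rw [e1, e2, ← Complex.ofReal_mul]
  exact_mod_cast (by positivity)

lemma PP_one : PP (fun _ => 1) := by
  intro x ε hε; simpa using gauss_nonneg x ε hε

lemma MM.toPP {φ : ℝ → ℂ} (h : MM φ) : PP φ := by
  have := h.mul (fun _ => 1) measurable_const ⟨1, by simp⟩ PP_one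
  simpa using this

lemma MM.bdd_mul {φ g : ℝ → ℂ} (h : MM φ) (hb : ∃ C : ℝ, ∀ z, ‖g z‖ ≤ C) :
    ∃ C : ℝ, ∀ z, ‖φ z * g z‖ ≤ C := by
  obtain ⟨C, hC⟩ := hb
  refine ⟨(φ 0).re * C, fun z => ?_⟩
  rw [norm_mul]
  exact mul_le_mul (h.bdd z) (hC z) (norm_nonneg _) ((norm_nonneg _).trans (h.bdd 0))

lemma MM.im0 {φ : ℝ → ℂ} (h : MM φ) : (φ 0).im = 0 := by
  have h1 := h.bdd 0
  have h2 : ‖φ 0‖ ^ 2 = (φ 0).re ^ 2 + (φ 0).im ^ 2 := by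
    rw [Complex.sq_norm, Complex.normSq_apply]; ring
  have h3 := norm_nonneg (φ 0)
  have : (φ 0).im ^ 2 ≤ 0 := by nlinarith
  nlinarith [sq_nonneg (φ 0).im, pow_eq_zero_iff (n := 2) (a := (φ 0).im) (by norm_num)|>.1 (le_antisymm this (sq_nonneg _))]

lemma MM.hmul {φ ψ : ℝ → ℂ} (h : MM φ) (k : MM ψ) : MM (fun z => φ z * ψ z) where
  meas := h.meas.mul k.meas
  bdd z := by
    rw [norm_mul, Complex.mul_re, h.im0, zero_mul, sub_zero]
    exact mul_le_mul (h.bdd z) (k.bdd z) (norm_nonneg _) ((norm_nonneg _).trans (h.bdd 0))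
  mul g hg hb hp := by
    have := h.mul _ (k.meas.mul hg) (k.bdd_mul hb) (k.mul g hg hb hp)
    simpa [mul_assoc] using this

lemma MM.hadd {φ ψ : ℝ → ℂ} (h : MM φ) (k : MM ψ) : MM (fun z => φ z + ψ z) where
  meas := h.meas.add k.meas
  bdd z := by
    rw [Complex.add_re]
    exact (norm_add_le _ _).trans (add_le_add (h.bdd z) (k.bdd z))
  mul g hg hb hp := by
    intro x ε hε
    have e : ∀ z, (φ z + ψ z) * g z * gw x ε z = φ z * g z * gw x ε z + ψ z * g z * gw x ε z := by
      intro z; ring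
    simp_rw [e]
    have i1 : Integrable (fun z => φ z * g z * gw x ε z) :=
      mul_gw_int (h.meas.mul hg) (h.bdd_mul hb) x ε hε
    have i2 : Integrable (fun z => ψ z * g z * gw x ε z) :=
      mul_gw_int (k.meas.mul hg) (k.bdd_mul hb) x ε hε
    rw [integral_add i1 i2]
    exact add_nonneg (h.mul g hg hb hp x ε hε) (k.mul g hg hb hp x ε hε)

lemma MM.const {r : ℝ} (hr : 0 ≤ r) : MM (fun _ => (r : ℂ)) where
  meas := measurable_const
  bdd z := by simp [abs_of_nonneg hr]
  mul g hg hb hp := by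
    intro x ε hε
    simp_rw [mul_assoc]
    rw [integral_const_mul]
    exact mul_nonneg (by exact_mod_cast hr) (hp x ε hε)

lemma MM.char (b : ℝ) : MM (fun z => Complex.exp (Complex.I * b * z)) where
  meas := by fun_prop
  bdd z := by simp [Complex.norm_exp]
  mul g hg hb hp := by
    intro x ε hε
    have := hp (x - b) ε hε
    convert this using 3 with z
    have : Complex.exp (Complex.I * b * z) * Complex.exp (-(Complex.I * z * x))
        = Complex.exp (-(Complex.I * z * ((x - b : ℝ) : ℂ))) := by
      rw [← Complex.exp_add]; congr 1; push_cast; ring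
    rw [gw, gw, ← this]; ring

lemma MM.lim {φ : ℕ → ℝ → ℂ} {ψ : ℝ → ℂ} (h : ∀ n, MM (φ n))
    (hl : ∀ z, Tendsto (fun n => φ n z) atTop (𝓝 (ψ z))) : MM ψ where
  meas := measurable_of_tendsto_metrizable (fun n => (h n).meas) (tendsto_pi_nhds.2 hl)
  bdd z := le_of_tendsto_of_tendsto' (hl z).norm
    ((Complex.continuous_re.tendsto _).comp (hl 0)) (fun n => (h n).bdd z)
  mul g hg hb hp := by
    intro x ε hε
    have h0 : Tendsto (fun n => (φ n 0).re) atTop (𝓝 (ψ 0).re) :=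
      (Complex.continuous_re.tendsto _).comp (hl 0)
    obtain ⟨B, hB⟩ := h0.bddAbove_range
    have hB' : ∀ n, (φ n 0).re ≤ B := fun n => hB ⟨n, rfl⟩
    have lim : Tendsto (fun n => ∫ z, φ n z * g z * gw x ε z) atTop
        (𝓝 (∫ z, ψ z * g z * gw x ε z)) := by
      refine tendsto_integral_of_dominated_convergence (fun z => B * ‖g z * gw x ε z‖) ?_ ?_ ?_ ?_
      · intro n
        exact (((h n).meas.mul hg).mul (gw_cont x ε).measurable).aestronglyMeasurable
      · exact (mul_gw_int hg hb x ε hε).norm.const_mul B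
      · intro n
        refine ae_of_all _ fun z => ?_
        rw [mul_assoc, norm_mul]
        exact mul_le_mul_of_nonneg_right (((h n).bdd z).trans (hB' n)) (norm_nonneg _)
      · exact ae_of_all _ fun z => ((hl z).mul_const _).mul_const _
    exact ge_of_tendsto' lim fun n => (h n).mul g hg hb hp x ε hε

lemma MM.pow {φ : ℝ → ℂ} (h : MM φ) (n : ℕ) : MM (fun z => φ z ^ n) := by
  induction n with
  | zero => simpa using MM.const (r := 1) (by norm_num)
  | succ n ih => simpa [pow_succ] using ih.hmul h

lemma MM.sum {φ : ℕ → ℝ → ℂ} (h : ∀ n, MM (φ n)) (n : ℕ) :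
    MM (fun z => ∑ i ∈ Finset.range n, φ i z) := by
  induction n with
  | zero => simpa using MM.const (r := 0) (by norm_num)
  | succ n ih => simpa [Finset.sum_range_succ] using ih.hadd (h n)

lemma MM.hasSum {φ : ℕ → ℝ → ℂ} {ψ : ℝ → ℂ} (h : ∀ n, MM (φ n))
    (hl : ∀ z, HasSum (fun n => φ n z) (ψ z)) : MM ψ :=
  MM.lim (fun n => MM.sum h n) fun z => (hl z).tendsto_sum_nat

lemma MM.exp {φ : ℝ → ℂ} (h : MM φ) : MM (fun z => Complex.exp (φ z)) := by
  refine MM.hasSum (φ := fun n z => ((1 / n.factorial : ℝ) : ℂ) * φ z ^ n)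
    (fun n => (MM.const (by positivity)).hmul (h.pow n)) fun z => ?_
  have := NormedSpace.expSeries_div_hasSum_exp (𝔸 := ℂ) (φ z)
  rw [← Complex.exp_eq_exp_ℂ] at this
  have e : ∀ n : ℕ, ((1 / n.factorial : ℝ) : ℂ) * φ z ^ n = φ z ^ n / n.factorial := by
    intro n; push_cast; ring
  simpa only [e] using this

/-- coefficients of `(1 - w)^a` -/
noncomputable def bc (a : ℝ) (k : ℕ) : ℝ := (-1) ^ k * Ring.choose a k

lemma bc_zero (a : ℝ) : bc a 0 = 1 := by simp [bc]
lemma bc_one (a : ℝ) : bc a 1 = -a := by simp [bc]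

lemma bc_succ (a : ℝ) (k : ℕ) : bc a (k + 1) = bc a k * ((k - a) / (k + 1)) := by
  unfold bc
  rw [Ring.choose_eq_smul, Ring.choose_eq_smul, descPochhammer_succ_right, Polynomial.smeval_mul,
    Polynomial.smeval_sub, Polynomial.smeval_X, ← Polynomial.C_eq_natCast, Polynomial.smeval_C,
    Nat.factorial_succ]
  simp only [smul_eq_mul, pow_one, pow_zero]
  have h1 : (k.factorial : ℝ) ≠ 0 := by positivity
  have h2 : (k + 1 : ℝ) ≠ 0 := by positivity
  push_cast
  simp only [zsmul_eq_mul, mul_one, Int.cast_natCast]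
  field_simp
  ring

lemma bc_hasSum (a : ℝ) (w : ℂ) (hw : ‖w‖ < 1) :
    HasSum (fun k => (bc a k : ℂ) * w ^ k) ((1 - w) ^ (a : ℂ)) := by
  have h := (Complex.one_add_cpow_hasFPowerSeriesOnBall_zero (a := (a : ℂ))).hasSum (y := -w)
    (by simpa [Metric.mem_eball, edist_zero_right, ← ofReal_norm] using hw)
  rw [zero_add, ← sub_eq_add_neg] at h
  simp only [binomialSeries_apply, List.ofFn_const, List.prod_replicate, smul_eq_mul] at h
  have e : ∀ k : ℕ, (bc a k : ℂ) * w ^ k = Ring.choose (a : ℂ) k * (-w) ^ k := by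
    intro k
    rw [bc, neg_pow w k]; push_cast; ring
  simpa only [e] using h

lemma real_mul_cpow (r : ℝ) (hr : 0 < r) (x : ℂ) (a : ℝ) (ha : a ≠ 0) :
    ((r : ℂ) * x) ^ (a : ℂ) = ((r ^ a : ℝ) : ℂ) * x ^ (a : ℂ) := by
  by_cases hx : x = 0
  · subst hx
    have : (a : ℂ) ≠ 0 := by exact_mod_cast ha
    simp [Complex.zero_cpow this]
  · have hr' : (r : ℂ) ≠ 0 := by exact_mod_cast hr.ne'
    rw [Complex.cpow_def_of_ne_zero (mul_ne_zero hr' hx), Complex.cpow_def_of_ne_zero hx,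
      Complex.log_ofReal_mul hr hx, Complex.ofReal_cpow hr.le, Complex.cpow_def_of_ne_zero hr',
      ← Complex.exp_add, ← Complex.ofReal_log hr.le]
    congr 1; ring

noncomputable def ww (s h z : ℝ) : ℂ := Complex.exp (-(h : ℂ) ^ 2 + Complex.I * s * h * z)

lemma ww_norm (s h z : ℝ) (hh : 0 < h) : ‖ww s h z‖ < 1 := by
  rw [ww, Complex.norm_exp]
  have : (-(h : ℂ) ^ 2 + Complex.I * s * h * z).re = -h ^ 2 := by
    rw [show (-(h : ℂ) ^ 2 + Complex.I * s * h * z)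
      = ((-h ^ 2 : ℝ) : ℂ) + ((s * h * z : ℝ) : ℂ) * Complex.I by push_cast; ring]
    rw [Complex.add_re, Complex.ofReal_re, Complex.re_ofReal_mul]; simp
  rw [this, Real.exp_lt_one_iff]
  have := pow_pos hh 2
  linarith

lemma ww_MM (s h : ℝ) : MM (ww s h) := by
  have := (MM.const (Real.exp_pos (-h ^ 2)).le).hmul (MM.char (s * h))
  convert this using 2 with z
  rw [ww, Complex.exp_add]; push_cast; congr 2; ring

lemma ww_inv_MM (s h : ℝ) : MM (fun z => (ww s h z)⁻¹) := by
  have := (MM.const (Real.exp_pos (h ^ 2)).le).hmul (MM.char (-(s * h)))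
  convert this using 2 with z
  rw [ww, ← Complex.exp_neg, neg_add, Complex.exp_add]; push_cast; congr 2 <;> ring

lemma ww_lim (s z : ℝ) :
    Tendsto (fun n : ℕ => (((n + 1 : ℕ) : ℝ) : ℂ) * (1 - ww s (1 / ((n + 1 : ℕ) : ℝ)) z)) atTop
      (𝓝 (-(Complex.I * s * z))) := by
  have hd : HasDerivAt (fun h : ℝ => ww s h z) (Complex.I * s * z) 0 := by
    unfold ww
    have h1 : HasDerivAt (fun h : ℝ => (h : ℂ)) 1 0 := Complex.ofRealCLM.hasDerivAt
    have h2 := ((h1.pow 2).neg.add (((h1.const_mul (Complex.I * s)).mul_const (z : ℂ)))).cexp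
    refine h2.congr_deriv ?_
    simp [Pi.add_apply, Pi.neg_apply, Pi.pow_apply]
  have hs := hd.tendsto_slope_zero
  have hn : Tendsto (fun n : ℕ => 1 / ((n + 1 : ℕ) : ℝ)) atTop (𝓝[≠] 0) := by
    refine tendsto_nhdsWithin_iff.2 ⟨?_, Eventually.of_forall fun n => ?_⟩
    · exact_mod_cast tendsto_one_div_add_atTop_nhds_zero_nat (𝕜 := ℝ)
    · simp only [Set.mem_compl_iff, Set.mem_singleton_iff]; positivity
  have := (hs.comp hn).neg
  refine this.congr fun n => ?_
  have h0 : ww s 0 z = 1 := by simp [ww]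
  simp only [Function.comp, zero_add, h0, one_div, inv_inv]
  rw [Complex.real_smul]; ring

lemma ww_lim_one (s z : ℝ) :
    Tendsto (fun n : ℕ => (ww s (1 / ((n + 1 : ℕ) : ℝ)) z)⁻¹) atTop (𝓝 1) := by
  have hc : ContinuousAt (fun h : ℝ => (ww s h z)⁻¹) 0 := by
    apply ContinuousAt.inv₀
    · unfold ww; fun_prop
    · exact Complex.exp_ne_zero _
  have hn : Tendsto (fun n : ℕ => 1 / ((n + 1 : ℕ) : ℝ)) atTop (𝓝 0) := by
    exact_mod_cast tendsto_one_div_add_atTop_nhds_zero_nat (𝕜 := ℝ)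
  have := hc.tendsto.comp hn
  have h0 : (ww s 0 z)⁻¹ = 1 := by simp [ww]
  rw [h0] at this
  exact this

lemma ww_lim_cpow (s z a : ℝ) (ha : 0 < a) :
    Tendsto (fun n : ℕ => ((((n + 1 : ℕ) : ℝ) ^ a : ℝ) : ℂ)
      * (1 - ww s (1 / ((n + 1 : ℕ) : ℝ)) z) ^ (a : ℂ)) atTop
      (𝓝 ((-(Complex.I * s * z)) ^ (a : ℂ))) := by
  have hc := Complex.continuousAt_cpow_const_of_re_pos (z := -(Complex.I * s * z)) (w := (a : ℂ))
    (Or.inl (by simp)) (by simpa using ha)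
  refine (hc.tendsto.comp (ww_lim s z)).congr fun n => ?_
  exact real_mul_cpow _ (by positivity) _ _ ha.ne'

lemma bc_nonpos (a : ℝ) (h0 : 0 < a) (h1 : a < 1) (k : ℕ) : bc a (k + 1) ≤ 0 := by
  induction k with
  | zero => rw [zero_add, bc_one]; linarith
  | succ k ih =>
    rw [bc_succ]
    refine mul_nonpos_of_nonpos_of_nonneg ih (div_nonneg ?_ (by positivity))
    push_cast
    have : (0 : ℝ) ≤ k := by positivity
    linarith

lemma bc_nonneg (a : ℝ) (h0 : 1 < a) (h1 : a ≤ 2) (k : ℕ) : 0 ≤ bc a (k + 2) := by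
  induction k with
  | zero =>
    rw [zero_add, bc_succ, bc_one]; push_cast
    have : 0 ≤ a * (a - 1) := by nlinarith
    linarith
  | succ k ih =>
    rw [bc_succ]
    refine mul_nonneg ih (div_nonneg ?_ (by positivity))
    push_cast
    have : (0 : ℝ) ≤ k := by positivity
    linarith

lemma frac_low (a : ℝ) (h0 : 0 < a) (h1 : a < 1) (s c : ℝ) (hc : 0 ≤ c) :
    MM (fun z => Complex.exp (-(c * (-(Complex.I * s * z)) ^ (a : ℂ)))) := by
  have key : ∀ h : ℝ, 0 < h → MM (fun z => 1 - (1 - ww s h z) ^ (a : ℂ)) := by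
    intro h hh
    refine MM.hasSum (φ := fun k z => ((-bc a (k + 1) : ℝ) : ℂ) * ww s h z ^ (k + 1))
      (fun k => (MM.const (neg_nonneg.2 (bc_nonpos a h0 h1 k))).hmul ((ww_MM s h).pow _)) ?_
    intro z
    have := bc_hasSum a (ww s h z) (ww_norm s h z hh)
    rw [← hasSum_nat_add_iff' 1] at this
    have := this.neg
    simp only [Finset.range_one, Finset.sum_singleton, bc_zero, pow_zero, Complex.ofReal_one,
      mul_one, neg_sub] at this
    simpa using this
  refine MM.lim (φ := fun n z =>
      ((Real.exp (-(c * ((n + 1 : ℕ) : ℝ) ^ a)) : ℝ) : ℂ)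
      * Complex.exp (((c * ((n + 1 : ℕ) : ℝ) ^ a : ℝ) : ℂ)
      * (1 - (1 - ww s (1 / ((n + 1 : ℕ) : ℝ)) z) ^ (a : ℂ)))) (fun n => ?_) fun z => ?_
  · exact (MM.const (Real.exp_pos _).le).hmul
      ((MM.const (by positivity)).hmul (key _ (by positivity))).exp
  · have := ((ww_lim_cpow s z a h0).const_mul (c : ℂ)).neg.cexp
    refine this.congr fun n => ?_
    rw [Complex.ofReal_exp, ← Complex.exp_add]
    congr 1
    push_cast; ring

lemma frac_high (a : ℝ) (h0 : 1 < a) (h1 : a ≤ 2) (s c : ℝ) (hc : 0 ≤ c) :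
    MM (fun z => Complex.exp (c * (-(Complex.I * s * z)) ^ (a : ℂ))) := by
  have key : ∀ h : ℝ, 0 < h →
      MM (fun z => a + (ww s h z)⁻¹ * (1 - ww s h z) ^ (a : ℂ)) := by
    intro h hh
    have k2 : MM (fun z => ((ww s h z)⁻¹ * ((1 - ww s h z) ^ (a : ℂ) - 1 + a * ww s h z))) := by
      refine MM.hasSum (φ := fun k z => (ww s h z)⁻¹ * (((bc a (k + 2) : ℝ) : ℂ) * ww s h z ^ (k + 2)))
        (fun k => (ww_inv_MM s h).hmul
          ((MM.const (bc_nonneg a h0 h1 k)).hmul ((ww_MM s h).pow _))) ?_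
      intro z
      have := bc_hasSum a (ww s h z) (ww_norm s h z hh)
      rw [← hasSum_nat_add_iff' 2] at this
      have := this.mul_left (ww s h z)⁻¹
      simp only [Finset.sum_range_succ, Finset.range_zero, Finset.sum_empty, bc_zero, bc_one,
        pow_zero, pow_one, zero_add, Complex.ofReal_one, mul_one] at this
      have e : (1 - ww s h z) ^ (a : ℂ) - 1 + a * ww s h z
          = (1 - ww s h z) ^ (a : ℂ) - (1 + ((-a : ℝ) : ℂ) * ww s h z) := by
        push_cast; ring
      rw [e]
      exact this
    have k3 := k2.hadd (ww_inv_MM s h)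
    convert k3 using 2 with z
    have : ww s h z ≠ 0 := Complex.exp_ne_zero _
    field_simp
    ring
  refine MM.lim (φ := fun n z =>
      ((Real.exp (-(c * ((n + 1 : ℕ) : ℝ) ^ a * a)) : ℝ) : ℂ)
      * Complex.exp (((c * ((n + 1 : ℕ) : ℝ) ^ a : ℝ) : ℂ)
      * (a + (ww s (1 / ((n + 1 : ℕ) : ℝ)) z)⁻¹
        * (1 - ww s (1 / ((n + 1 : ℕ) : ℝ)) z) ^ (a : ℂ)))) (fun n => ?_) fun z => ?_
  · exact (MM.const (Real.exp_pos _).le).hmul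
      ((MM.const (by positivity)).hmul (key _ (by positivity))).exp
  · have := (((ww_lim_one s z).mul (ww_lim_cpow s z a (by linarith))).const_mul (c : ℂ)).cexp
    rw [one_mul] at this
    refine this.congr fun n => ?_
    rw [Complex.ofReal_exp, ← Complex.exp_add]
    congr 1
    push_cast; ring

lemma cpow_formula (a : ℝ) (ha : a ≠ 0) (y : ℝ) :
    (-(Complex.I * y)) ^ (a : ℂ) = ((|y| ^ a : ℝ) : ℂ)
      * Complex.exp (-(Complex.I * ((Real.pi * a / 2 : ℝ) : ℂ) * ((Real.sign y : ℝ) : ℂ))) := by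
  rcases lt_trichotomy y 0 with hy | hy | hy
  · have e : -(Complex.I * y) = ((-y : ℝ) : ℂ) * Complex.I := by push_cast; ring
    rw [e, real_mul_cpow _ (by linarith) _ _ ha, abs_of_neg hy,
      Complex.cpow_def_of_ne_zero Complex.I_ne_zero, Complex.log_I, Real.sign_of_neg hy]
    congr 2; push_cast; ring
  · subst hy
    have : (a : ℂ) ≠ 0 := by exact_mod_cast ha
    simp [Complex.zero_cpow this, Real.zero_rpow ha]
  · have e : -(Complex.I * y) = ((y : ℝ) : ℂ) * (-Complex.I) := by ring
    rw [e, real_mul_cpow _ hy _ _ ha, abs_of_pos hy,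
      Complex.cpow_def_of_ne_zero (neg_ne_zero.2 Complex.I_ne_zero), Complex.log_neg_I,
      Real.sign_of_pos hy]
    congr 2; push_cast; ring

lemma coef_exists (a δ t : ℝ) (h0 : 1 < a) (h1 : a ≤ 2) (hδ : |δ| ≤ 2 - a) (ht : 0 < t) :
    ∃ c d : ℝ, 0 ≤ c ∧ 0 ≤ d ∧
      (c + d) * Real.cos (Real.pi * a / 2) = -t * Real.cos (δ * (Real.pi / 2)) ∧
      (c - d) * Real.sin (Real.pi * a / 2) = -t * Real.sin (δ * (Real.pi / 2)) := by
  obtain ⟨hl, hr⟩ := abs_le.1 hδ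
  have hpi := Real.pi_pos
  rcases h1.eq_or_lt with rfl | h2
  · have : δ = 0 := by linarith
    subst this
    refine ⟨t, 0, ht.le, le_rfl, ?_, ?_⟩ <;> simp
  · have hs : 0 < Real.sin (Real.pi * a / 2) := Real.sin_pos_of_pos_of_lt_pi (by positivity)
      (by nlinarith)
    have hc : Real.cos (Real.pi * a / 2) < 0 := Real.cos_neg_of_pi_div_two_lt_of_lt
      (by nlinarith) (by nlinarith)
    have p1 : 0 ≤ Real.sin (Real.pi * a / 2 + δ * (Real.pi / 2)) :=
      Real.sin_nonneg_of_nonneg_of_le_pi (by nlinarith) (by nlinarith)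
    have p2 : 0 ≤ Real.sin (Real.pi * a / 2 - δ * (Real.pi / 2)) :=
      Real.sin_nonneg_of_nonneg_of_le_pi (by nlinarith) (by nlinarith)
    rw [Real.sin_add] at p1
    rw [Real.sin_sub] at p2
    set S := Real.sin (Real.pi * a / 2)
    set C := Real.cos (Real.pi * a / 2)
    have hSC : 0 < S * (-C) := mul_pos hs (by linarith)
    refine ⟨t * (S * Real.cos (δ * (Real.pi / 2)) + C * Real.sin (δ * (Real.pi / 2))) / (2 * (S * (-C))),
      t * (S * Real.cos (δ * (Real.pi / 2)) - C * Real.sin (δ * (Real.pi / 2))) / (2 * (S * (-C))),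
      by positivity, by positivity, ?_, ?_⟩
    · have := hs.ne'; have := hc.ne; field_simp; ring
    · have := hs.ne'; have := hc.ne; field_simp; ring

lemma coef_exists' (a δ t : ℝ) (h0 : 0 < a) (h1 : a < 1) (hδ : |δ| ≤ a) (ht : 0 < t) :
    ∃ c d : ℝ, 0 ≤ c ∧ 0 ≤ d ∧
      (c + d) * Real.cos (Real.pi * a / 2) = t * Real.cos (δ * (Real.pi / 2)) ∧
      (c - d) * Real.sin (Real.pi * a / 2) = t * Real.sin (δ * (Real.pi / 2)) := by
  obtain ⟨hl, hr⟩ := abs_le.1 hδ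
  have hpi := Real.pi_pos
  have hs : 0 < Real.sin (Real.pi * a / 2) := Real.sin_pos_of_pos_of_lt_pi (by positivity)
    (by nlinarith)
  have hc : 0 < Real.cos (Real.pi * a / 2) := Real.cos_pos_of_mem_Ioo
    ⟨by nlinarith, by nlinarith⟩
  have p1 : 0 ≤ Real.sin (Real.pi * a / 2 + δ * (Real.pi / 2)) :=
    Real.sin_nonneg_of_nonneg_of_le_pi (by nlinarith) (by nlinarith)
  have p2 : 0 ≤ Real.sin (Real.pi * a / 2 - δ * (Real.pi / 2)) :=
    Real.sin_nonneg_of_nonneg_of_le_pi (by nlinarith) (by nlinarith)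
  rw [Real.sin_add] at p1
  rw [Real.sin_sub] at p2
  set S := Real.sin (Real.pi * a / 2)
  set C := Real.cos (Real.pi * a / 2)
  refine ⟨t * (S * Real.cos (δ * (Real.pi / 2)) + C * Real.sin (δ * (Real.pi / 2))) / (2 * (S * C)),
    t * (S * Real.cos (δ * (Real.pi / 2)) - C * Real.sin (δ * (Real.pi / 2))) / (2 * (S * C)),
    by positivity, by positivity, ?_, ?_⟩
  · have := hs.ne'; have := hc.ne; field_simp; ring
  · have := hs.ne'; have := hc.ne; field_simp; ring

lemma exp_IR (x : ℝ) : Complex.exp (-(Complex.I * x)) = (Real.cos x : ℂ) - Complex.I * (Real.sin x : ℂ) := by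
  rw [show -(Complex.I * (x : ℂ)) = ((-x : ℝ) : ℂ) * Complex.I by push_cast; ring,
    Complex.exp_mul_I, ← Complex.ofReal_cos, ← Complex.ofReal_sin, Real.cos_neg, Real.sin_neg]
  push_cast; ring

lemma combine (a η c d κ : ℝ) (ha : a ≠ 0)
    (e1 : (c + d) * Real.cos (Real.pi * a / 2) = κ * Real.cos η)
    (e2 : (c - d) * Real.sin (Real.pi * a / 2) = κ * Real.sin η) (z : ℝ) :
    c * (-(Complex.I * ((1 : ℝ) : ℂ) * z)) ^ (a : ℂ)
      + d * (-(Complex.I * ((-1 : ℝ) : ℂ) * z)) ^ (a : ℂ)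
      = ((κ * |z| ^ a : ℝ) : ℂ)
        * Complex.exp (-(Complex.I * η * ((Real.sign z : ℝ) : ℂ))) := by
  have f1 := cpow_formula a ha z
  have f2 := cpow_formula a ha (-z)
  have g1 : -(Complex.I * ((1 : ℝ) : ℂ) * z) = -(Complex.I * z) := by push_cast; ring
  have g2 : -(Complex.I * ((-1 : ℝ) : ℂ) * z) = -(Complex.I * ((-z : ℝ) : ℂ)) := by
    push_cast; ring
  rw [g1, g2, f1, f2, abs_neg, Real.sign_neg]
  have e1' : ((c : ℂ) + d) * (Real.cos (Real.pi * a / 2) : ℂ) = κ * (Real.cos η : ℂ) := by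
    exact_mod_cast e1
  have e2' : ((c : ℂ) - d) * (Real.sin (Real.pi * a / 2) : ℂ) = κ * (Real.sin η : ℂ) := by
    exact_mod_cast e2
  generalize Real.pi * a / 2 = θ at *
  rcases lt_trichotomy z 0 with hz | hz | hz
  · rw [Real.sign_of_neg hz]
    have h1 : -(Complex.I * (θ : ℂ) * ((-1 : ℝ) : ℂ)) = -(Complex.I * ((-θ : ℝ) : ℂ)) := by
      push_cast; ring
    have h2 : -(Complex.I * (θ : ℂ) * ((-(-1) : ℝ) : ℂ)) = -(Complex.I * ((θ : ℝ) : ℂ)) := by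
      push_cast; ring
    have h3 : -(Complex.I * (η : ℂ) * ((-1 : ℝ) : ℂ)) = -(Complex.I * ((-η : ℝ) : ℂ)) := by
      push_cast; ring
    rw [h1, h2, h3, exp_IR, exp_IR, exp_IR, Real.cos_neg, Real.sin_neg, Real.cos_neg, Real.sin_neg]
    push_cast at e1' e2' ⊢
    linear_combination (((|z| ^ a : ℝ) : ℂ)) * e1' + Complex.I * (((|z| ^ a : ℝ) : ℂ)) * e2'
  · subst hz
    simp [Real.zero_rpow ha]
  · rw [Real.sign_of_pos hz]
    have h1 : -(Complex.I * (θ : ℂ) * ((1 : ℝ) : ℂ)) = -(Complex.I * ((θ : ℝ) : ℂ)) := by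
      push_cast; ring
    have h2 : -(Complex.I * (θ : ℂ) * ((-1 : ℝ) : ℂ)) = -(Complex.I * ((-θ : ℝ) : ℂ)) := by
      push_cast; ring
    have h3 : -(Complex.I * (η : ℂ) * ((1 : ℝ) : ℂ)) = -(Complex.I * ((η : ℝ) : ℂ)) := by
      push_cast; ring
    rw [h1, h2, h3, exp_IR, exp_IR, exp_IR, Real.cos_neg, Real.sin_neg]
    push_cast at e1' e2' ⊢
    linear_combination (((|z| ^ a : ℝ) : ℂ)) * e1' - Complex.I * (((|z| ^ a : ℝ) : ℂ)) * e2'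

noncomputable def ph (a δ t z : ℝ) : ℂ := Complex.exp (-(((t * |z| ^ a : ℝ) : ℂ) *
        Complex.exp (-(Complex.I * (δ : ℂ) * ((Real.pi / 2 : ℝ) : ℂ) *
          ((Real.sign z : ℝ) : ℂ)))))

lemma ph_MM (a δ : ℝ) (ha : 0 < a ∧ a ≤ 2 ∧ a ≠ 1)
    (hδ : |δ| ≤ min a (2 - a)) (t : ℝ) (ht : 0 < t) : MM (ph a δ t) := by
  obtain ⟨h0, h2, hne⟩ := ha
  rcases lt_or_gt_of_ne hne with h | h
  · obtain ⟨c, d, hc, hd, e1, e2⟩ := coef_exists' a δ t h0 h (hδ.trans (min_le_left _ _)) ht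
    have := (frac_low a h0 h 1 c hc).hmul (frac_low a h0 h (-1) d hd)
    convert this using 2 with z
    rw [← Complex.exp_add, ← neg_add, combine a _ c d t h0.ne' e1 e2 z, ph]
    push_cast; ring_nf
  · obtain ⟨c, d, hc, hd, e1, e2⟩ := coef_exists a δ t h h2 (hδ.trans (min_le_right _ _)) ht
    have := (frac_high a h h2 1 c hc).hmul (frac_high a h h2 (-1) d hd)
    convert this using 2 with z
    rw [← Complex.exp_add, combine a _ c d (-t) h0.ne' e1 e2 z, ph]
    push_cast; ring_nf

lemma ph_norm (a δ t z : ℝ) (h0 : a ≠ 0) :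
    ‖ph a δ t z‖ = Real.exp (-(t * Real.cos (δ * (Real.pi / 2))) * |z| ^ a) := by
  rw [ph, Complex.norm_exp]
  congr 1
  rw [show Complex.I * (δ : ℂ) * ((Real.pi / 2 : ℝ) : ℂ) * ((Real.sign z : ℝ) : ℂ)
    = Complex.I * ((δ * (Real.pi / 2) * Real.sign z : ℝ) : ℂ) by push_cast; ring, exp_IR,
    Complex.neg_re, Complex.re_ofReal_mul, Complex.sub_re, Complex.ofReal_re]
  have : (Complex.I * (Real.sin (δ * (Real.pi / 2) * Real.sign z) : ℂ)).re = 0 := by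
    rw [mul_comm, Complex.re_ofReal_mul]; simp
  rw [this]
  rcases lt_trichotomy z 0 with hz | hz | hz
  · rw [Real.sign_of_neg hz, mul_neg_one, Real.cos_neg]; ring
  · subst hz; simp [Real.zero_rpow h0]
  · rw [Real.sign_of_pos hz]; ring_nf

lemma ph_int (a δ : ℝ) (ha : 0 < a ∧ a ≤ 2 ∧ a ≠ 1)
    (hδ : |δ| ≤ min a (2 - a)) (t : ℝ) (ht : 0 < t) : Integrable (ph a δ t) := by
  have hlt : |δ| < 1 := by
    obtain ⟨h0, h2, hne⟩ := ha
    rcases lt_or_gt_of_ne hne with h | h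
    · exact (hδ.trans (min_le_left _ _)).trans_lt h
    · exact (hδ.trans (min_le_right _ _)).trans_lt (by linarith)
  obtain ⟨hl, hr⟩ := abs_lt.1 hlt
  have hpi := Real.pi_pos
  have hc : 0 < Real.cos (δ * (Real.pi / 2)) := Real.cos_pos_of_mem_Ioo
    ⟨by nlinarith, by nlinarith⟩
  have hb : 0 < t * Real.cos (δ * (Real.pi / 2)) := mul_pos ht hc
  set b := t * Real.cos (δ * (Real.pi / 2))
  have h1 : IntegrableOn (fun x : ℝ => Real.exp (-b * |x| ^ a)) (Set.Ioi 0) := by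
    have := integrableOn_rpow_mul_exp_neg_mul_rpow (s := 0) (by norm_num) ha.1 hb
    refine this.congr_fun (fun x hx => ?_) measurableSet_Ioi
    simp [abs_of_pos (Set.mem_Ioi.1 hx)]
  have h2 : Integrable (fun x : ℝ => Real.exp (-b * |x| ^ a)) := by
    rw [← integrableOn_univ, ← Set.Iic_union_Ioi (a := (0 : ℝ))]
    refine IntegrableOn.union ?_ h1
    rw [integrableOn_Iic_iff_integrableOn_Iio]
    have h3 : IntegrableOn (fun x : ℝ => Real.exp (-b * |x| ^ a)) (Set.Ioi (-0)) := by
      rw [neg_zero]; exact h1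
    have h4 := h3.comp_neg_Iio
    refine h4.congr_fun (fun x _ => ?_) measurableSet_Iio
    simp only [abs_neg]
  refine h2.mono' (ph_MM a δ ha hδ t ht).meas.aestronglyMeasurable (ae_of_all _ fun z => ?_)
  rw [ph_norm _ _ _ _ ha.1.ne']

lemma ph_zero (a δ t : ℝ) (h0 : a ≠ 0) : ph a δ t 0 = 1 := by
  simp [ph, Real.zero_rpow h0]

lemma ph_cont (a δ t : ℝ) (h0 : 0 < a) : ContinuousAt (ph a δ t) 0 := by
  have : Tendsto (fun z : ℝ => (((t * |z| ^ a : ℝ) : ℂ) *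
        Complex.exp (-(Complex.I * (δ : ℂ) * ((Real.pi / 2 : ℝ) : ℂ) *
          ((Real.sign z : ℝ) : ℂ))))) (𝓝 0) (𝓝 0) := by
    refine squeeze_zero_norm (a := fun z : ℝ => |t| * |z| ^ a) (fun z => ?_) ?_
    · rw [show Complex.I * (δ : ℂ) * ((Real.pi / 2 : ℝ) : ℂ) * ((Real.sign z : ℝ) : ℂ)
        = Complex.I * ((δ * (Real.pi / 2) * Real.sign z : ℝ) : ℂ) by push_cast; ring,
        norm_mul, Complex.norm_exp, Complex.norm_real, Real.norm_eq_abs, abs_mul,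
        abs_of_nonneg (Real.rpow_nonneg (abs_nonneg z) a)]
      simp
    · have hc : Continuous (fun z : ℝ => |t| * |z| ^ a) := by
        refine continuous_const.mul (continuous_abs.rpow_const fun _ => Or.inr h0.le)
      have := hc.tendsto 0
      simpa [Real.zero_rpow h0.ne'] using this
  have h := this.neg.cexp
  rw [ContinuousAt, ph_zero _ _ _ h0.ne']
  rw [neg_zero, Complex.exp_zero] at h
  exact h

open scoped FourierTransform

lemma G1_eq (a δ t x : ℝ) :
    G1 a δ t x = ((1 / (2 * Real.pi) : ℝ)) • ∫ z : ℝ, Complex.exp (-(Complex.I * z * x)) * ph a δ t z := by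
  unfold G1 ph
  congr 2
  ext z
  rw [← Complex.exp_add]; congr 1

lemma four_eq (φ : ℝ → ℂ) (x : ℝ) :
    𝓕 φ (x / (2 * Real.pi)) = ∫ z : ℝ, Complex.exp (-(Complex.I * z * x)) * φ z := by
  rw [Real.fourier_eq']
  congr 1
  ext z
  rw [smul_eq_mul]
  congr 2
  have : (Real.pi : ℂ) ≠ 0 := by exact_mod_cast Real.pi_ne_zero
  simp
  field_simp

lemma inv_nonneg' {φ : ℝ → ℂ} (h : MM φ) (hi : Integrable φ) (x : ℝ) :
    0 ≤ ∫ z : ℝ, Complex.exp (-(Complex.I * z * x)) * φ z := by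
  have hI : Integrable (fun z : ℝ => Complex.exp (-(Complex.I * z * x)) * φ z) := by
    refine hi.bdd_mul (c := 1) (Continuous.aestronglyMeasurable (by fun_prop)) (ae_of_all _ fun z => ?_)
    simp [Complex.norm_exp]
  have hl := Real.tendsto_integral_cexp_sq_smul hI
  refine ge_of_tendsto hl ?_
  filter_upwards [Ioi_mem_atTop 0] with c hc
  have := h.toPP x c⁻¹ (inv_pos.2 hc)
  refine this.trans_eq (integral_congr_ae (ae_of_all _ fun z => ?_))
  have e : ((‖z‖ : ℝ) : ℂ) ^ 2 = (z : ℂ) ^ 2 := by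
    rw [Real.norm_eq_abs]; exact_mod_cast sq_abs z
  simp only [gw, smul_eq_mul, e]; push_cast; ring

lemma four_nonneg {φ : ℝ → ℂ} (h : MM φ) (hi : Integrable φ) (w : ℝ) : 0 ≤ 𝓕 φ w := by
  have h1 := inv_nonneg' h hi (w * (2 * Real.pi))
  rw [← four_eq, mul_div_cancel_right₀ _ (by positivity)] at h1
  exact h1

lemma four_lim {φ : ℝ → ℂ} (hi : Integrable φ) (hc : ContinuousAt φ 0) :
    Tendsto (fun c : ℝ => ∫ w : ℝ, Complex.exp (-(c : ℂ)⁻¹ * (‖w‖ : ℂ) ^ 2) • 𝓕 φ w) atTop (𝓝 (φ 0)) := by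
  have A := Real.tendsto_integral_gaussian_smul' hi hc
  refine A.congr' ?_
  filter_upwards [Ioi_mem_atTop 0] with c (hc : 0 < c)
  have J : Integrable (fun w : ℝ ↦ Complex.exp (- (c : ℂ)⁻¹ * ‖w‖ ^ 2 + 2 * Real.pi * Complex.I * (inner ℝ (0 : ℝ) w : ℝ))) :=
    GaussianFourier.integrable_cexp_neg_mul_sq_norm_add (by simpa) _ _
  have K := (VectorFourier.integral_fourierIntegral_smul_eq_flip (L := innerₗ ℝ)
      Real.continuous_fourierChar continuous_inner J hi)
  have K' : ∫ w : ℝ, 𝓕 (fun w : ℝ ↦ Complex.exp (- (c : ℂ)⁻¹ * ‖w‖ ^ 2 + 2 * Real.pi * Complex.I * (inner ℝ (0 : ℝ) w : ℝ))) w • φ w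
     = ∫ w : ℝ, Complex.exp (-(c : ℂ)⁻¹ * (‖w‖ : ℂ) ^ 2) • 𝓕 φ w := by
    simpa using! K
  rw [← K']
  congr with w
  rw [fourier_gaussian_innerProductSpace' (by simpa)]
  congr 2
  · simp
  · congr 1
    simp only [zero_sub, norm_neg, div_inv_eq_mul]
    ring

lemma four_total {φ : ℝ → ℂ} (h : MM φ) (hi : Integrable φ) (hc : ContinuousAt φ 0)
    (h0 : φ 0 = 1) : ∫ w, 𝓕 φ w = 1 := by
  have hF : ∀ w, 𝓕 φ w = (((𝓕 φ w).re : ℝ) : ℂ) := fun w =>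
    Complex.ext rfl (by simpa using (Complex.le_def.1 (four_nonneg h hi w)).2.symm)
  have hr : ∀ w, 0 ≤ (𝓕 φ w).re := fun w => (Complex.le_def.1 (four_nonneg h hi w)).1
  have hcont : Continuous (𝓕 φ) := VectorFourier.fourierIntegral_continuous Real.continuous_fourierChar
    (by exact continuous_inner) hi
  set F : ℝ → ℝ := fun w => (𝓕 φ w).re with hFdef
  have hFc : Continuous F := Complex.continuous_re.comp hcont
  have hFb : ∀ w, ‖F w‖ ≤ ∫ z, ‖φ z‖ := fun w =>
    (Complex.abs_re_le_norm _).trans (VectorFourier.norm_fourierIntegral_le_integral_norm _ _ _ _ _)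
  let f : ℕ → ℝ → ℝ := fun n w => Real.exp (-((n + 1 : ℕ) : ℝ)⁻¹ * w ^ 2) * F w
  have hfi : ∀ n, Integrable (f n) := fun n =>
    (integrable_exp_neg_mul_sq (b := ((n + 1 : ℕ) : ℝ)⁻¹) (by positivity)).mul_bdd
      hFc.aestronglyMeasurable (ae_of_all _ hFb)
  have hfn : ∀ n w, 0 ≤ f n w := fun n w => mul_nonneg (Real.exp_pos _).le (hr w)
  have hlim : Tendsto (fun n => ∫ w, f n w) atTop (𝓝 1) := by
    have h1 := (four_lim hi hc).comp (tendsto_natCast_atTop_atTop.comp (tendsto_add_atTop_nat 1))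
    have h2 := (Complex.continuous_re.tendsto _).comp h1
    rw [h0, Complex.one_re] at h2
    refine h2.congr fun n => ?_
    simp only [Function.comp]
    rw [← Complex.ofReal_re (∫ w, f n w), ← integral_complex_ofReal]
    congr 2
    ext w
    rw [hF w, smul_eq_mul]
    simp only [f]
    have e : ((‖w‖ : ℝ) : ℂ) ^ 2 = (w : ℂ) ^ 2 := by
      rw [Real.norm_eq_abs]; exact_mod_cast sq_abs w
    rw [e]; push_cast; rfl
  have hmono : Tendsto (fun n => ∫⁻ w, ENNReal.ofReal (f n w)) atTop
      (𝓝 (∫⁻ w, ENNReal.ofReal (F w))) := by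
    refine lintegral_tendsto_of_tendsto_of_monotone
      (fun n => (hfi n).aestronglyMeasurable.aemeasurable.ennreal_ofReal) ?_ ?_
    · refine ae_of_all _ fun w n m hnm => ENNReal.ofReal_le_ofReal ?_
      refine mul_le_mul_of_nonneg_right (Real.exp_le_exp.2 ?_) (hr w)
      refine mul_le_mul_of_nonneg_right (neg_le_neg ?_) (sq_nonneg w)
      exact inv_anti₀ (by positivity) (by exact_mod_cast Nat.succ_le_succ hnm)
    · refine ae_of_all _ fun w => ENNReal.tendsto_ofReal ?_
      have h1 : Tendsto (fun n : ℕ => ((n + 1 : ℕ) : ℝ)⁻¹) atTop (𝓝 0) :=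
        tendsto_inv_atTop_zero.comp (tendsto_natCast_atTop_atTop.comp (tendsto_add_atTop_nat 1))
      have h2 := ((Real.continuous_exp.tendsto _).comp (h1.neg.mul_const (w ^ 2))).mul_const (F w)
      rw [neg_zero, zero_mul, Real.exp_zero, one_mul] at h2
      exact h2
  have heq : ∀ n, ∫⁻ w, ENNReal.ofReal (f n w) = ENNReal.ofReal (∫ w, f n w) := fun n =>
    (ofReal_integral_eq_lintegral_ofReal (hfi n) (ae_of_all _ (hfn n))).symm
  simp_rw [heq] at hmono
  have hone := tendsto_nhds_unique hmono (ENNReal.tendsto_ofReal hlim)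
  have : ∫ w, F w = 1 := by
    rw [integral_eq_lintegral_of_nonneg_ae (ae_of_all _ hr) hFc.aestronglyMeasurable, hone]
    simp
  rw [integral_congr_ae (ae_of_all _ hF), integral_complex_ofReal, this, Complex.ofReal_one]

theorem stmt5 (a δ : ℝ) (ha : 0 < a ∧ a ≤ 2 ∧ a ≠ 1)
    (hδ : |δ| ≤ min a (2 - a)) (t : ℝ) (ht : 0 < t) :
    (∀ x : ℝ, 0 ≤ G1 a δ t x) ∧ (∫ x : ℝ, G1 a δ t x) = 1 := by
  have hM := ph_MM a δ ha hδ t ht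
  have hI := ph_int a δ ha hδ t ht
  constructor
  · intro x
    rw [G1_eq, Complex.real_smul]
    exact mul_nonneg (by exact_mod_cast (by positivity)) (inv_nonneg' hM hI x)
  · have h1 := four_total hM hI (ph_cont a δ t ha.1) (ph_zero a δ t ha.1.ne')
    have hpi := Real.pi_pos
    simp_rw [G1_eq, ← four_eq]
    rw [integral_smul, Measure.integral_comp_div (fun w => 𝓕 (ph a δ t) w), h1,
      abs_of_pos (by positivity), smul_smul, one_div, inv_mul_cancel₀ (by positivity), one_smul]
end

section
/- Let α ∈ (0,2]∖{1} and δ ∈ ℝ with |δ| ≤ min(α, 2−α). Then there exists a constant c_α > 0 such that 0 ≤ G_{α,δ}(1, x) ≤ c_α/(1 + |x|^{1+α}) for all x ∈ ℝ. -/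
open MeasureTheory
open scoped ComplexOrder

open Filter Topology Set

lemma gs_even (f : ℝ → ℝ) (hf : IntegrableOn f (Ioi 0)) (he : ∀ x, f (-x) = f x) :
    Integrable f := by
  have h2 : IntegrableOn f (Iic 0) := by
    have h3 : IntegrableOn f (Ici (-0)) := by
      rw [integrableOn_Ici_iff_integrableOn_Ioi]; simpa using hf
    have := h3.comp_neg_Iic
    simpa [he] using this
  rw [← integrableOn_univ, ← Iic_union_Ioi (a := (0:ℝ))]
  exact h2.union hf

lemma gs_int_abs (C η : ℝ) (hη : 0 < η) : Integrable (fun v : ℝ => C * Real.exp (-η * |v|)) := by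
  apply Integrable.const_mul
  refine gs_even _ ?_ (by simp)
  refine (exp_neg_integrableOn_Ioi 0 hη).congr_fun ?_ measurableSet_Ioi
  intro x hx
  simp [abs_of_pos (show (0:ℝ) < x from hx)]

lemma gs_line_shift (Φ : ℂ → ℂ) (hΦ : Differentiable ℂ Φ) (θ : ℝ) (hθ : 0 ≤ θ) (C η : ℝ)
    (hη : 0 < η)
    (hb : ∀ v y : ℝ, 0 ≤ y → y ≤ θ → ‖Φ (v - y * Complex.I)‖ ≤ C * Real.exp (-η * |v|)) :
    ∫ v : ℝ, Φ v = ∫ v : ℝ, Φ (v - θ * Complex.I) := by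
  have hc := hΦ.continuous
  have i1 : Integrable (fun v : ℝ => Φ v) := by
    refine (gs_int_abs C η hη).mono' (by fun_prop) (Eventually.of_forall fun v => ?_)
    simpa using hb v 0 le_rfl hθ
  have i2 : Integrable (fun v : ℝ => Φ (v - θ * Complex.I)) := by
    refine (gs_int_abs C η hη).mono' (by fun_prop) (Eventually.of_forall fun v => ?_)
    simpa using hb v θ hθ le_rfl
  have hT : Tendsto (fun n : ℕ => (n : ℝ)) atTop atTop := tendsto_natCast_atTop_atTop
  have hT' : Tendsto (fun n : ℕ => -(n : ℝ)) atTop atBot := tendsto_neg_atTop_atBot.comp hT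
  have t1 := intervalIntegral_tendsto_integral i1 hT' hT
  have t2 := intervalIntegral_tendsto_integral i2 hT' hT
  have hE : Tendsto (fun n : ℕ => C * Real.exp (-η * (n:ℝ)) * θ) atTop (𝓝 0) := by
    have : Tendsto (fun n : ℕ => Real.exp (-η * (n:ℝ))) atTop (𝓝 0) :=
      Real.tendsto_exp_atBot.comp (hT.const_mul_atTop_of_neg (by linarith))
    simpa using (this.const_mul C).mul_const θ
  have key : ∀ s : ℝ, ‖∫ y in (-θ)..0, Φ (s + y * Complex.I)‖ ≤ C * Real.exp (-η * |s|) * θ := by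
    intro s
    have := intervalIntegral.norm_integral_le_of_norm_le_const (a := -θ) (b := 0)
      (f := fun y : ℝ => Φ (s + y * Complex.I)) (C := C * Real.exp (-η * |s|)) ?_
    · simpa [abs_of_nonneg hθ] using this
    · intro y hy
      rw [uIoc_of_le (by linarith)] at hy
      have := hb s (-y) (by linarith [hy.2]) (by linarith [hy.1])
      simpa using this
  have v1 : Tendsto (fun n : ℕ => ∫ y in (-θ)..0, Φ (((n:ℝ):ℂ) + y * Complex.I)) atTop (𝓝 0) := by
    refine squeeze_zero_norm (fun n => ?_) hE
    simpa using key n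
  have v2 : Tendsto (fun n : ℕ => ∫ y in (-θ)..0, Φ (((-(n:ℝ) : ℝ):ℂ) + y * Complex.I)) atTop (𝓝 0) := by
    refine squeeze_zero_norm (fun n => ?_) hE
    simpa using key (-n)
  have rect : ∀ n : ℕ, (∫ v in (-(n:ℝ))..n, Φ v) = (∫ v in (-(n:ℝ))..n, Φ (v - θ * Complex.I))
      + Complex.I • (∫ y in (-θ)..0, Φ (((n:ℝ):ℂ) + y * Complex.I))
      - Complex.I • (∫ y in (-θ)..0, Φ (((-(n:ℝ) : ℝ):ℂ) + y * Complex.I)) := by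
    intro n
    have := Complex.integral_boundary_rect_eq_zero_of_differentiableOn Φ
      ⟨-(n:ℝ), -θ⟩ ⟨n, 0⟩ hΦ.differentiableOn
    simp only [Complex.ofReal_zero, zero_mul, add_zero] at this
    simp only [Complex.ofReal_neg, neg_mul, ← sub_eq_add_neg] at this ⊢
    linear_combination (-1 : ℂ) * this
  have t3 : Tendsto (fun n : ℕ => ∫ v in (-(n:ℝ))..n, Φ v) atTop
      (𝓝 (∫ v : ℝ, Φ (v - θ * Complex.I))) := by
    simp_rw [rect]
    simpa using (t2.add (v1.const_smul Complex.I)).sub (v2.const_smul Complex.I)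
  exact tendsto_nhds_unique t1 t3

/-- exponential beats double exponential. -/
lemma gs_dbl (b c g : ℝ) (hb : 0 < b) (hc : 0 < c) (hg : 0 < g) :
    ∃ C, ∃ η > 0, ∀ v : ℝ, Real.exp (b * v) * Real.exp (-c * Real.exp (g * v))
      ≤ C * Real.exp (-η * |v|) := by
  -- choose k natural with k * g ≥ 2 b
  obtain ⟨k, hk⟩ := exists_nat_ge (2 * b / g)
  rw [div_le_iff₀ hg] at hk
  refine ⟨1 + k.factorial / c ^ k, b, hb, fun v => ?_⟩
  have hk0 : 0 ≤ (k.factorial : ℝ) / c ^ k := by positivity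
  rcases le_total v 0 with hv | hv
  · rw [abs_of_nonpos hv, neg_mul_neg]
    have : Real.exp (-c * Real.exp (g * v)) ≤ 1 := by
      rw [Real.exp_le_one_iff]; nlinarith [Real.exp_pos (g * v)]
    nlinarith [Real.exp_pos (b * v)]
  · rw [abs_of_nonneg hv]
    have h1 : (c * Real.exp (g * v)) ^ k / k.factorial ≤ Real.exp (c * Real.exp (g * v)) :=
      Real.pow_div_factorial_le_exp _ (by positivity) k
    have h2 : Real.exp (-c * Real.exp (g * v)) ≤ k.factorial / c ^ k * Real.exp (-(k * g * v)) := by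
      rw [neg_mul, Real.exp_neg, Real.exp_neg]
      have e : Real.exp (k * g * v) = Real.exp (g * v) ^ k := by
        rw [← Real.exp_nat_mul]; ring_nf
      rw [e]
      calc (Real.exp (c * Real.exp (g * v)))⁻¹ ≤ ((c * Real.exp (g * v)) ^ k / k.factorial)⁻¹ :=
            inv_anti₀ (by positivity) h1
        _ = _ := by rw [mul_pow]; field_simp
    calc Real.exp (b * v) * Real.exp (-c * Real.exp (g * v))
        ≤ Real.exp (b * v) * (k.factorial / c ^ k * Real.exp (-(k * g * v))) := by gcongr
      _ = k.factorial / c ^ k * Real.exp (b * v -(k * g * v)) := by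
          rw [sub_eq_add_neg, Real.exp_add]; ring
      _ ≤ (1 + k.factorial / c ^ k) * Real.exp (-b * v) := by
          gcongr
          · linarith
          · nlinarith


noncomputable def gsPhi (a δ z : ℝ) : ℂ :=
  Complex.exp (-(((|z| ^ a : ℝ) : ℂ) *
        Complex.exp (-(Complex.I * (δ : ℂ) * ((Real.pi / 2 : ℝ) : ℂ) *
          ((Real.sign z : ℝ) : ℂ)))))

lemma gs_G1 (a δ x : ℝ) : G1 a δ 1 x = ((1 / (2 * Real.pi) : ℝ)) •
    ∫ z : ℝ, Complex.exp (-(Complex.I * z * x)) * gsPhi a δ z := by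
  unfold G1 gsPhi
  congr 2
  funext z
  rw [← Complex.exp_add, one_mul, sub_eq_add_neg]

lemma gs_phi_pos (a δ z : ℝ) (hz : 0 < z) : gsPhi a δ z =
    Complex.exp (-(((z ^ a : ℝ) : ℂ) * Complex.exp (-(Complex.I * δ * ((Real.pi / 2 : ℝ) : ℂ))))) := by
  unfold gsPhi
  rw [Real.sign_of_pos hz, abs_of_pos hz]; simp

lemma gs_phi_neg (a δ z : ℝ) : gsPhi a δ (-z) = gsPhi a (-δ) z := by
  unfold gsPhi
  rw [Real.sign_neg, abs_neg]; simp

lemma gs_phi_conj (a δ z : ℝ) : gsPhi a δ (-z) = (starRingEnd ℂ) (gsPhi a δ z) := by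
  unfold gsPhi
  rw [Real.sign_neg, abs_neg, ← Complex.exp_conj, map_neg, map_mul, ← Complex.exp_conj]
  have : (starRingEnd ℂ) 2 = 2 := map_ofNat _ 2
  simp [this]

lemma gs_phi_norm (a δ z : ℝ) (ha : 0 < a) :
    ‖gsPhi a δ z‖ = Real.exp (-(Real.cos (δ * (Real.pi / 2)) * |z| ^ a)) := by
  unfold gsPhi
  rw [Complex.norm_exp, Complex.neg_re, Complex.re_ofReal_mul, Complex.exp_re]
  rcases lt_trichotomy z 0 with h | h | h
  · simp [Real.sign_of_neg h]; ring
  · simp [h, ha.ne']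
  · simp [Real.sign_of_pos h]; ring

lemma gs_phi_meas (a δ : ℝ) : Measurable (gsPhi a δ) := by
  unfold gsPhi
  have : Measurable Real.sign := by
    unfold Real.sign
    exact Measurable.ite measurableSet_Iio measurable_const
      (Measurable.ite measurableSet_Ioi measurable_const measurable_const)
  fun_prop

lemma gs_phi_int (a δ : ℝ) (ha : 0 < a) (hd : |δ| < 1) : Integrable (gsPhi a δ) := by
  have hc : 0 < Real.cos (δ * (Real.pi / 2)) := by
    apply Real.cos_pos_of_mem_Ioo
    have := abs_lt.1 hd
    constructor <;> nlinarith [Real.pi_pos]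
  have h := integrableOn_rpow_mul_exp_neg_mul_rpow (p := a) (s := 0) (by norm_num) ha hc
  have h2 : Integrable (fun z : ℝ => Real.exp (-(Real.cos (δ * (Real.pi / 2)) * |z| ^ a))) := by
    refine gs_even _ ?_ (by simp)
    refine h.congr_fun ?_ measurableSet_Ioi
    intro z hz
    simp [abs_of_pos (show (0:ℝ) < z from hz)]
  refine h2.mono' (gs_phi_meas a δ).aestronglyMeasurable (Eventually.of_forall fun z => ?_)
  rw [gs_phi_norm a δ z ha]

lemma gs_norm_e (x z : ℝ) : ‖Complex.exp (-(Complex.I * z * x))‖ = 1 := by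
  rw [Complex.norm_exp]; simp

lemma gs_int (a δ x : ℝ) (ha : 0 < a) (hd : |δ| < 1) :
    Integrable (fun z : ℝ => Complex.exp (-(Complex.I * z * x)) * gsPhi a δ z) := by
  refine (gs_phi_int a δ ha hd).norm.mono' ?_ (Eventually.of_forall fun z => ?_)
  · exact (Measurable.aestronglyMeasurable (by fun_prop)).mul (gs_phi_meas a δ).aestronglyMeasurable
  · rw [norm_mul, gs_norm_e, one_mul]

lemma gs_exp_le (w : ℂ) (hw : 0 ≤ w.re) : ‖Complex.exp (-w) - 1‖ ≤ 2 * ‖w‖ := by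
  rcases le_total ‖w‖ 1 with h | h
  · simpa using Complex.norm_exp_sub_one_le (x := -w) (by simpa using h)
  · have : ‖Complex.exp (-w)‖ ≤ 1 := by rw [Complex.norm_exp]; simpa using hw
    calc _ ≤ ‖Complex.exp (-w)‖ + ‖(1:ℂ)‖ := norm_sub_le _ _
      _ ≤ _ := by simp; linarith

lemma gs_exp_le2 (w : ℂ) (hw : 0 ≤ w.re) :
    ‖Complex.exp (-w) - 1 + w‖ ≤ 3 * ‖w‖ ∧ ‖Complex.exp (-w) - 1 + w‖ ≤ 3 * ‖w‖ ^ 2 := by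
  have h1 : ‖Complex.exp (-w) - 1 + w‖ ≤ 3 * ‖w‖ := by
    calc _ ≤ ‖Complex.exp (-w) - 1‖ + ‖w‖ := norm_add_le _ _
      _ ≤ _ := by linarith [gs_exp_le w hw]
  refine ⟨h1, ?_⟩
  rcases le_total ‖w‖ 1 with h | h
  · have := Complex.norm_exp_sub_one_sub_id_le (x := -w) (by simpa using h)
    simp at this
    nlinarith [sq_nonneg ‖w‖]
  · nlinarith

lemma gs_decay (a δ : ℝ) (ha : 0 < a) (ha2 : a ≤ 2) (hd : |δ| < 1) : ∃ M : ℝ, 0 ≤ M ∧ ∀ x : ℝ, 0 < x →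
    ‖∫ z : ℝ, Complex.exp (-(Complex.I * z * x)) * gsPhi a δ z‖ ≤ M * x ^ (-(1 + a)) := by
  have hpi := Real.pi_pos
  obtain ⟨θ, hθdef⟩ : ∃ θ : ℝ, θ = (1 - |δ|) * Real.pi / 8 := ⟨_, rfl⟩
  have hd0 := abs_nonneg δ
  have hθ0 : 0 < θ := by rw [hθdef]; apply div_pos (mul_pos (by linarith) hpi); norm_num
  have hθ1 : θ < Real.pi / 2 := by rw [hθdef]; nlinarith
  obtain ⟨A, hA⟩ : ∃ A : ℝ, A = |δ| * (Real.pi / 2) + (1 - |δ|) * Real.pi / 4 := ⟨_, rfl⟩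
  have hA1 : A < Real.pi / 2 := by rw [hA]; nlinarith
  have hA0 : 0 ≤ A := by
    rw [hA]; have := mul_nonneg hd0 hpi.le; nlinarith [mul_pos (sub_pos.2 hd) hpi]
  have hc0 : 0 < Real.cos A := Real.cos_pos_of_mem_Ioo ⟨by linarith, hA1⟩
  have hcos : ∀ y, 0 ≤ y → y ≤ θ → Real.cos A ≤ Real.cos (a * y + δ * (Real.pi / 2)) := by
    intro y hy hy'
    rw [← Real.cos_abs (a * y + δ * (Real.pi / 2))]
    apply Real.cos_le_cos_of_nonneg_of_le_pi (abs_nonneg _) (by linarith)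
    calc _ ≤ |a * y| + |δ * (Real.pi / 2)| := abs_add_le _ _
      _ = a * y + |δ| * (Real.pi / 2) := by
        rw [abs_of_nonneg (mul_nonneg ha.le hy), abs_mul, abs_of_pos (by linarith : 0 < Real.pi/2)]
      _ ≤ A := by
        have : a * y ≤ 2 * θ := by nlinarith
        rw [hA]; rw [hθdef] at this; linarith
  have hs : 0 < Real.sin θ := Real.sin_pos_of_pos_of_lt_pi hθ0 (by linarith)
  obtain ⟨C, η, hη, hC⟩ := gs_dbl 1 (Real.cos A) a one_pos hc0 ha
  obtain ⟨C', η', hη', hC'⟩ := gs_dbl (1 + a) (Real.sin θ) 1 (by linarith) hs one_pos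
  have hMint : Integrable (fun v : ℝ => Real.exp ((1 + a) * v) * Real.exp (-Real.sin θ * Real.exp (1 * v))) := by
    refine (gs_int_abs C' η' hη').mono' (by fun_prop) (Eventually.of_forall fun v => ?_)
    rw [Real.norm_of_nonneg (by positivity)]
    exact hC' v
  obtain ⟨M, hM⟩ : ∃ M : ℝ, M = ∫ v : ℝ, Real.exp ((1 + a) * v) * Real.exp (-Real.sin θ * Real.exp (1 * v)) := ⟨_, rfl⟩
  have hM0 : 0 ≤ M := by rw [hM]; exact integral_nonneg fun v => by positivity
  refine ⟨2 * (2 * M), by positivity, fun x hx => ?_⟩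
  let h : ℝ → ℂ := fun z => Complex.exp (-(Complex.I * z * x)) * gsPhi a δ z
  have hh : Integrable h := gs_int a δ x ha hd
  have hconj : ∀ z, h (-z) = (starRingEnd ℂ) (h z) := by
    intro z
    simp only [h, map_mul, ← gs_phi_conj, ← Complex.exp_conj]
    simp
  have hsplit : ∫ z, h z = (starRingEnd ℂ) (∫ z in Ioi 0, h z) + ∫ z in Ioi 0, h z := by
    rw [← integral_conj]
    simp_rw [← hconj]
    rw [integral_comp_neg_Ioi, neg_zero, ← setIntegral_union (Iic_disjoint_Ioi le_rfl) measurableSet_Ioi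
      hh.integrableOn hh.integrableOn, Iic_union_Ioi, setIntegral_univ]
  let Φ : ℂ → ℂ := fun ζ => Complex.exp ζ * (Complex.exp (-(Complex.I * x * Complex.exp ζ)) *
    Complex.exp (-(Complex.exp (a * ζ - Complex.I * (δ * (Real.pi / 2))))))
  let Ψ : ℂ → ℂ := fun ζ => Complex.exp ζ * Complex.exp (-(Complex.I * x * Complex.exp ζ))
  have hsub : ∫ z in Ioi 0, h z = ∫ v : ℝ, Φ v := by
    have himg : Ioi (0:ℝ) = Real.exp '' univ := by simp
    rw [himg, integral_image_eq_integral_abs_deriv_smul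
      MeasurableSet.univ (fun x _ ↦ (Real.hasDerivAt_exp x).hasDerivWithinAt)
      (fun x _ y _ hxy ↦ Real.exp_injective hxy) h, setIntegral_univ]
    congr 1
    funext v
    simp only [h, Φ]
    rw [gs_phi_pos _ _ _ (Real.exp_pos v), abs_of_pos (Real.exp_pos v), Complex.real_smul,
      ← Real.exp_mul, Complex.ofReal_exp, Complex.ofReal_exp, ← Complex.exp_add (((v * a : ℝ) : ℂ))]
    push_cast
    ring_nf
  have n1 : ∀ v y : ℝ, ‖Complex.exp ((v:ℂ) - y * Complex.I)‖ = Real.exp v := by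
    intro v y; rw [Complex.norm_exp]; simp
  have n2 : ∀ v y : ℝ, ‖Complex.exp (-(Complex.I * x * Complex.exp ((v:ℂ) - y * Complex.I)))‖ =
      Real.exp (-(x * Real.sin y * Real.exp v)) := by
    intro v y; rw [Complex.norm_exp]; simp [Complex.exp_im, Complex.exp_re]; ring
  have n3 : ∀ v y : ℝ, (Complex.exp (a * ((v:ℂ) - y * Complex.I) - Complex.I * (δ * (Real.pi / 2)))).re
      = Real.exp (a * v) * Real.cos (a * y + δ * (Real.pi / 2)) := by
    intro v y
    rw [Complex.exp_re]
    have e1 : (a * ((v:ℂ) - y * Complex.I) - Complex.I * (δ * (Real.pi / 2))).re = a * v := by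
      simp
    have e2 : (a * ((v:ℂ) - y * Complex.I) - Complex.I * (δ * (Real.pi / 2))).im
      = -(a * y + δ * (Real.pi / 2)) := by
      have : ((δ:ℂ) * (Real.pi / 2)) = ((δ * (Real.pi / 2) : ℝ) : ℂ) := by push_cast; rfl
      rw [this]; simp; ring
    rw [e1, e2, Real.cos_neg]
  have n4 : ∀ v y : ℝ, ‖Complex.exp (a * ((v:ℂ) - y * Complex.I) - Complex.I * (δ * (Real.pi / 2)))‖
      = Real.exp (a * v) := by
    intro v y
    have : ((δ:ℂ) * (Real.pi / 2)) = ((δ * (Real.pi / 2) : ℝ) : ℂ) := by push_cast; rfl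
    rw [Complex.norm_exp, this]; simp
  have bΦ : ∀ v y : ℝ, 0 ≤ y → y ≤ θ → ‖Φ (v - y * Complex.I)‖ ≤ C * Real.exp (-η * |v|) := by
    intro v y hy hy'
    simp only [Φ]
    rw [norm_mul, norm_mul, n1, n2, Complex.norm_exp, Complex.neg_re, n3]
    refine le_trans ?_ (hC v)
    rw [one_mul]
    have hsy : 0 ≤ Real.sin y := Real.sin_nonneg_of_nonneg_of_le_pi hy (by linarith)
    have : Real.exp (-(x * Real.sin y * Real.exp v)) ≤ 1 := by
      rw [Real.exp_le_one_iff]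
      have : 0 ≤ x * Real.sin y * Real.exp v := by positivity
      linarith
    have h2 : Real.exp (-(Real.exp (a * v) * Real.cos (a * y + δ * (Real.pi / 2)))) ≤
        Real.exp (-Real.cos A * Real.exp (a * v)) := by
      rw [Real.exp_le_exp]
      nlinarith [hcos y hy hy', Real.exp_pos (a * v)]
    calc _ ≤ Real.exp v * (1 * Real.exp (-Real.cos A * Real.exp (a * v))) := by gcongr
      _ = _ := by rw [one_mul]
  have hΦd : Differentiable ℂ Φ := by simp only [Φ]; fun_prop
  have hshift := gs_line_shift Φ hΦd θ hθ0.le C η hη bΦ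
  have iΦ : Integrable (fun v : ℝ => Φ (v - θ * Complex.I)) := by
    have := hΦd.continuous
    refine (gs_int_abs C η hη).mono' (by fun_prop) (Eventually.of_forall fun v => ?_)
    exact bΦ v θ hθ0.le le_rfl
  have iΨ : Integrable (fun v : ℝ => Ψ (v - θ * Complex.I)) := by
    obtain ⟨C2, η2, hη2, hC2⟩ := gs_dbl 1 (x * Real.sin θ) 1 one_pos (by positivity) one_pos
    refine (gs_int_abs C2 η2 hη2).mono' (Continuous.aestronglyMeasurable (by simp only [Ψ]; fun_prop)) (Eventually.of_forall fun v => ?_)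
    simp only [Ψ]
    rw [norm_mul, n1, n2]
    refine le_trans (le_of_eq ?_) (hC2 v)
    simp
  have hΨ : ∫ v : ℝ, Ψ (v - θ * Complex.I) = 0 - (-(Complex.I * x))⁻¹ := by
    refine integral_of_hasDerivAt_of_tendsto
      (f := fun v : ℝ => (-(Complex.I * x))⁻¹ * Complex.exp (-(Complex.I * x * Complex.exp ((v:ℂ) - θ * Complex.I))))
      ?_ iΨ ?_ ?_
    · intro v
      have hxc : (-(Complex.I * x)) ≠ 0 := by simp [hx.ne']
      have h1 : HasDerivAt (fun ζ : ℂ => (-(Complex.I * x))⁻¹ * Complex.exp (-(Complex.I * x * Complex.exp (ζ - θ * Complex.I))))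
        (Ψ (v - θ * Complex.I)) (v:ℂ) := by
        have := (((((hasDerivAt_id (v:ℂ)).sub_const (θ * Complex.I)).cexp.const_mul (Complex.I * x)).neg).cexp.const_mul (-(Complex.I * x))⁻¹)
        refine this.congr_deriv ?_
        symm
        have hi := inv_mul_cancel₀ hxc
        change Complex.exp (v - θ * Complex.I) * Complex.exp (-(Complex.I * x * Complex.exp (v - θ * Complex.I)))
          = (-(Complex.I * x))⁻¹ * (Complex.exp (-(Complex.I * x * Complex.exp (v - θ * Complex.I)))
            * -(Complex.I * x * (Complex.exp (v - θ * Complex.I) * 1)))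
        linear_combination -(Complex.exp (v - θ * Complex.I) * Complex.exp (-(Complex.I * x * Complex.exp (v - θ * Complex.I)))) * hi
      exact h1.comp_ofReal
    · have : Tendsto (fun v : ℝ => Complex.exp ((v:ℂ) - θ * Complex.I)) atBot (𝓝 0) := by
        rw [tendsto_zero_iff_norm_tendsto_zero]
        simp_rw [n1]
        exact Real.tendsto_exp_atBot
      have := (((this.const_mul (Complex.I * x)).neg).cexp).const_mul (-(Complex.I * x))⁻¹
      simpa using this
    · rw [tendsto_zero_iff_norm_tendsto_zero]
      simp_rw [norm_mul, n2]
      have : Tendsto (fun v => Real.exp (-(x * Real.sin θ * Real.exp v))) atTop (𝓝 0) :=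
        Real.tendsto_exp_neg_atTop_nhds_zero.comp (Real.tendsto_exp_atTop.const_mul_atTop (by positivity))
      simpa using this.const_mul ‖(-(Complex.I * (x:ℂ)))⁻¹‖
  have hΨre : (∫ v : ℝ, Ψ (v - θ * Complex.I)).re = 0 := by
    rw [hΨ]; simp
  have hdiff : ∀ v : ℝ, ‖Φ (v - θ * Complex.I) - Ψ (v - θ * Complex.I)‖ ≤
      2 * (x ^ (-(1 + a)) * (Real.exp ((1 + a) * (v + Real.log x)) * Real.exp (-Real.sin θ * Real.exp (1 * (v + Real.log x))))) := by
    intro v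
    have e : Φ (v - θ * Complex.I) - Ψ (v - θ * Complex.I) =
      Complex.exp (v - θ * Complex.I) * (Complex.exp (-(Complex.I * x * Complex.exp (v - θ * Complex.I))) *
       (Complex.exp (-(Complex.exp (a * (v - θ * Complex.I) - Complex.I * (δ * (Real.pi / 2))))) - 1)) := by
      simp only [Φ, Ψ]; ring
    rw [e, norm_mul, norm_mul, n1, n2]
    have h1 := gs_exp_le (Complex.exp (a * ((v:ℂ) - θ * Complex.I) - Complex.I * (δ * (Real.pi / 2)))) (by
      rw [n3]
      exact mul_nonneg (Real.exp_pos _).le (hc0.le.trans (hcos θ hθ0.le le_rfl)))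
    rw [n4] at h1
    calc _ ≤ Real.exp v * (Real.exp (-(x * Real.sin θ * Real.exp v)) * (2 * Real.exp (a * v))) := by gcongr
      _ = _ := by
        rw [mul_add, Real.exp_add, mul_comm (1 + a) (Real.log x), ← Real.rpow_def_of_pos hx, one_mul, Real.exp_add,
          Real.exp_log hx, Real.rpow_neg hx.le, add_mul, one_mul, Real.exp_add]
        have : x ^ (1 + a) ≠ 0 := (Real.rpow_pos_of_pos hx _).ne'
        field_simp
  have hmain : |(∫ z in Ioi 0, h z).re| ≤ 2 * (x ^ (-(1 + a)) * M) := by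
    rw [hsub, hshift]
    have : (∫ v : ℝ, Φ (v - θ * Complex.I)).re = (∫ v : ℝ, (Φ (v - θ * Complex.I) - Ψ (v - θ * Complex.I))).re := by
      rw [integral_sub iΦ iΨ, Complex.sub_re, hΨre, sub_zero]
    rw [this]
    refine (Complex.abs_re_le_norm _).trans ?_
    refine (norm_integral_le_of_norm_le ?_ (Eventually.of_forall hdiff)).trans (le_of_eq ?_)
    · exact ((hMint.comp_add_right (Real.log x)).const_mul _).const_mul _
    · rw [integral_const_mul, integral_const_mul, hM]
      congr 2
      exact integral_add_right_eq_self (fun v : ℝ => Real.exp ((1 + a) * v) * Real.exp (-Real.sin θ * Real.exp (1 * v))) (Real.log x)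
  change ‖∫ z, h z‖ ≤ _
  rw [hsplit]
  have : (starRingEnd ℂ) (∫ z in Ioi 0, h z) + ∫ z in Ioi 0, h z = ((2 * (∫ z in Ioi 0, h z).re : ℝ) : ℂ) := by
    rw [add_comm, Complex.add_conj]
  rw [this, Complex.norm_real, Real.norm_eq_abs, abs_mul, abs_two]
  nlinarith


def gsPD (φ : ℝ → ℂ) : Prop := ∃ μ : ℕ → Measure ℝ, (∀ n, IsProbabilityMeasure (μ n)) ∧
  ∀ z, Tendsto (fun n => charFun (μ n) z) atTop (𝓝 (φ z))

lemma gs_gauss_nonneg (μ : Measure ℝ) [IsProbabilityMeasure μ] (ε x : ℝ) (hε : 0 < ε) :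
    0 ≤ ∫ z : ℝ, Complex.exp (-(Complex.I * z * x)) * charFun μ z * Complex.exp (-ε * (z:ℂ) ^ 2) := by
  have hg : Integrable (fun z : ℝ => Real.exp (-ε * z ^ 2)) := integrable_exp_neg_mul_sq hε
  have e1 : ∀ z : ℝ, Complex.exp (-(Complex.I * z * x)) * charFun μ z * Complex.exp (-ε * (z:ℂ) ^ 2)
      = ∫ y : ℝ, Complex.exp (Complex.I * ((y - x : ℝ) : ℂ) * z) * Complex.exp (-ε * (z:ℂ) ^ 2) ∂μ := by
    intro z
    rw [charFun_apply_real, integral_mul_const, ← integral_const_mul]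
    congr 2
    funext y
    rw [← Complex.exp_add]
    congr 1
    push_cast; ring
  simp_rw [e1]
  rw [integral_integral_swap]
  · simp_rw [fourierIntegral_gaussian (b := (ε:ℂ)) (by simpa using hε)]
    have e2 : ∀ y : ℝ, ((Real.pi:ℂ) / ε) ^ (1 / 2 : ℂ) * Complex.exp (-((y - x : ℝ) : ℂ) ^ 2 / (4 * ε))
        = (((Real.pi / ε) ^ (1/2 : ℝ) * Real.exp (-(y - x) ^ 2 / (4 * ε)) : ℝ) : ℂ) := by
      intro y
      rw [Complex.ofReal_mul, Complex.ofReal_cpow (by positivity)]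
      push_cast; rfl
    simp_rw [e2]
    rw [integral_complex_ofReal]
    rw [Complex.zero_le_real]
    exact integral_nonneg fun y => by positivity
  · have hc : Continuous (Function.uncurry fun (z y : ℝ) =>
        Complex.exp (Complex.I * ((y - x : ℝ) : ℂ) * z) * Complex.exp (-ε * (z:ℂ) ^ 2)) := by
      simp only [Function.uncurry_def]; fun_prop
    refine (hg.mul_prod (integrable_const (μ := μ) (1:ℝ))).mono' hc.aestronglyMeasurable
      (Eventually.of_forall fun p => ?_)
    simp only [Function.uncurry_def]
    rw [norm_mul, Complex.norm_exp, Complex.norm_exp]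
    have : (-(ε:ℂ) * (p.1:ℂ) ^ 2) = ((-ε * p.1 ^ 2 : ℝ) : ℂ) := by push_cast; rfl
    rw [this, Complex.ofReal_re]
    simp

lemma gs_pd_nonneg (φ : ℝ → ℂ) (h : gsPD φ) (hi : Integrable φ) (x : ℝ) :
    0 ≤ ∫ z : ℝ, Complex.exp (-(Complex.I * z * x)) * φ z := by
  obtain ⟨μ, hμ, hlim⟩ := h
  have ncexp : ∀ (ε z : ℝ), ‖Complex.exp (-ε * (z:ℂ) ^ 2)‖ = Real.exp (-ε * z ^ 2) := by
    intro ε z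
    have : (-(ε:ℂ) * (z:ℂ) ^ 2) = ((-ε * z ^ 2 : ℝ) : ℂ) := by push_cast; rfl
    rw [Complex.norm_exp, this, Complex.ofReal_re]
  have step : ∀ ε : ℝ, 0 < ε →
      0 ≤ ∫ z : ℝ, Complex.exp (-(Complex.I * z * x)) * φ z * Complex.exp (-ε * (z:ℂ) ^ 2) := by
    intro ε hε
    refine ge_of_tendsto' (x := atTop) (f := fun n => ∫ z : ℝ, Complex.exp (-(Complex.I * z * x)) * charFun (μ n) z * Complex.exp (-ε * (z:ℂ) ^ 2)) ?_ (fun n => gs_gauss_nonneg (μ n) ε x hε)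
    refine tendsto_integral_of_dominated_convergence (fun z => Real.exp (-ε * z ^ 2)) ?_
      (integrable_exp_neg_mul_sq hε) ?_ ?_
    · intro n
      have := (measurable_charFun (μ := μ n))
      exact Measurable.aestronglyMeasurable (by fun_prop)
    · intro n
      refine Eventually.of_forall fun z => ?_
      rw [norm_mul, norm_mul, gs_norm_e, one_mul, ncexp]
      have := norm_charFun_le_one (μ := μ n) z
      nlinarith [Real.exp_pos (-ε * z ^ 2)]
    · refine Eventually.of_forall fun z => ?_
      exact ((hlim z).const_mul _).mul_const _
  refine ge_of_tendsto' (x := atTop) (f := fun n : ℕ => ∫ z : ℝ, Complex.exp (-(Complex.I * z * x)) * φ z * Complex.exp (-((1 / ((n:ℝ) + 1) : ℝ) : ℂ) * (z:ℂ) ^ 2)) ?_ (fun n => step _ (by positivity))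
  refine tendsto_integral_of_dominated_convergence (fun z => ‖φ z‖) ?_ hi.norm ?_ ?_
  · intro n
    exact ((Measurable.aestronglyMeasurable (by fun_prop)).mul hi.aestronglyMeasurable).mul
      (Measurable.aestronglyMeasurable (by fun_prop))
  · intro n
    refine Eventually.of_forall fun z => ?_
    rw [norm_mul, norm_mul, gs_norm_e, one_mul, ncexp]
    have : Real.exp (-(1 / ((n:ℝ) + 1)) * z ^ 2) ≤ 1 := by
      rw [Real.exp_le_one_iff]
      have : 0 ≤ (1 / ((n:ℝ) + 1)) * z ^ 2 := by positivity
      linarith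
    nlinarith [norm_nonneg (φ z)]
  · refine Eventually.of_forall fun z => ?_
    have h1 : Tendsto (fun n : ℕ => ((1 / ((n:ℝ) + 1) : ℝ) : ℂ)) atTop (𝓝 ((0:ℝ):ℂ)) :=
      (Complex.continuous_ofReal.tendsto 0).comp tendsto_one_div_add_atTop_nhds_zero_nat
    have := ((h1.neg.mul_const ((z:ℂ) ^ 2)).cexp).const_mul (Complex.exp (-(Complex.I * z * x)) * φ z)
    simpa using this

lemma gs_pd_mul (φ ψ : ℝ → ℂ) (h : gsPD φ) (h' : gsPD ψ) : gsPD (fun z => φ z * ψ z) := by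
  obtain ⟨μ, hμ, hlim⟩ := h
  obtain ⟨ν, hν, hlim'⟩ := h'
  refine ⟨fun n => (μ n).conv (ν n), fun n => inferInstance, fun z => ?_⟩
  simp_rw [charFun_conv]
  exact (hlim z).mul (hlim' z)

lemma gs_pd_neg (φ : ℝ → ℂ) (h : gsPD φ) : gsPD (fun z => φ (-z)) := by
  obtain ⟨μ, hμ, hlim⟩ := h
  refine ⟨fun n => (μ n).map ((-1) * ·), fun n => Measure.isProbabilityMeasure_map (by fun_prop), fun z => ?_⟩
  simp_rw [charFun_map_mul, neg_one_mul]
  exact hlim (-z)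

lemma gs_pd_one : gsPD (fun _ => 1) :=
  ⟨fun _ => Measure.dirac 0, fun n => inferInstance, fun z => by simp [charFun_dirac]⟩

lemma gs_pow (μ : Measure ℝ) [IsProbabilityMeasure μ] (n : ℕ) : ∃ ν : Measure ℝ,
    IsProbabilityMeasure ν ∧ ∀ z, charFun ν z = charFun μ z ^ n := by
  induction n with
  | zero => exact ⟨Measure.dirac 0, inferInstance, fun z => by simp [charFun_dirac]⟩
  | succ k ih =>
    obtain ⟨ν, hν, h⟩ := ih
    exact ⟨ν.conv μ, inferInstance, fun z => by rw [charFun_conv, h, pow_succ]⟩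

lemma gs_pd_exp (μ : Measure ℝ) [IsProbabilityMeasure μ] (t : ℕ → ℝ) (ψ : ℝ → ℂ)
    (h : ∀ z, Tendsto (fun n : ℕ => (n:ℂ) * (charFun μ (t n * z) - 1)) atTop (𝓝 (ψ z))) :
    gsPD (fun z => Complex.exp (ψ z)) := by
  have : ∀ n : ℕ, ∃ ν : Measure ℝ, IsProbabilityMeasure ν ∧ ∀ z, charFun ν z = charFun μ (t n * z) ^ n := by
    intro n
    have : IsProbabilityMeasure (μ.map (t n * ·)) := Measure.isProbabilityMeasure_map (by fun_prop)
    obtain ⟨ν, h1, h2⟩ := gs_pow (μ.map (t n * ·)) n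
    exact ⟨ν, h1, fun z => by rw [h2, charFun_map_mul]⟩
  choose ν h1 h2 using this
  refine ⟨ν, h1, fun z => ?_⟩
  simp_rw [h2]
  have := Complex.tendsto_one_add_pow_exp_of_tendsto (h z)
  simpa using this


noncomputable def gsH (a κ : ℝ) (v : ℝ) : ℂ :=
  (1 - Complex.exp (Complex.I * (Real.exp v : ℝ)) + κ * (Complex.I * (Real.exp v : ℝ))) *
    ((Real.exp (-(a * v)) : ℝ) : ℂ)

lemma gs_H (a κ σ : ℝ) (h : (κ = 0 ∧ σ = 1 ∧ 0 < a ∧ a < 1) ∨ (κ = 1 ∧ σ = -1 ∧ 1 < a ∧ a < 2)) :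
    Integrable (gsH a κ) ∧ ∃ K : ℝ, 0 < K ∧
      ∫ v, gsH a κ v = ((σ * K : ℝ) : ℂ) * Complex.exp (-(Complex.I * (a * (Real.pi / 2)))) := by
  have hpi := Real.pi_pos
  let Φ : ℂ → ℂ := fun ζ => (1 - Complex.exp (-Complex.exp ζ) - κ * Complex.exp ζ) * Complex.exp (-(a * ζ))
  have hka : κ < a ∧ a < κ + 1 := by
    rcases h with ⟨h1, h2, h3, h4⟩ | ⟨h1, h2, h3, h4⟩ <;> subst h1 <;> constructor <;> linarith
  have n1 : ∀ v y : ℝ, ‖Complex.exp ((v:ℂ) - y * Complex.I)‖ = Real.exp v := by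
    intro v y; rw [Complex.norm_exp]; simp
  have n2 : ∀ v y : ℝ, ‖Complex.exp (-(a * ((v:ℂ) - y * Complex.I)))‖ = Real.exp (-(a * v)) := by
    intro v y; rw [Complex.norm_exp]; simp
  have core : ∀ w : ℂ, 0 ≤ w.re → ∀ v, ‖w‖ = Real.exp v → ‖1 - Complex.exp (-w) - κ * w‖ ≤ 3 * Real.exp (κ * v) ∧
      ‖1 - Complex.exp (-w) - κ * w‖ ≤ 3 * Real.exp ((κ + 1) * v) := by
    intro w hw v hv
    rcases h with ⟨h1, h2, h3, h4⟩ | ⟨h1, h2, h3, h4⟩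
    · subst h1
      have e : 1 - Complex.exp (-w) - ((0:ℝ):ℂ) * w = -(Complex.exp (-w) - 1) := by simp
      rw [e, norm_neg]
      simp only [zero_mul, Real.exp_zero, zero_add, one_mul]
      have := gs_exp_le w hw
      rw [hv] at this
      refine ⟨?_, by linarith [Real.exp_pos v]⟩
      have h5 : ‖Complex.exp (-w)‖ ≤ 1 := by rw [Complex.norm_exp]; simpa using hw
      calc _ ≤ ‖Complex.exp (-w)‖ + ‖(1:ℂ)‖ := norm_sub_le _ _
        _ ≤ _ := by simp; linarith
    · subst h1
      have e : 1 - Complex.exp (-w) - ((1:ℝ):ℂ) * w = -(Complex.exp (-w) - 1 + w) := by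
        simp; ring
      rw [e, norm_neg]
      have := gs_exp_le2 w hw
      rw [hv] at this
      have e2 : Real.exp ((1 + 1) * v) = Real.exp v ^ 2 := by rw [← Real.exp_nat_mul]; norm_num
      rw [e2, one_mul]; exact this
  obtain ⟨η, hη⟩ : ∃ η : ℝ, η = min (a - κ) (κ + 1 - a) := ⟨_, rfl⟩
  have hη0 : 0 < η := by rw [hη]; exact lt_min (by linarith) (by linarith)
  have hη1 : η ≤ a - κ := hη ▸ min_le_left _ _
  have hη2 : η ≤ κ + 1 - a := hη ▸ min_le_right _ _
  have hb : ∀ v y : ℝ, 0 ≤ y → y ≤ Real.pi / 2 → ‖Φ (v - y * Complex.I)‖ ≤ 3 * Real.exp (-η * |v|) := by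
    intro v y hy hy'
    have hw : 0 ≤ (Complex.exp ((v:ℂ) - y * Complex.I)).re := by
      rw [Complex.exp_re]; simp
      exact mul_nonneg (Real.exp_pos _).le (Real.cos_nonneg_of_mem_Icc ⟨by linarith, hy'⟩)
    obtain ⟨c1, c2⟩ := core _ hw v (n1 v y)
    simp only [Φ]
    rw [norm_mul, n2]
    rcases le_total 0 v with hv | hv
    · rw [abs_of_nonneg hv]
      calc _ ≤ 3 * Real.exp (κ * v) * Real.exp (-(a * v)) := by gcongr
        _ = 3 * Real.exp (κ * v + -(a * v)) := by rw [Real.exp_add]; ring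
        _ ≤ _ := by gcongr; nlinarith
    · rw [abs_of_nonpos hv]
      calc _ ≤ 3 * Real.exp ((κ + 1) * v) * Real.exp (-(a * v)) := by gcongr
        _ = 3 * Real.exp ((κ + 1) * v + -(a * v)) := by rw [Real.exp_add]; ring
        _ ≤ _ := by gcongr; nlinarith
  have hΦd : Differentiable ℂ Φ := by simp only [Φ]; fun_prop
  have hcont := hΦd.continuous
  have hshift := gs_line_shift Φ hΦd (Real.pi / 2) (by positivity) 3 η hη0 hb
  have eH : ∀ v : ℝ, Φ (v - (Real.pi / 2 : ℝ) * Complex.I) = gsH a κ v * Complex.exp (Complex.I * (a * (Real.pi / 2))) := by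
    intro v
    have e1 : Complex.exp ((v:ℂ) - (Real.pi / 2 : ℝ) * Complex.I) = -(Complex.I * (Real.exp v : ℝ)) := by
      rw [Complex.exp_sub, Complex.ofReal_exp]
      push_cast
      rw [Complex.exp_pi_div_two_mul_I, Complex.div_I]; ring
    have e2 : Complex.exp (-(a * ((v:ℂ) - (Real.pi / 2 : ℝ) * Complex.I))) =
        ((Real.exp (-(a * v)) : ℝ) : ℂ) * Complex.exp (Complex.I * (a * (Real.pi / 2))) := by
      rw [Complex.ofReal_exp, ← Complex.exp_add]
      congr 1
      push_cast; ring
    simp only [Φ, gsH]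
    rw [e1, e2, neg_neg]
    ring
  have eH' : ∀ v : ℝ, gsH a κ v = Φ (v - (Real.pi / 2 : ℝ) * Complex.I) * Complex.exp (-(Complex.I * (a * (Real.pi / 2)))) := by
    intro v
    rw [eH, mul_assoc, ← Complex.exp_add]; simp
  have i1 : Integrable (fun v : ℝ => Φ (v - (Real.pi / 2 : ℝ) * Complex.I)) := by
    refine (gs_int_abs 3 η hη0).mono' (by fun_prop) (Eventually.of_forall fun v => ?_)
    exact hb v _ (by positivity) le_rfl
  have i0 : Integrable (fun v : ℝ => Φ v) := by
    refine (gs_int_abs 3 η hη0).mono' (by fun_prop) (Eventually.of_forall fun v => ?_)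
    simpa using hb v 0 le_rfl (by positivity)
  let k : ℝ → ℝ := fun v => σ * ((1 - Real.exp (-Real.exp v) - κ * Real.exp v) * Real.exp (-(a * v)))
  have ek : ∀ v : ℝ, Φ v = ((σ * k v : ℝ) : ℂ) := by
    intro v
    have hss : σ * σ = 1 := by rcases h with ⟨h1, h2, h3, h4⟩ | ⟨h1, h2, h3, h4⟩ <;> rw [h2] <;> norm_num
    simp only [Φ, k]
    rw [← mul_assoc, hss, one_mul]
    push_cast; rfl
  have hkpos : ∀ v, 0 < k v := by
    intro v
    simp only [k]
    have hE := Real.exp_pos v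
    rw [← mul_assoc]
    refine mul_pos ?_ (Real.exp_pos _)
    rcases h with ⟨h1, h2, h3, h4⟩ | ⟨h1, h2, h3, h4⟩
    · rw [h1, h2]
      have : Real.exp (-Real.exp v) < 1 := by rw [Real.exp_lt_one_iff]; linarith
      linarith
    · rw [h1, h2]
      have := Real.add_one_lt_exp (x := -Real.exp v) (by linarith)
      linarith
  have ik : Integrable k := by
    have : Integrable (fun v : ℝ => σ * (Φ v).re) := i0.re.const_mul σ
    refine this.congr (Eventually.of_forall fun v => ?_)
    have hss : σ * σ = 1 := by rcases h with ⟨h1, h2, h3, h4⟩ | ⟨h1, h2, h3, h4⟩ <;> rw [h2] <;> norm_num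
    simp only [ek, Complex.ofReal_re]
    rw [← mul_assoc, hss, one_mul]
  refine ⟨?_, ∫ v, k v, ?_, ?_⟩
  · have := i1.mul_const (Complex.exp (-(Complex.I * (a * (Real.pi / 2)))))
    exact this.congr (Eventually.of_forall fun v => (eH' v).symm)
  · rw [integral_pos_iff_support_of_nonneg (fun v => (hkpos v).le) ik]
    have : Function.support k = univ := by
      ext v; simp [(hkpos v).ne']
    rw [this]; simp
  · simp_rw [eH']
    rw [integral_mul_const, ← hshift]
    simp_rw [ek]
    rw [integral_complex_ofReal, integral_const_mul]

lemma gs_expM (a : ℝ) (ha : 0 < a) (f : ℝ → ℂ) :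
    ∫ v, f v ∂(ProbabilityTheory.expMeasure a) = ∫ v in Ioi 0, ((a * Real.exp (-(a * v)) : ℝ) : ℂ) * f v := by
  have hm : Measurable (ProbabilityTheory.exponentialPDF a) :=
    (ProbabilityTheory.measurable_exponentialPDFReal a).ennreal_ofReal
  have e : ProbabilityTheory.expMeasure a = volume.withDensity (ProbabilityTheory.exponentialPDF a) := rfl
  rw [e, integral_withDensity_eq_integral_toReal_smul hm
    (Eventually.of_forall fun v => ENNReal.ofReal_lt_top), ← integral_Ici_eq_integral_Ioi,
    ← integral_indicator measurableSet_Ici]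
  congr 1
  funext v
  rw [ProbabilityTheory.exponentialPDF_eq]
  by_cases hv : 0 ≤ v
  · rw [if_pos hv, indicator_of_mem (by exact hv), ENNReal.toReal_ofReal (by positivity), Complex.real_smul]
  · rw [if_neg hv, indicator_of_notMem (by exact hv)]; simp

lemma gs_mu (a κ σ : ℝ) (h : (κ = 0 ∧ σ = 1 ∧ 0 < a ∧ a < 1) ∨ (κ = 1 ∧ σ = -1 ∧ 1 < a ∧ a < 2)) :
    ∃ μ : Measure ℝ, IsProbabilityMeasure μ ∧ ∃ m : ℝ, ∀ w : ℝ, 0 < w →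
      2 * (1 - charFun μ w) = a * (w ^ a : ℝ) * (∫ v in Ioi (Real.log w), gsH a κ v)
        + (1 - Complex.exp (-(Complex.I * w * m)) - Complex.I * w * m) := by
  have ha : 0 < a := by rcases h with ⟨h1, h2, h3, h4⟩ | ⟨h1, h2, h3, h4⟩ <;> linarith
  have hP0 := ProbabilityTheory.isProbabilityMeasure_expMeasure ha
  obtain ⟨P, hP⟩ : ∃ P : Measure ℝ, P = (ProbabilityTheory.expMeasure a).map Real.exp := ⟨_, rfl⟩
  have hPp : IsProbabilityMeasure P := by
    rw [hP]; exact Measure.isProbabilityMeasure_map (by fun_prop)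
  obtain ⟨m, hm⟩ : ∃ m : ℝ, m = κ * (a / (a - 1)) := ⟨_, rfl⟩
  refine ⟨(2⁻¹ : ENNReal) • P + (2⁻¹ : ENNReal) • Measure.dirac (-m), ⟨?_⟩, m, fun w hw => ?_⟩
  · simp [ENNReal.inv_two_add_inv_two]
  have hchar : 2 * charFun ((2⁻¹ : ENNReal) • P + (2⁻¹ : ENNReal) • Measure.dirac (-m)) w =
      (∫ v in Ioi 0, ((a * Real.exp (-(a * v)) : ℝ) : ℂ) * Complex.exp (w * (Real.exp v : ℝ) * Complex.I))
      + Complex.exp (-(Complex.I * w * m)) := by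
    have hbd : ∀ (ν : Measure ℝ) [IsFiniteMeasure ν], Integrable (fun x : ℝ => Complex.exp (w * x * Complex.I)) ν := by
      intro ν _
      refine Integrable.of_bound (Continuous.aestronglyMeasurable (by fun_prop)) 1 (Eventually.of_forall fun x => ?_)
      rw [Complex.norm_exp]; simp
    rw [charFun_apply_real, integral_add_measure ((hbd P).smul_measure (by simp)) ((hbd _).smul_measure (by simp)),
      integral_smul_measure, integral_smul_measure, integral_dirac, hP, integral_map (by fun_prop)
        (Continuous.aestronglyMeasurable (by fun_prop)), gs_expM a ha]
    have : (-(Complex.I * w * m)) = (w:ℂ) * ((-m : ℝ) : ℂ) * Complex.I := by push_cast; ring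
    rw [this]
    simp only [ENNReal.toReal_inv, ENNReal.toReal_ofNat, Complex.real_smul]
    push_cast
    ring
  have hid : IntegrableOn (fun v : ℝ => a * Real.exp (-(a * v))) (Ioi 0) := by
    have := (exp_neg_integrableOn_Ioi 0 ha).const_mul a
    simp only [neg_mul] at this
    exact this
  have hi1 : ∫ v in Ioi (0:ℝ), a * Real.exp (-(a * v)) = 1 := by
    rw [integral_const_mul]
    have := integral_exp_mul_Ioi (a := -a) (by linarith) 0
    simp only [neg_mul] at this
    rw [this]; simp; field_simp
  have hi3 : IntegrableOn (fun v : ℝ => κ * (a * Real.exp (-(a * v)) * Real.exp v)) (Ioi 0) ∧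
      ∫ v in Ioi (0:ℝ), κ * (a * Real.exp (-(a * v)) * Real.exp v) = m := by
    rcases h with ⟨h1, h2, h3, h4⟩ | ⟨h1, h2, h3, h4⟩
    · rw [h1, zero_mul] at hm
      simp [h1, hm]
    · have e : (fun v : ℝ => κ * (a * Real.exp (-(a * v)) * Real.exp v)) = fun v : ℝ => a * Real.exp (-(a - 1) * v) := by
        funext v
        rw [h1, one_mul, mul_assoc, ← Real.exp_add]; ring_nf
      rw [e]
      refine ⟨(exp_neg_integrableOn_Ioi 0 (by linarith)).const_mul a, ?_⟩
      rw [integral_const_mul, integral_exp_mul_Ioi (by linarith), hm, h1]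
      have : a - 1 ≠ 0 := by linarith
      simp only [mul_zero, Real.exp_zero, neg_div_neg_eq]
      ring
  have hshift : ∫ v in Ioi (Real.log w), gsH a κ v = ∫ v in Ioi 0, gsH a κ (v + Real.log w) := by
    have := (measurePreserving_add_right volume (Real.log w)).setIntegral_preimage_emb
      (measurableEmbedding_addRight (Real.log w)) (gsH a κ) (Ioi (Real.log w))
    rw [← this]
    congr 2
    ext v; simp
  have hH : ∀ v : ℝ, a * (w ^ a : ℝ) * gsH a κ (v + Real.log w) =
      ((a * Real.exp (-(a * v)) : ℝ) : ℂ) - ((a * Real.exp (-(a * v)) : ℝ) : ℂ) * Complex.exp (w * (Real.exp v : ℝ) * Complex.I)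
      + Complex.I * w * ((κ * (a * Real.exp (-(a * v)) * Real.exp v) : ℝ) : ℂ) := by
    intro v
    have e1 : Real.exp (v + Real.log w) = Real.exp v * w := by rw [Real.exp_add, Real.exp_log hw]
    have e2 : w ^ a * Real.exp (-(a * (v + Real.log w))) = Real.exp (-(a * v)) := by
      rw [Real.rpow_def_of_pos hw, ← Real.exp_add]; ring_nf
    have e2' : ((w ^ a : ℝ) : ℂ) * ((Real.exp (-(a * (v + Real.log w))) : ℝ) : ℂ) = ((Real.exp (-(a * v)) : ℝ) : ℂ) := by
      rw [← Complex.ofReal_mul, e2]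
    have e3 : Complex.I * ((Real.exp v * w : ℝ) : ℂ) = w * (Real.exp v : ℝ) * Complex.I := by push_cast; ring
    unfold gsH
    rw [e1, e3]
    simp only [Complex.ofReal_mul]
    rw [← e2']
    ring
  have i1 : IntegrableOn (fun v : ℝ => ((a * Real.exp (-(a * v)) : ℝ) : ℂ)) (Ioi 0) := hid.ofReal
  have i2 : IntegrableOn (fun v : ℝ => ((a * Real.exp (-(a * v)) : ℝ) : ℂ) * Complex.exp (w * (Real.exp v : ℝ) * Complex.I)) (Ioi 0) := by
    refine Integrable.mono' hid (Continuous.aestronglyMeasurable (by fun_prop)) (Eventually.of_forall fun v => ?_)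
    rw [norm_mul, Complex.norm_real, Real.norm_of_nonneg (by positivity), Complex.norm_exp]
    simp
  have i3 : IntegrableOn (fun v : ℝ => Complex.I * w * ((κ * (a * Real.exp (-(a * v)) * Real.exp v) : ℝ) : ℂ)) (Ioi 0) :=
    Integrable.const_mul hi3.1.ofReal _
  have i12 : IntegrableOn (fun v : ℝ => ((a * Real.exp (-(a * v)) : ℝ) : ℂ) - ((a * Real.exp (-(a * v)) : ℝ) : ℂ) * Complex.exp (w * (Real.exp v : ℝ) * Complex.I)) (Ioi 0) :=
    Integrable.sub i1 i2
  rw [mul_sub, hchar, hshift, ← integral_const_mul]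
  simp_rw [hH]
  rw [integral_add i12 i3, integral_sub i1 i2, integral_const_mul (Complex.I * w), integral_complex_ofReal, integral_complex_ofReal,
    hi1, hi3.2]
  push_cast
  ring

lemma gs_lim (a κ σ : ℝ) (h : (κ = 0 ∧ σ = 1 ∧ 0 < a ∧ a < 1) ∨ (κ = 1 ∧ σ = -1 ∧ 1 < a ∧ a < 2)) :
    ∃ μ : Measure ℝ, IsProbabilityMeasure μ ∧ ∃ K : ℝ, 0 < K ∧
      Tendsto (fun w : ℝ => ((w ^ (-a) : ℝ) : ℂ) * (1 - charFun μ w)) (𝓝[>] 0)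
        (𝓝 (((σ * K : ℝ) : ℂ) * Complex.exp (-(Complex.I * (a * (Real.pi / 2)))))) := by
  have ha : 0 < a ∧ a < 2 := by rcases h with ⟨h1, h2, h3, h4⟩ | ⟨h1, h2, h3, h4⟩ <;> constructor <;> linarith
  obtain ⟨hi, K, hK, hH⟩ := gs_H a κ σ h
  obtain ⟨μ, hμ, m, hm⟩ := gs_mu a κ σ h
  refine ⟨μ, hμ, a / 2 * K, by have := ha.1; positivity, ?_⟩
  have t1 : Tendsto (fun w : ℝ => ∫ v in Ioi (Real.log w), gsH a κ v) (𝓝[>] 0) (𝓝 (∫ v, gsH a κ v)) :=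
    (aecover_Ioi (μ := volume) Real.tendsto_log_nhdsGT_zero).integral_tendsto_of_countably_generated hi
  have t2 : Tendsto (fun w : ℝ => ((w ^ (-a) : ℝ) : ℂ) * (1 - Complex.exp (-(Complex.I * w * m)) - Complex.I * w * m)) (𝓝[>] 0) (𝓝 0) := by
    have hz : Tendsto (fun w : ℝ => w ^ (2 - a) * (3 * m ^ 2)) (𝓝[>] 0) (𝓝 0) := by
      have : Tendsto (fun w : ℝ => w ^ (2 - a)) (𝓝[>] 0) (𝓝 ((0:ℝ) ^ (2 - a))) :=
        ((Real.continuousAt_rpow_const 0 (2 - a) (Or.inr (by linarith [ha.2]))).tendsto).mono_left nhdsWithin_le_nhds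
      rw [Real.zero_rpow (by linarith [ha.2])] at this
      simpa using this.mul_const (3 * m ^ 2)
    refine squeeze_zero_norm' ?_ hz
    filter_upwards [self_mem_nhdsWithin] with w hw
    have hw : 0 < w := hw
    have := (gs_exp_le2 (Complex.I * w * m) (by simp)).2
    have e : 1 - Complex.exp (-(Complex.I * w * m)) - Complex.I * w * m = -(Complex.exp (-(Complex.I * w * m)) - 1 + Complex.I * w * m) := by ring
    have e2 : ‖Complex.I * (w:ℂ) * m‖ ^ 2 = w ^ 2 * m ^ 2 := by
      simp [mul_pow]
    rw [e2] at this
    rw [e, norm_mul, norm_neg, Complex.norm_real, Real.norm_of_nonneg (by positivity)]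
    calc _ ≤ w ^ (-a) * (3 * (w ^ 2 * m ^ 2)) := by gcongr
      _ = _ := by
        rw [sub_eq_add_neg, Real.rpow_add hw, Real.rpow_two]; ring
  have t3 := ((t1.const_mul (a:ℂ)).add t2).const_mul (1/2 : ℂ)
  have e : (1/2 : ℂ) * (a * (∫ v, gsH a κ v) + 0) = ((σ * (a / 2 * K) : ℝ) : ℂ) * Complex.exp (-(Complex.I * (a * (Real.pi / 2)))) := by
    rw [hH]; push_cast; ring
  rw [e] at t3
  refine t3.congr' ?_
  filter_upwards [self_mem_nhdsWithin] with w hw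
  have hw : 0 < w := hw
  have h1 := hm w hw
  have h2 : ((w ^ (-a) : ℝ) : ℂ) * ((w ^ a : ℝ) : ℂ) = 1 := by
    rw [← Complex.ofReal_mul, ← Real.rpow_add hw]; simp
  linear_combination (-(1/2 : ℂ) * ((w ^ (-a) : ℝ) : ℂ)) * h1 - (1/2 : ℂ) * a * (∫ v in Ioi (Real.log w), gsH a κ v) * h2

noncomputable def gsE (a c z : ℝ) : ℂ :=
  Complex.exp (-(((c * |z| ^ a : ℝ) : ℂ) * Complex.exp (-(Complex.I * (a * (Real.pi / 2)) * (Real.sign z : ℝ)))))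

lemma gs_pd_E (a κ σ c : ℝ) (hc : 0 ≤ c)
    (h : (κ = 0 ∧ σ = 1 ∧ 0 < a ∧ a < 1) ∨ (κ = 1 ∧ σ = -1 ∧ 1 < a ∧ a < 2)) :
    gsPD (gsE a (σ * c)) := by
  have ha : 0 < a := by rcases h with ⟨h1, h2, h3, h4⟩ | ⟨h1, h2, h3, h4⟩ <;> linarith
  rcases hc.eq_or_lt with rfl | hc
  · have : gsE a (σ * 0) = fun _ => 1 := by funext z; simp [gsE]
    rw [this]; exact gs_pd_one
  obtain ⟨μ, hμ, K, hK, hlim⟩ := gs_lim a κ σ h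
  let t : ℕ → ℝ := fun n => (c / K / n) ^ (1 / a)
  have ht0 : Tendsto t atTop (𝓝 0) := by
    have h1 : Tendsto (fun n : ℕ => c / K / (n:ℝ)) atTop (𝓝 0) := tendsto_const_div_atTop_nhds_zero_nat _
    have h2 := ((Real.continuousAt_rpow_const 0 (1 / a) (Or.inr (by positivity))).tendsto).comp h1
    rwa [Real.zero_rpow (by positivity)] at h2
  have hpos : ∀ z : ℝ, 0 < z → Tendsto (fun n : ℕ => (n:ℂ) * (charFun μ (t n * z) - 1)) atTop
      (𝓝 (-(((σ * c * z ^ a : ℝ) : ℂ) * Complex.exp (-(Complex.I * (a * (Real.pi / 2))))))) := by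
    intro z hz
    have hw : Tendsto (fun n : ℕ => t n * z) atTop (𝓝[>] 0) := by
      rw [tendsto_nhdsWithin_iff]
      refine ⟨by simpa using ht0.mul_const z, ?_⟩
      filter_upwards [eventually_gt_atTop 0] with n hn
      have : (0:ℝ) < n := by exact_mod_cast hn
      have : 0 < t n := by simp only [t]; positivity
      exact mul_pos this hz
    have t1 := (hlim.comp hw).const_mul (-((c / K * z ^ a : ℝ) : ℂ))
    have e : -((c / K * z ^ a : ℝ) : ℂ) * (((σ * K : ℝ) : ℂ) * Complex.exp (-(Complex.I * (a * (Real.pi / 2))))) =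
        -(((σ * c * z ^ a : ℝ) : ℂ) * Complex.exp (-(Complex.I * (a * (Real.pi / 2))))) := by
      have : (K:ℂ) ≠ 0 := by exact_mod_cast hK.ne'
      push_cast
      field_simp
    rw [e] at t1
    refine t1.congr' ?_
    filter_upwards [eventually_gt_atTop 0] with n hn
    have hn : (0:ℝ) < n := by exact_mod_cast hn
    have e2 : c / K * z ^ a * (t n * z) ^ (-a) = n := by
      simp only [t]
      rw [Real.mul_rpow (by positivity) hz.le, ← Real.rpow_mul (by positivity)]
      have : 1 / a * -a = -1 := by field_simp
      rw [this, Real.rpow_neg_one, Real.rpow_neg hz.le]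
      have : z ^ a ≠ 0 := by positivity
      field_simp
    have e3 : ((c / K * z ^ a : ℝ) : ℂ) * (((t n * z) ^ (-a) : ℝ) : ℂ) = (n:ℂ) := by
      rw [← Complex.ofReal_mul, e2]; simp
    simp only [Function.comp]
    linear_combination (charFun μ (t n * z) - 1) * e3
  refine gs_pd_exp μ t _ fun z => ?_
  rcases lt_trichotomy z 0 with hz | hz | hz
  · have h1 := hpos (-z) (by linarith)
    have h2 := (Complex.continuous_conj.tendsto _).comp h1
    rw [Real.sign_of_neg hz, abs_of_neg hz]
    have e : (starRingEnd ℂ) (-(((σ * c * (-z) ^ a : ℝ) : ℂ) * Complex.exp (-(Complex.I * (a * (Real.pi / 2)))))) =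
        -(((σ * c * (-z) ^ a : ℝ) : ℂ) * Complex.exp (-(Complex.I * (a * (Real.pi / 2)) * ((-1 : ℝ) : ℂ)))) := by
      have h22 : (starRingEnd ℂ) 2 = 2 := map_ofNat _ 2
      rw [map_neg, map_mul, Complex.conj_ofReal, ← Complex.exp_conj]
      simp [h22]
    rw [e] at h2
    refine h2.congr fun n => ?_
    simp only [Function.comp, map_mul, map_sub, map_one, Complex.conj_natCast]
    rw [← charFun_neg]; simp
  · simp [hz, ha.ne']
  · rw [Real.sign_of_pos hz, abs_of_pos hz]
    simpa using hpos z hz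


lemma gs_trig (a δ s : ℝ) (hs : s = 1 ∨ s = -1) (h : Real.sin (a * Real.pi) ≠ 0) :
    ((Real.sin ((a + δ) * (Real.pi / 2)) / Real.sin (a * Real.pi) : ℝ) : ℂ) * Complex.exp (-(Complex.I * (a * (Real.pi / 2)) * (s : ℝ)))
    + ((Real.sin ((a - δ) * (Real.pi / 2)) / Real.sin (a * Real.pi) : ℝ) : ℂ) * Complex.exp (-(Complex.I * (a * (Real.pi / 2)) * ((-s : ℝ) : ℂ)))
    = Complex.exp (-(Complex.I * δ * ((Real.pi / 2 : ℝ) : ℂ) * (s : ℝ))) := by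
  have key : ∀ t : ℝ, Complex.exp (-(Complex.I * t * (s : ℝ))) = ((Real.cos t : ℝ) : ℂ) - Complex.I * s * ((Real.sin t : ℝ) : ℂ) := by
    intro t
    have e : -(Complex.I * t * (s : ℝ)) = ((-(t * s) : ℝ) : ℂ) * Complex.I := by push_cast; ring
    rw [e, Complex.exp_mul_I, ← Complex.ofReal_cos, ← Complex.ofReal_sin, Real.cos_neg, Real.sin_neg]
    rcases hs with rfl | rfl
    · simp; ring
    · simp; ring
  have k2 : ∀ t : ℝ, Complex.exp (-(Complex.I * t * ((-s : ℝ) : ℂ))) = ((Real.cos t : ℝ) : ℂ) + Complex.I * s * ((Real.sin t : ℝ) : ℂ) := by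
    intro t
    have := key (-t)
    rw [Real.cos_neg, Real.sin_neg] at this
    have e : -(Complex.I * t * ((-s : ℝ) : ℂ)) = -(Complex.I * ((-t : ℝ) : ℂ) * (s : ℝ)) := by push_cast; ring
    rw [e, this]; push_cast; ring
  have ea : (a * (Real.pi / 2) : ℂ) = ((a * (Real.pi / 2) : ℝ) : ℂ) := by push_cast; ring
  have ed : Complex.I * δ * ((Real.pi / 2 : ℝ) : ℂ) = Complex.I * ((δ * (Real.pi / 2) : ℝ) : ℂ) := by push_cast; ring
  rw [ea, ed, key, k2, key]
  set A := a * (Real.pi / 2) with hA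
  set D := δ * (Real.pi / 2) with hD
  have e1 : (a + δ) * (Real.pi / 2) = A + D := by rw [hA, hD]; ring
  have e2 : (a - δ) * (Real.pi / 2) = A - D := by rw [hA, hD]; ring
  have e3 : a * Real.pi = 2 * A := by rw [hA]; ring
  rw [e3] at h
  rw [e1, e2, e3]
  have c1 : (Real.sin (A + D) / Real.sin (2 * A) + Real.sin (A - D) / Real.sin (2 * A)) * Real.cos A = Real.cos D := by
    rw [← add_div, div_mul_eq_mul_div, div_eq_iff h, Real.sin_add, Real.sin_sub, Real.sin_two_mul]; ring
  have c2 : (Real.sin (A + D) / Real.sin (2 * A) - Real.sin (A - D) / Real.sin (2 * A)) * Real.sin A = Real.sin D := by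
    rw [← sub_div, div_mul_eq_mul_div, div_eq_iff h, Real.sin_add, Real.sin_sub, Real.sin_two_mul]; ring
  rw [← c1, ← c2]
  push_cast
  ring

lemma gs_pd_phi (a δ : ℝ) (ha : 0 < a ∧ a ≤ 2 ∧ a ≠ 1)
    (hδ : |δ| ≤ min a (2 - a)) : gsPD (gsPhi a δ) := by
  obtain ⟨ha0, ha2, ha1⟩ := ha
  obtain ⟨hd1, hd2⟩ := le_min_iff.1 hδ
  rw [abs_le] at hd1 hd2
  have hpi := Real.pi_pos
  rcases ha2.eq_or_lt with rfl | ha2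
  · have hd : δ = 0 := by linarith [hd2.1, hd2.2]
    subst hd
    refine ⟨fun _ => ProbabilityTheory.gaussianReal 0 2, fun _ => inferInstance, fun z => ?_⟩
    have : gsPhi 2 0 z = charFun (ProbabilityTheory.gaussianReal 0 2) z := by
      rw [ProbabilityTheory.charFun_gaussianReal]
      unfold gsPhi
      congr 1
      simp
    rw [this]; exact tendsto_const_nhds
  obtain ⟨κ, σ, h, hss, hsin⟩ : ∃ κ σ : ℝ, ((κ = 0 ∧ σ = 1 ∧ 0 < a ∧ a < 1) ∨ (κ = 1 ∧ σ = -1 ∧ 1 < a ∧ a < 2)) ∧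
      σ * σ = 1 ∧ 0 < σ * Real.sin (a * Real.pi) := by
    rcases ha1.lt_or_gt with h | h
    · refine ⟨0, 1, Or.inl ⟨rfl, rfl, ha0, h⟩, by norm_num, ?_⟩
      rw [one_mul]; apply Real.sin_pos_of_pos_of_lt_pi <;> nlinarith
    · refine ⟨1, -1, Or.inr ⟨rfl, rfl, h, ha2⟩, by norm_num, ?_⟩
      have : Real.sin (a * Real.pi) = - Real.sin ((a - 1) * Real.pi) := by
        rw [← Real.sin_add_pi]; ring_nf
      rw [this]
      have : 0 < Real.sin ((a - 1) * Real.pi) := by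
        apply Real.sin_pos_of_pos_of_lt_pi <;> nlinarith
      linarith
  have hne : Real.sin (a * Real.pi) ≠ 0 := by
    intro h; rw [h] at hsin; simp at hsin
  have hs1 : 0 ≤ Real.sin ((a + δ) * (Real.pi / 2)) := by
    apply Real.sin_nonneg_of_nonneg_of_le_pi <;> nlinarith
  have hs2 : 0 ≤ Real.sin ((a - δ) * (Real.pi / 2)) := by
    apply Real.sin_nonneg_of_nonneg_of_le_pi <;> nlinarith
  have hσ : σ ≠ 0 := by rintro rfl; simp at hss
  have hc : ∀ y : ℝ, σ * (y / (σ * Real.sin (a * Real.pi))) = y / Real.sin (a * Real.pi) := by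
    intro y; field_simp
  have p1 := gs_pd_E a κ σ _ (div_nonneg hs1 hsin.le) h
  have p2 := gs_pd_neg _ (gs_pd_E a κ σ _ (div_nonneg hs2 hsin.le) h)
  rw [hc] at p1 p2
  have p := gs_pd_mul _ _ p1 p2
  convert p using 1
  funext z
  rcases eq_or_ne z 0 with rfl | hz
  · simp [gsPhi, gsE, Real.zero_rpow ha0.ne']
  have hsg : Real.sign z = 1 ∨ Real.sign z = -1 := by
    rcases hz.lt_or_gt with h | h
    · right; exact Real.sign_of_neg h
    · left; exact Real.sign_of_pos h
  unfold gsPhi gsE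
  rw [← Complex.exp_add, ← gs_trig a δ _ hsg hne, abs_neg, Real.sign_neg]
  congr 1
  push_cast
  ring

lemma gs_main (a δ : ℝ) (ha : 0 < a ∧ a ≤ 2 ∧ a ≠ 1)
    (hδ : |δ| ≤ min a (2 - a)) :
    ∃ c : ℝ, 0 < c ∧ ∀ x : ℝ,
      0 ≤ G1 a δ 1 x ∧ G1 a δ 1 x ≤ ((c / (1 + |x| ^ (1 + a)) : ℝ) : ℂ) := by
  have hpd := gs_pd_phi a δ ha hδ
  obtain ⟨ha0, ha2, ha1⟩ := ha
  obtain ⟨hd1, hd2⟩ := le_min_iff.1 hδ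
  have hd : |δ| < 1 := by
    rcases ha1.lt_or_gt with h | h <;> linarith
  have hi := gs_phi_int a δ ha0 hd
  obtain ⟨M, hM0, hM⟩ := gs_decay a δ ha0 ha2 hd
  obtain ⟨N, hN0, hN⟩ := gs_decay a (-δ) ha0 ha2 (by rwa [abs_neg])
  have hpi := Real.pi_pos
  set C := ∫ z, ‖gsPhi a δ z‖ with hC
  have hC0 : 0 ≤ C := integral_nonneg fun _ => norm_nonneg _
  have b0 : ∀ x : ℝ, ‖∫ z : ℝ, Complex.exp (-(Complex.I * z * x)) * gsPhi a δ z‖ ≤ C := by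
    intro x
    refine (norm_integral_le_integral_norm _).trans (le_of_eq ?_)
    congr 1; funext z
    rw [norm_mul, gs_norm_e, one_mul]
  have b1 : ∀ x : ℝ, x ≠ 0 → ‖∫ z : ℝ, Complex.exp (-(Complex.I * z * x)) * gsPhi a δ z‖ ≤ (M + N) * |x| ^ (-(1 + a)) := by
    intro x hx
    have hr : 0 ≤ |x| ^ (-(1 + a)) := by positivity
    rcases hx.lt_or_gt with h | h
    · have e : ∫ z : ℝ, Complex.exp (-(Complex.I * z * x)) * gsPhi a δ z = ∫ z : ℝ, Complex.exp (-(Complex.I * z * ((-x : ℝ) : ℂ))) * gsPhi a (-δ) z := by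
        rw [← integral_neg_eq_self]
        congr 1; funext z
        rw [gs_phi_neg]; congr 2; push_cast; ring
      have := hN (-x) (by linarith)
      rw [e]
      rw [abs_of_neg h] at hr ⊢
      nlinarith
    · have := hM x h
      rw [abs_of_pos h] at hr ⊢
      nlinarith
  refine ⟨C + M + N + 1, by linarith, fun x => ?_⟩
  have h0 : 0 ≤ G1 a δ 1 x := by
    rw [gs_G1, Complex.real_smul]
    exact mul_nonneg (by rw [Complex.zero_le_real]; positivity) (gs_pd_nonneg _ hpd hi x)
  refine ⟨h0, ?_⟩
  rw [← Complex.norm_of_nonneg' h0, Complex.real_le_real, le_div_iff₀ (by positivity), gs_G1, norm_smul,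
    Real.norm_of_nonneg (by positivity)]
  set J := ‖∫ z : ℝ, Complex.exp (-(Complex.I * z * x)) * gsPhi a δ z‖ with hJ
  have hJ0 : 0 ≤ J := norm_nonneg _
  have h1 : 1 / (2 * Real.pi) ≤ 1 := by
    rw [div_le_one (by positivity)]; linarith [Real.pi_gt_three]
  have h2 : J * |x| ^ (1 + a) ≤ M + N := by
    rcases eq_or_ne x 0 with hx | hx
    · rw [hx, abs_zero, Real.zero_rpow (by linarith)]; linarith
    · have hxp : 0 < |x| := abs_pos.2 hx
      have := mul_le_mul_of_nonneg_right (b1 x hx) (by positivity : 0 ≤ |x| ^ (1 + a))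
      rwa [mul_assoc, ← Real.rpow_add hxp, neg_add_cancel, Real.rpow_zero, mul_one] at this
  have h3 : J * (1 + |x| ^ (1 + a)) ≤ C + M + N := by
    have := b0 x; rw [mul_add, mul_one]; linarith
  have h4 : 0 ≤ J * (1 + |x| ^ (1 + a)) := by positivity
  rw [mul_assoc]
  calc _ ≤ 1 * (J * (1 + |x| ^ (1 + a))) := by gcongr
    _ ≤ _ := by linarith


theorem stmt8 (a δ : ℝ) (ha : 0 < a ∧ a ≤ 2 ∧ a ≠ 1)
    (hδ : |δ| ≤ min a (2 - a)) :
    ∃ c : ℝ, 0 < c ∧ ∀ x : ℝ,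
      0 ≤ G1 a δ 1 x ∧ G1 a δ 1 x ≤ ((c / (1 + |x| ^ (1 + a)) : ℝ) : ℂ) := 
  gs_main a δ ha hδ
end

section
/- Let T > 0 and let g : [0,T] → ℝ_+ be a nonnegative function with ∫_0^T g(s) ds < ∞. Then there is a sequence (a_n)_{n∈ℕ} of nonnegative real numbers such that for all p ≥ 1, Σ_{n=1}^∞ (a_n)^{1/p} < ∞, and with the following property: if (f_n)_{n∈ℕ} is a sequence of nonnegative functions on [0,T] and k_1, k_2 ≥ 0 are such that for all n ≥ 1 and 0 ≤ t ≤ T, f_n(t) ≤ k_1 + ∫_0^t (k_2 + f_{n−1}(s)) g(t−s) ds, and if sup_{0≤s≤T} f_0(s) = c < ∞, then for all n ≥ 1 and t ∈ [0,T], f_n(t) ≤ k_1 + (k_1 + k_2) Σ_{i=1}^{n−1} a_i + (k_2 + c) a_n. In particular sup_{n≥0} sup_{0≤t≤T} f_n(t) < ∞, and if k_1 = k_2 = 0 then Σ_{n≥0} (f_n(t))^{1/p} converges uniformly on [0,T] for every p ≥ 1. -/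
open MeasureTheory

lemma exists_lam (T : ℝ) (g : ℝ → ℝ)
    (hgint : IntegrableOn g (Set.Icc (0 : ℝ) T)) :
    ∃ l : ℝ, 0 ≤ l ∧ ∫ s in Set.Icc (0 : ℝ) T, Real.exp (-(l * s)) * g s ≤ 1 / 2 := by
  have h : Filter.Tendsto (fun n : ℕ => ∫ s in Set.Icc (0 : ℝ) T, Real.exp (-((n : ℝ) * s)) * g s)
      Filter.atTop (nhds (∫ s in Set.Icc (0 : ℝ) T, (0 : ℝ))) := by
    apply tendsto_integral_of_dominated_convergence (fun s => ‖g s‖)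
    · intro n
      apply AEStronglyMeasurable.mul _ hgint.aestronglyMeasurable
      exact (by fun_prop : Continuous fun s : ℝ => Real.exp (-((n : ℝ) * s))).aestronglyMeasurable
    · exact hgint.norm
    · intro n
      filter_upwards [ae_restrict_mem measurableSet_Icc] with s hs
      rw [norm_mul, Real.norm_eq_abs, Real.abs_exp]
      have : Real.exp (-((n : ℝ) * s)) ≤ 1 := by
        apply Real.exp_le_one_iff.2
        have := mul_nonneg (Nat.cast_nonneg (α := ℝ) n) hs.1
        linarith
      exact mul_le_of_le_one_left (norm_nonneg _) this
    · have h0 : ∀ᵐ s ∂(volume.restrict (Set.Icc (0 : ℝ) T)), s ≠ 0 :=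
        ae_restrict_of_ae (Measure.ae_ne volume 0)
      filter_upwards [ae_restrict_mem measurableSet_Icc, h0] with s hs hs0
      have hs' : 0 < s := lt_of_le_of_ne hs.1 (Ne.symm hs0)
      have h1 : Filter.Tendsto (fun n : ℕ => (n : ℝ) * s) Filter.atTop Filter.atTop :=
        tendsto_natCast_atTop_atTop.atTop_mul_const hs'
      have h2 := Real.tendsto_exp_neg_atTop_nhds_zero.comp h1
      simpa using h2.mul_const (g s)
  simp only [integral_zero] at h
  obtain ⟨n, hn⟩ := (h.eventually (gt_mem_nhds (by norm_num : (0 : ℝ) < 1 / 2))).exists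
  exact ⟨n, Nat.cast_nonneg n, hn.le⟩

lemma conv_bound (T : ℝ) (g : ℝ → ℝ)
    (hg : ∀ s ∈ Set.Icc (0 : ℝ) T, 0 ≤ g s)
    (hgint : IntegrableOn g (Set.Icc (0 : ℝ) T)) (l : ℝ)
    (hl : ∫ s in Set.Icc (0 : ℝ) T, Real.exp (-(l * s)) * g s ≤ 1 / 2)
    (h : ℝ → ℝ) (D : ℝ) (hD : 0 ≤ D) (h0 : ∀ t ∈ Set.Icc (0 : ℝ) T, 0 ≤ h t)
    (hh : ∀ t ∈ Set.Icc (0 : ℝ) T, h t ≤ D * Real.exp (l * t))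
    (t : ℝ) (ht : t ∈ Set.Icc (0 : ℝ) T) :
    ∫ s in (0 : ℝ)..t, h s * g (t - s) ≤ D / 2 * Real.exp (l * t) := by
  have hsub : Set.Icc 0 t ⊆ Set.Icc 0 T := Set.Icc_subset_Icc_right ht.2
  have hI : IntegrableOn (fun s => Real.exp (-(l * s)) * g s) (Set.Icc 0 T) :=
    IntegrableOn.continuousOn_mul (by fun_prop) hgint isCompact_Icc
  have hIt : IntervalIntegrable (fun s => Real.exp (-(l * s)) * g s) volume 0 t := by
    rw [intervalIntegrable_iff_integrableOn_Icc_of_le ht.1]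
    exact hI.mono_set hsub
  have hJ : IntervalIntegrable
      (fun s => D * Real.exp (l * t) * (Real.exp (-(l * (t - s))) * g (t - s))) volume 0 t := by
    have := (hIt.comp_sub_left t).symm
    simp only [sub_zero, sub_self] at this
    exact this.const_mul _
  calc ∫ s in (0 : ℝ)..t, h s * g (t - s)
      ≤ ∫ s in (0 : ℝ)..t, D * Real.exp (l * t) * (Real.exp (-(l * (t - s))) * g (t - s)) := by
        rw [intervalIntegral.integral_of_le ht.1, intervalIntegral.integral_of_le ht.1]
        apply integral_mono_of_nonneg
        · filter_upwards [ae_restrict_mem measurableSet_Ioc] with s hs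
          exact mul_nonneg (h0 s ⟨hs.1.le, hs.2.trans ht.2⟩)
            (hg _ ⟨by linarith [hs.2], by linarith [hs.1, ht.2]⟩)
        · exact (intervalIntegrable_iff_integrableOn_Ioc_of_le ht.1).1 hJ
        · filter_upwards [ae_restrict_mem measurableSet_Ioc] with s hs
          have e : D * Real.exp (l * t) * (Real.exp (-(l * (t - s))) * g (t - s))
              = D * Real.exp (l * s) * g (t - s) := by
            have : Real.exp (l * s) = Real.exp (l * t) * Real.exp (-(l * (t - s))) := by
              rw [← Real.exp_add]; congr 1; ring
            rw [this]; ring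
          show h s * g (t - s) ≤ _
          rw [e]
          exact mul_le_mul_of_nonneg_right (hh s ⟨hs.1.le, hs.2.trans ht.2⟩)
            (hg _ ⟨by linarith [hs.2], by linarith [hs.1, ht.2]⟩)
    _ = D * Real.exp (l * t) * ∫ s in (0 : ℝ)..t, Real.exp (-(l * s)) * g s := by
        rw [intervalIntegral.integral_const_mul,
          intervalIntegral.integral_comp_sub_left (fun s => Real.exp (-(l * s)) * g s)]
        simp
    _ ≤ D * Real.exp (l * t) * (1 / 2) := by
        apply mul_le_mul_of_nonneg_left _ (by positivity)
        refine le_trans ?_ hl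
        rw [intervalIntegral.integral_of_le ht.1, ← integral_Icc_eq_integral_Ioc]
        apply setIntegral_mono_set hI
        · filter_upwards [ae_restrict_mem measurableSet_Icc] with s hs
          exact mul_nonneg (Real.exp_pos _).le (hg s hs)
        · exact hsub.eventuallyLE
    _ = _ := by ring

/-- Gronwall-type lemma (Dalang, Lemma 15). -/
theorem stmt10 (T : ℝ) (hT : 0 < T) (g : ℝ → ℝ)
    (hg : ∀ s ∈ Set.Icc (0 : ℝ) T, 0 ≤ g s)
    (hgint : IntegrableOn g (Set.Icc (0 : ℝ) T)) :
    ∃ a : ℕ → ℝ, (∀ n, 0 ≤ a n) ∧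
      (∀ p : ℝ, 1 ≤ p → Summable fun n => a n ^ (1 / p)) ∧
      ∀ (f : ℕ → ℝ → ℝ) (k₁ k₂ c : ℝ), 0 ≤ k₁ → 0 ≤ k₂ →
        (∀ n, ∀ t ∈ Set.Icc (0 : ℝ) T, 0 ≤ f n t) →
        (∀ n, 1 ≤ n → ∀ t ∈ Set.Icc (0 : ℝ) T,
          f n t ≤ k₁ + ∫ s in (0 : ℝ)..t, (k₂ + f (n - 1) s) * g (t - s)) →
        IsLUB (f 0 '' Set.Icc (0 : ℝ) T) c →
        ((∀ n, 1 ≤ n → ∀ t ∈ Set.Icc (0 : ℝ) T,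
            f n t ≤ k₁ + (k₁ + k₂) * (∑ i ∈ Finset.Icc 1 (n - 1), a i) + (k₂ + c) * a n) ∧
          (∃ C : ℝ, ∀ n, ∀ t ∈ Set.Icc (0 : ℝ) T, f n t ≤ C) ∧
          (k₁ = 0 → k₂ = 0 → ∀ p : ℝ, 1 ≤ p →
            TendstoUniformlyOn (fun N t => ∑ i ∈ Finset.range N, f i t ^ (1 / p))
              (fun t => ∑' i, f i t ^ (1 / p)) Filter.atTop (Set.Icc (0 : ℝ) T))) := by
  obtain ⟨l, hl0, hl⟩ := exists_lam T g hgint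
  set E := Real.exp (l * T) with hE
  have hE1 : 1 ≤ E := Real.one_le_exp (by positivity)
  have hEt : ∀ t ∈ Set.Icc (0 : ℝ) T, Real.exp (l * t) ≤ E := fun t ht =>
    Real.exp_le_exp.2 (mul_le_mul_of_nonneg_left ht.2 hl0)
  have hsum : ∀ p : ℝ, 1 ≤ p → Summable fun n : ℕ => (E * (1 / 2 : ℝ) ^ n) ^ (1 / p) := by
    intro p hp
    have hp' : 0 < 1 / p := by positivity
    have e : ∀ n : ℕ, (E * (1 / 2 : ℝ) ^ n) ^ (1 / p)
        = E ^ (1 / p) * ((1 / 2 : ℝ) ^ (1 / p)) ^ n := by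
      intro n
      rw [Real.mul_rpow (by positivity) (by positivity), ← Real.rpow_natCast,
        ← Real.rpow_natCast, ← Real.rpow_mul (by norm_num), ← Real.rpow_mul (by norm_num), mul_comm (n : ℝ)]
    simp_rw [e]
    exact (summable_geometric_of_lt_one (by positivity)
      (Real.rpow_lt_one (by norm_num) (by norm_num) hp')).mul_left _
  refine ⟨fun n => E * (1 / 2) ^ n, fun n => by positivity, hsum, ?_⟩
  intro f k₁ k₂ c hk₁ hk₂ hf hrec hc
  have hf0 : ∀ t ∈ Set.Icc (0 : ℝ) T, f 0 t ≤ c := fun t ht => hc.1 ⟨t, ht, rfl⟩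
  have h0T : (0 : ℝ) ∈ Set.Icc (0 : ℝ) T := ⟨le_rfl, hT.le⟩
  have hc0 : 0 ≤ c := (hf 0 0 h0T).trans (hf0 0 h0T)
  -- main induction
  have step : ∀ n, ∀ D : ℝ, 0 ≤ D →
      (∀ t ∈ Set.Icc (0 : ℝ) T, k₂ + f n t ≤ D * Real.exp (l * t)) →
      ∀ t ∈ Set.Icc (0 : ℝ) T, f (n + 1) t ≤ k₁ + D / 2 * Real.exp (l * t) := by
    intro n D hD h t ht
    have h1 := hrec (n + 1) (by omega) t ht
    have h2 := conv_bound T g hg hgint l hl (fun s => k₂ + f n s) D hD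
      (fun t ht => add_nonneg hk₂ (hf n t ht)) h t ht
    simp only [Nat.add_sub_cancel] at h1
    linarith
  set D : ℕ → ℝ := fun n =>
    (k₁ + k₂) * (∑ i ∈ Finset.range n, (1 / 2 : ℝ) ^ i) + (k₂ + c) * (1 / 2) ^ n with hDdef
  have hD0 : ∀ n, 0 ≤ D n := fun n => by simp only [hDdef]; positivity
  have hDs : ∀ n, D (n + 1) = (k₁ + k₂) + D n / 2 := by
    intro n
    simp only [hDdef, Finset.sum_range_succ', pow_succ, ← Finset.sum_mul]
    ring
  have main : ∀ n, ∀ t ∈ Set.Icc (0 : ℝ) T, k₂ + f n t ≤ D n * Real.exp (l * t) := by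
    intro n
    induction n with
    | zero =>
      intro t ht
      have h1 : 1 ≤ Real.exp (l * t) := Real.one_le_exp (mul_nonneg hl0 ht.1)
      have : D 0 = k₂ + c := by simp [hDdef]
      rw [this]
      nlinarith [hf0 t ht]
    | succ n ih =>
      intro t ht
      have h1 : 1 ≤ Real.exp (l * t) := Real.one_le_exp (mul_nonneg hl0 ht.1)
      have := step n (D n) (hD0 n) ih t ht
      rw [hDs]
      nlinarith
  have bound : ∀ n, 1 ≤ n → ∀ t ∈ Set.Icc (0 : ℝ) T,
      f n t ≤ k₁ + (k₁ + k₂) * (∑ i ∈ Finset.Icc 1 (n - 1), E * (1 / 2 : ℝ) ^ i)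
        + (k₂ + c) * (E * (1 / 2) ^ n) := by
    intro n hn t ht
    obtain ⟨m, rfl⟩ : ∃ m, n = m + 1 := ⟨n - 1, by omega⟩
    have h1 := step m (D m) (hD0 m) (main m) t ht
    have h2 : D m / 2 * Real.exp (l * t) ≤ D m / 2 * E :=
      mul_le_mul_of_nonneg_left (hEt t ht) (by linarith [hD0 m])
    have h3 : ∑ i ∈ Finset.Icc 1 (m + 1 - 1), E * (1 / 2 : ℝ) ^ i
        = E * (∑ i ∈ Finset.range m, (1 / 2 : ℝ) ^ i) / 2 := by
      rw [← Finset.mul_sum, Nat.add_sub_cancel, Finset.range_eq_Ico, mul_div_assoc,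
        Finset.sum_div, ← Finset.Ico_add_one_right_eq_Icc,
        ← Finset.sum_Ico_add' (fun i => (1 / 2 : ℝ) ^ i) 0 m 1]
      simp only [pow_succ]
      congr 1
      apply Finset.sum_congr rfl
      intro i _
      ring
    rw [h3]
    have h4 : D m / 2 * E = (k₁ + k₂) * (E * (∑ i ∈ Finset.range m, (1 / 2 : ℝ) ^ i) / 2)
        + (k₂ + c) * (E * (1 / 2) ^ (m + 1)) := by
      simp only [hDdef, pow_succ]
      ring
    linarith
  refine ⟨bound, ?_, ?_⟩
  · refine ⟨(2 * (k₁ + k₂) + (k₂ + c)) * E, ?_⟩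
    intro n t ht
    have hDb : D n ≤ 2 * (k₁ + k₂) + (k₂ + c) := by
      induction n with
      | zero => simp only [hDdef]; simp; linarith
      | succ n ih => rw [hDs]; linarith
    have h1 := main n t ht
    have h2 : D n * Real.exp (l * t) ≤ (2 * (k₁ + k₂) + (k₂ + c)) * E :=
      mul_le_mul hDb (hEt t ht) (Real.exp_pos _).le (by positivity)
    linarith
  · intro h1 h2 p hp
    subst h1 h2
    apply tendstoUniformlyOn_tsum_nat (u := fun n => c ^ (1 / p) * (E * (1 / 2 : ℝ) ^ n) ^ (1 / p))
      ((hsum p hp).mul_left _)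
    intro n t ht
    rw [Real.norm_of_nonneg (Real.rpow_nonneg (hf n t ht) _),
      ← Real.mul_rpow hc0 (by positivity)]
    apply Real.rpow_le_rpow (hf n t ht) _ (by positivity)
    have h3 := main n t ht
    have h4 : D n = c * (1 / 2) ^ n := by simp [hDdef]
    rw [h4] at h3
    have h5 : c * (1 / 2) ^ n * Real.exp (l * t) ≤ c * (1 / 2) ^ n * E :=
      mul_le_mul_of_nonneg_left (hEt t ht) (by positivity)
    linarith
end

section
/- Let α = (α_1,…,α_d) be a multi-index with α_i ∈ (0,2]∖{1}, let κ > 0, T > 0, η ∈ (0,1), and let μ be a nonnegative measure on ℝ^d satisfying (H_η^α). Then for every β ∈ (0, (1−η)/2), ∫_0^T ∫_{ℝ^d} exp(−2rκ S_α(ξ)) (S_α(ξ))^{2β} μ(dξ) dr < ∞. -/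
open MeasureTheory

/-- `S_α(ξ) = ∑ i |ξ_i|^{α_i}`. -/
noncomputable def Sa {d : ℕ} (α : Fin d → ℝ) (ξ : Fin d → ℝ) : ℝ :=
  ∑ i, |ξ i| ^ (α i)

lemma key_bound (κ T η β r s : ℝ) (hκ : 0 < κ) (hη : 0 < η) (hβ : 0 < β)
    (hp : 2 * β + η < 1) (hr : 0 < r) (hrT : r ≤ T) (hs : 0 ≤ s) :
    Real.exp (-(2 * r * κ * s)) * s ^ (2 * β) ≤
      ((1 + T + 1 / (2 * κ)) * r ^ (-(2 * β + η))) * (1 + s) ^ (-η) := by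
  have h1s : 0 < 1 + s := by linarith
  have hx : 0 ≤ r * s := by positivity
  have hE : 0 < Real.exp (-(2 * r * κ * s)) := Real.exp_pos _
  have hE1 : Real.exp (-(2 * r * κ * s)) ≤ 1 := by
    rw [Real.exp_le_one_iff]
    have : 0 ≤ 2 * r * κ * s := by positivity
    linarith
  have hxE : (r * s) * Real.exp (-(2 * r * κ * s)) ≤ 1 / (2 * κ) := by
    rw [Real.exp_neg, ← div_eq_mul_inv, div_le_div_iff₀ (Real.exp_pos _) (by positivity)]
    have := Real.add_one_le_exp (2 * r * κ * s)
    nlinarith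
  have hpow : r ^ (2 * β + η) * (1 + s) ^ (2 * β + η) ≤ 1 + T + r * s := by
    rw [← Real.mul_rpow hr.le h1s.le]
    calc (r * (1 + s)) ^ (2 * β + η) ≤ (1 + T + r * s) ^ (2 * β + η) :=
          Real.rpow_le_rpow (by positivity) (by nlinarith) (by linarith)
      _ ≤ (1 + T + r * s) ^ (1 : ℝ) :=
          Real.rpow_le_rpow_of_exponent_le (by linarith) hp.le
      _ = _ := Real.rpow_one _
  have hmain : Real.exp (-(2 * r * κ * s)) * (r ^ (2 * β + η) * (1 + s) ^ (2 * β + η))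
      ≤ 1 + T + 1 / (2 * κ) := by
    calc _ ≤ Real.exp (-(2 * r * κ * s)) * (1 + T + r * s) :=
          mul_le_mul_of_nonneg_left hpow hE.le
      _ ≤ _ := by nlinarith
  have hs' : s ^ (2 * β) ≤ (1 + s) ^ (2 * β) :=
    Real.rpow_le_rpow hs (by linarith) (by linarith)
  have hr0 : r ^ (2 * β + η) * r ^ (-(2 * β + η)) = 1 := by
    rw [← Real.rpow_add hr]; simp
  have hs0 : (1 + s) ^ (2 * β + η) * (1 + s) ^ (-η) = (1 + s) ^ (2 * β) := by
    rw [← Real.rpow_add h1s]; congr 1; ring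
  calc _ ≤ Real.exp (-(2 * r * κ * s)) * (1 + s) ^ (2 * β) :=
        mul_le_mul_of_nonneg_left hs' hE.le
    _ = Real.exp (-(2 * r * κ * s)) * (r ^ (2 * β + η) * (1 + s) ^ (2 * β + η))
          * (r ^ (-(2 * β + η)) * (1 + s) ^ (-η)) := by
        rw [← hs0]
        linear_combination (-Real.exp (-(2 * r * κ * s)) * (1 + s) ^ (2 * β + η)
          * (1 + s) ^ (-η)) * hr0
    _ ≤ (1 + T + 1 / (2 * κ)) * (r ^ (-(2 * β + η)) * (1 + s) ^ (-η)) :=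
        mul_le_mul_of_nonneg_right hmain (by positivity)
    _ = _ := by ring

theorem stmt11 {d : ℕ} (hd : 0 < d) (α : Fin d → ℝ)
    (hα : ∀ i, 0 < α i ∧ α i ≤ 2 ∧ α i ≠ 1)
    (κ T η : ℝ) (hκ : 0 < κ) (hT : 0 < T) (hη : η ∈ Set.Ioo (0 : ℝ) 1)
    (μ : Measure (Fin d → ℝ))
    (hμ : (∫⁻ ξ, ENNReal.ofReal ((1 + Sa α ξ) ^ (-η)) ∂μ) < ⊤)
    (β : ℝ) (hβ : β ∈ Set.Ioo (0 : ℝ) ((1 - η) / 2)) :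
    (∫⁻ r in Set.Ioc (0 : ℝ) T,
      ∫⁻ ξ, ENNReal.ofReal (Real.exp (-(2 * r * κ * Sa α ξ)) * Sa α ξ ^ (2 * β)) ∂μ) < ⊤ := by
  obtain ⟨hη0, hη1⟩ := hη
  obtain ⟨hβ0, hβ1⟩ := hβ
  have hp : 2 * β + η < 1 := by linarith
  have hS : ∀ ξ, 0 ≤ Sa α ξ := fun ξ =>
    Finset.sum_nonneg fun i _ => Real.rpow_nonneg (abs_nonneg _) _
  have hint : IntegrableOn (fun r : ℝ => (1 + T + 1 / (2 * κ)) * r ^ (-(2 * β + η)))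
      (Set.Ioc 0 T) volume := by
    rw [← intervalIntegrable_iff_integrableOn_Ioc_of_le hT.le]
    exact (intervalIntegral.intervalIntegrable_rpow' (by linarith)).const_mul _
  have hfin := hint.lintegral_lt_top
  refine lt_of_le_of_lt (b := ∫⁻ r in Set.Ioc (0 : ℝ) T,
    ENNReal.ofReal ((1 + T + 1 / (2 * κ)) * r ^ (-(2 * β + η))) *
      ∫⁻ ξ, ENNReal.ofReal ((1 + Sa α ξ) ^ (-η)) ∂μ) ?_ ?_
  · refine setLIntegral_mono' measurableSet_Ioc fun r hr => ?_
    rw [← lintegral_const_mul' _ _ ENNReal.ofReal_ne_top]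
    refine lintegral_mono fun ξ => ?_
    have hr0 : 0 < r := hr.1
    rw [← ENNReal.ofReal_mul (by positivity)]
    exact ENNReal.ofReal_le_ofReal
      (key_bound κ T η β r _ hκ hη0 hβ0 hp hr.1 hr.2 (hS ξ))
  · rw [lintegral_mul_const' _ _ hμ.ne]
    exact ENNReal.mul_lt_top hfin hμ
end

section
/- Let α = (α_1,…,α_d) be a multi-index with α_i ∈ (0,2]∖{1}, let κ > 0, T > 0, η ∈ (0,1), and let μ be a nonnegative measure on ℝ^d satisfying (H_η^α). Then for every β ∈ (0, 1−η) there exists a constant c > 0 such that for all h ∈ [0,T], ∫_{ℝ^d} (∫_0^h exp(−2κ r S_α(ξ)) dr) μ(dξ) ≤ c (h + h^β). -/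
open MeasureTheory

theorem aux_int (κ s h : ℝ) (hκ : 0 < κ) (hs : 0 ≤ s) (hh : 0 ≤ h) :
    0 ≤ (∫ r in (0 : ℝ)..h, Real.exp (-(2 * κ * r * s))) ∧
    (∫ r in (0 : ℝ)..h, Real.exp (-(2 * κ * r * s))) ≤ h ∧
    s * (∫ r in (0 : ℝ)..h, Real.exp (-(2 * κ * r * s))) ≤ 1 / (2 * κ) := by
  refine ⟨intervalIntegral.integral_nonneg hh (fun r _ => (Real.exp_pos _).le), ?_, ?_⟩
  · have h1 : (∫ r in (0 : ℝ)..h, Real.exp (-(2 * κ * r * s))) ≤ ∫ r in (0 : ℝ)..h, (1 : ℝ) := by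
      apply intervalIntegral.integral_mono_on hh
      · exact Continuous.intervalIntegrable (by fun_prop) _ _
      · exact Continuous.intervalIntegrable (by fun_prop) _ _
      · intro r hr
        have hr0 := hr.1
        rw [Real.exp_le_one_iff]
        have : 0 ≤ 2 * κ * r * s := by positivity
        linarith
    simpa using h1
  · have h2 := intervalIntegral.mul_integral_comp_mul_left (f := Real.exp) (a := 0) (b := h)
      (-(2 * κ * s))
    rw [integral_exp] at h2
    have h3 : (∫ r in (0 : ℝ)..h, Real.exp (-(2 * κ * s) * r)) =
        ∫ r in (0 : ℝ)..h, Real.exp (-(2 * κ * r * s)) := by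
      congr 1; ext r; congr 1; ring
    rw [h3] at h2
    rw [le_div_iff₀ (by positivity)]
    have h4 := Real.exp_pos (-(2 * κ * s) * h)
    simp only [mul_zero, Real.exp_zero] at h2
    linarith

theorem aux_pt (κ T η β s h : ℝ) (hκ : 0 < κ) (hβ : 0 < β) (hβη : β < 1 - η) (hη : 0 < η)
    (hs : 0 ≤ s) (hh : 0 ≤ h) (hT : h ≤ T) :
    (∫ r in (0 : ℝ)..h, Real.exp (-(2 * κ * r * s))) ≤
      (T + 1 / (2 * κ)) ^ (1 - β) * h ^ β * (1 + s) ^ (-η) := by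
  obtain ⟨h0, h1, h2⟩ := aux_int κ s h hκ hs hh
  set I := ∫ r in (0 : ℝ)..h, Real.exp (-(2 * κ * r * s))
  have hK : 0 ≤ T + 1 / (2 * κ) := by have := hh.trans hT; positivity
  have h3 : I ≤ (T + 1 / (2 * κ)) * (1 + s)⁻¹ := by
    rw [← div_eq_mul_inv, le_div_iff₀ (by positivity)]
    linarith
  have hb : 0 ≤ 1 - β := by linarith
  calc I = I ^ (1 - β) * I ^ β := by
        rw [← Real.rpow_add_of_nonneg h0 hb hβ.le]; simp
    _ ≤ ((T + 1 / (2 * κ)) * (1 + s)⁻¹) ^ (1 - β) * h ^ β := by gcongr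
    _ = (T + 1 / (2 * κ)) ^ (1 - β) * h ^ β * (1 + s) ^ (-(1 - β)) := by
        rw [Real.mul_rpow hK (by positivity), Real.inv_rpow (by positivity),
          Real.rpow_neg (by positivity)]
        ring
    _ ≤ _ := by
        gcongr
        · linarith
        · linarith

theorem stmt12 {d : ℕ} (hd : 0 < d) (α : Fin d → ℝ)
    (hα : ∀ i, 0 < α i ∧ α i ≤ 2 ∧ α i ≠ 1)
    (κ T η : ℝ) (hκ : 0 < κ) (hT : 0 < T) (hη : η ∈ Set.Ioo (0 : ℝ) 1)
    (μ : Measure (Fin d → ℝ))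
    (hμ : (∫⁻ ξ, ENNReal.ofReal ((1 + Sa α ξ) ^ (-η)) ∂μ) < ⊤)
    (β : ℝ) (hβ : β ∈ Set.Ioo (0 : ℝ) (1 - η)) :
    ∃ c : ℝ, 0 < c ∧ ∀ h ∈ Set.Icc (0 : ℝ) T,
      (∫⁻ ξ, ENNReal.ofReal (∫ r in (0 : ℝ)..h, Real.exp (-(2 * κ * r * Sa α ξ))) ∂μ) ≤
        ENNReal.ofReal (c * (h + h ^ β)) := by
  obtain ⟨hη0, hη1⟩ := hη
  obtain ⟨hβ0, hβ1⟩ := hβ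
  set M := ∫⁻ ξ, ENNReal.ofReal ((1 + Sa α ξ) ^ (-η)) ∂μ with hM
  have hK : 0 ≤ (T + 1 / (2 * κ)) ^ (1 - β) := by positivity
  refine ⟨(T + 1 / (2 * κ)) ^ (1 - β) * M.toReal + 1, by positivity, ?_⟩
  rintro h ⟨hh, hhT⟩
  have hhb : 0 ≤ h ^ β := Real.rpow_nonneg hh _
  calc _ ≤ ∫⁻ ξ, ENNReal.ofReal ((T + 1 / (2 * κ)) ^ (1 - β) * h ^ β) *
        ENNReal.ofReal ((1 + Sa α ξ) ^ (-η)) ∂μ := by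
        apply lintegral_mono
        intro ξ
        dsimp only
        rw [← ENNReal.ofReal_mul (by positivity)]
        apply ENNReal.ofReal_le_ofReal
        have hs : 0 ≤ Sa α ξ := Finset.sum_nonneg fun i _ => Real.rpow_nonneg (abs_nonneg _) _
        exact aux_pt κ T η β _ h hκ hβ0 hβ1 hη0 hs hh hhT
    _ = ENNReal.ofReal ((T + 1 / (2 * κ)) ^ (1 - β) * h ^ β) * M := by
        rw [lintegral_const_mul' _ _ ENNReal.ofReal_ne_top]
    _ = ENNReal.ofReal ((T + 1 / (2 * κ)) ^ (1 - β) * h ^ β * M.toReal) := by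
        rw [ENNReal.ofReal_mul (q := M.toReal) (by positivity), ENNReal.ofReal_toReal hμ.ne]
    _ ≤ _ := by
        apply ENNReal.ofReal_le_ofReal
        have hA : 0 ≤ (T + 1 / (2 * κ)) ^ (1 - β) * M.toReal := by positivity
        nlinarith [mul_nonneg hA hh]
end

section
/- Let α = (α_1,…,α_d) be a multi-index with α_i ∈ (0,2]∖{1}, set α_0 = min_{1≤i≤d} α_i, let κ > 0, T > 0, η ∈ (0,1), and let μ be a nonnegative measure on ℝ^d satisfying (H_η^α). Let K be a compact subset of ℝ^d and let β satisfy 0 < β < min{1/2, α_0(1−η)/2}. Then there exists a constant c > 0 such that for all z ∈ K, ∫_{ℝ^d} ∫_0^T exp(−2κ r S_α(ξ)) (1 − cos(2π⟨ξ,z⟩)) dr μ(dξ) ≤ c (‖z‖_∞ + ‖z‖_∞^{2β}), where ‖z‖_∞ = max_{1≤i≤d} |z_i|. -/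
open MeasureTheory

theorem aux_cos {p : ℝ} (hp : 0 < p) (hp1 : p ≤ 1) (x : ℝ) :
    1 - Real.cos x ≤ 2 * |x| ^ p := by
  rcases le_total 1 |x| with h | h
  · have := Real.one_le_rpow h hp.le
    have := Real.neg_one_le_cos x
    linarith
  · have h1 := Real.one_sub_sq_div_two_le_cos (x := x)
    have h0 := abs_nonneg x
    have h2 : |x| ≤ |x| ^ p := by
      rcases h0.eq_or_lt with h' | h'
      · rw [← h']; positivity
      · simpa using Real.rpow_le_rpow_of_exponent_ge h' h hp1
    have h3 : x ^ 2 ≤ |x| := by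
      rw [← sq_abs]; nlinarith
    linarith

theorem aux_exp {κ T S : ℝ} (hκ : 0 < κ) (hT : 0 < T) (hS : 0 ≤ S) :
    (∫ r in (0 : ℝ)..T, Real.exp (-(2 * κ * r * S))) ≤ (T + 1 / (2 * κ)) * (1 + S)⁻¹ := by
  set I := ∫ r in (0 : ℝ)..T, Real.exp (-(2 * κ * r * S)) with hI
  have h1 : I ≤ T := by
    have : I ≤ ∫ r in (0 : ℝ)..T, (1 : ℝ) := by
      apply intervalIntegral.integral_mono_on hT.le
      · exact (by fun_prop : Continuous _).intervalIntegrable _ _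
      · simp
      · intro r hr
        have := hr.1
        rw [Real.exp_le_one_iff]
        have : 0 ≤ 2 * κ * r * S := by positivity
        linarith
    simpa using this
  have h2 : I * (2 * κ * S) ≤ 1 := by
    rw [hI, ← intervalIntegral.integral_mul_const]
    have : ∫ r in (0 : ℝ)..T, Real.exp (-(2 * κ * r * S)) * (2 * κ * S)
        = (fun r => -Real.exp (-(2 * κ * r * S))) T - (fun r => -Real.exp (-(2 * κ * r * S))) 0 := by
      apply intervalIntegral.integral_eq_sub_of_hasDerivAt
      · intro r _
        have h := ((((hasDerivAt_id r).const_mul (2 * κ)).mul_const S).neg.exp).neg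
        convert h using 1
        · rfl
        · simp
      · exact (by fun_prop : Continuous _).intervalIntegrable _ _
    rw [this]
    have := Real.exp_pos (-(2 * κ * T * S))
    simp
    linarith
  rw [← div_eq_mul_inv, le_div_iff₀ (by positivity)]
  have h3 : I * S ≤ 1 / (2 * κ) := by
    rw [le_div_iff₀ (by positivity)]; linarith
  linarith

theorem aux_Sa_nonneg {d : ℕ} (α ξ : Fin d → ℝ) : 0 ≤ Sa α ξ :=
  Finset.sum_nonneg fun i _ => Real.rpow_nonneg (abs_nonneg _) _

theorem aux_coord {d : ℕ} (α ξ : Fin d → ℝ) (a : ℝ) (ha : 0 < a) (h : ∀ i, a ≤ α i) (i : Fin d) :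
    |ξ i| ≤ (1 + Sa α ξ) ^ (1 / a) := by
  have hS := aux_Sa_nonneg α ξ
  have hi : 0 < α i := ha.trans_le (h i)
  have h1 : |ξ i| ^ α i ≤ 1 + Sa α ξ := by
    have : |ξ i| ^ α i ≤ Sa α ξ := Finset.single_le_sum (f := fun i => |ξ i| ^ α i)
      (fun i _ => Real.rpow_nonneg (abs_nonneg _) _) (Finset.mem_univ i)
    linarith
  calc |ξ i| = (|ξ i| ^ α i) ^ (1 / α i) := by
        rw [← Real.rpow_mul (abs_nonneg _), mul_one_div_cancel hi.ne', Real.rpow_one]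
    _ ≤ (1 + Sa α ξ) ^ (1 / α i) := by
        apply Real.rpow_le_rpow (Real.rpow_nonneg (abs_nonneg _) _) h1; positivity
    _ ≤ _ := by
        apply Real.rpow_le_rpow_of_exponent_le (by linarith)
        exact one_div_le_one_div_of_le ha (h i)

theorem aux_main {d : ℕ} (α : Fin d → ℝ) (a : ℝ) (ha : 0 < a) (h : ∀ i, a ≤ α i)
    (κ T η : ℝ) (hκ : 0 < κ) (hT : 0 < T) (p : ℝ) (hp : 0 < p) (hp1 : p ≤ 1)
    (hpa : p ≤ a * (1 - η)) (ξ z : Fin d → ℝ) :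
    (∫ r in (0 : ℝ)..T, Real.exp (-(2 * κ * r * Sa α ξ)) *
              (1 - Real.cos (2 * Real.pi * ∑ i, ξ i * z i))) ≤
      ((T + 1 / (2 * κ)) * (2 * (2 * Real.pi * d) ^ p) * ‖z‖ ^ p) * (1 + Sa α ξ) ^ (-η) := by
  have hS := aux_Sa_nonneg α ξ
  set S := Sa α ξ
  have hS1 : 0 < 1 + S := by linarith
  rw [intervalIntegral.integral_mul_const]
  have hsum : |2 * Real.pi * ∑ i, ξ i * z i| ≤ (2 * Real.pi * d) * ‖z‖ * (1 + S) ^ (1 / a) := by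
    rw [abs_mul, abs_of_pos Real.two_pi_pos]
    have : |∑ i, ξ i * z i| ≤ ∑ i : Fin d, (1 + S) ^ (1 / a) * ‖z‖ := by
      refine (Finset.abs_sum_le_sum_abs _ _).trans (Finset.sum_le_sum fun i _ => ?_)
      rw [abs_mul]
      exact mul_le_mul (aux_coord α ξ a ha h i) (norm_le_pi_norm z i) (abs_nonneg _)
        (by positivity)
    simp only [Finset.sum_const, Finset.card_univ, Fintype.card_fin, nsmul_eq_mul] at this
    calc _ ≤ 2 * Real.pi * (d * ((1 + S) ^ (1 / a) * ‖z‖)) := by gcongr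
      _ = _ := by ring
  have hcos : 1 - Real.cos (2 * Real.pi * ∑ i, ξ i * z i) ≤
      2 * ((2 * Real.pi * d) ^ p * ‖z‖ ^ p * (1 + S) ^ (1 - η)) := by
    refine (aux_cos hp hp1 _).trans ?_
    gcongr
    refine (Real.rpow_le_rpow (abs_nonneg _) hsum hp.le).trans ?_
    rw [Real.mul_rpow (by positivity) (by positivity), Real.mul_rpow (by positivity) (by positivity),
      ← Real.rpow_mul hS1.le]
    gcongr
    · linarith
    · rw [one_div_mul_eq_div, div_le_iff₀ ha]; linarith
  have hc0 : 0 ≤ 1 - Real.cos (2 * Real.pi * ∑ i, ξ i * z i) := by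
    linarith [Real.cos_le_one (2 * Real.pi * ∑ i, ξ i * z i)]
  refine (mul_le_mul (aux_exp hκ hT hS) hcos hc0 (by positivity)).trans (le_of_eq ?_)
  have : (1 + S) ^ (-η) = (1 + S)⁻¹ * (1 + S) ^ (1 - η) := by
    rw [← Real.rpow_neg_one, ← Real.rpow_add hS1]; congr 1; ring
  rw [this]; ring

theorem stmt13 {d : ℕ} (hd : 0 < d) (α : Fin d → ℝ)
    (hα : ∀ i, 0 < α i ∧ α i ≤ 2 ∧ α i ≠ 1)
    (α₀ : ℝ) (hα₀ : α₀ = ⨅ i, α i)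
    (κ T η : ℝ) (hκ : 0 < κ) (hT : 0 < T) (hη : η ∈ Set.Ioo (0 : ℝ) 1)
    (μ : Measure (Fin d → ℝ))
    (hμ : (∫⁻ ξ, ENNReal.ofReal ((1 + Sa α ξ) ^ (-η)) ∂μ) < ⊤)
    (K : Set (Fin d → ℝ)) (hK : IsCompact K)
    (β : ℝ) (hβ : 0 < β ∧ β < min (1 / 2) (α₀ * (1 - η) / 2)) :
    ∃ c : ℝ, 0 < c ∧ ∀ z ∈ K,
      (∫⁻ ξ, ENNReal.ofReal
          (∫ r in (0 : ℝ)..T,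
            Real.exp (-(2 * κ * r * Sa α ξ)) *
              (1 - Real.cos (2 * Real.pi * ∑ i, ξ i * z i))) ∂μ) ≤
        ENNReal.ofReal (c * (‖z‖ + ‖z‖ ^ (2 * β))) := by
  have hne : Nonempty (Fin d) := ⟨⟨0, hd⟩⟩
  have hle : ∀ i, α₀ ≤ α i := fun i => hα₀ ▸ ciInf_le (Set.finite_range α).bddBelow i
  have hpos : 0 < α₀ := by
    obtain ⟨i, hi⟩ := exists_eq_ciInf_of_finite (f := α)
    rw [hα₀, ← hi]; exact (hα i).1
  obtain ⟨hβ0, hβ1⟩ := hβ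
  obtain ⟨hβ1, hβ2⟩ := lt_min_iff.1 hβ1
  set I := ∫⁻ ξ, ENNReal.ofReal ((1 + Sa α ξ) ^ (-η)) ∂μ with hI
  set M := (T + 1 / (2 * κ)) * (2 * (2 * Real.pi * d) ^ (2 * β)) with hM
  have hM0 : 0 ≤ M := by positivity
  refine ⟨M * I.toReal + 1, by positivity, fun z _ => ?_⟩
  have hz : 0 ≤ ‖z‖ ^ (2 * β) := by positivity
  calc _ ≤ ∫⁻ ξ, ENNReal.ofReal (M * ‖z‖ ^ (2 * β)) * ENNReal.ofReal ((1 + Sa α ξ) ^ (-η)) ∂μ := by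
        refine lintegral_mono fun ξ => ?_
        rw [← ENNReal.ofReal_mul (by positivity)]
        exact ENNReal.ofReal_le_ofReal (aux_main α α₀ hpos hle κ T η hκ hT (2 * β) (by linarith)
          (by linarith) (by linarith) ξ z)
    _ = ENNReal.ofReal (M * ‖z‖ ^ (2 * β)) * I := lintegral_const_mul' _ _ ENNReal.ofReal_ne_top
    _ = ENNReal.ofReal (M * ‖z‖ ^ (2 * β) * I.toReal) := by
        rw [ENNReal.ofReal_mul (by positivity) (q := I.toReal), ENNReal.ofReal_toReal hμ.ne]
    _ ≤ _ := by
        apply ENNReal.ofReal_le_ofReal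
        have h1 : 0 ≤ M * I.toReal := by positivity
        have h2 := norm_nonneg z
        nlinarith [mul_nonneg h1 h2]
end
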